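/- arXiv:1703.00766 — 2 statements merged into one kernel-verified Lean document; each statement's English description precedes it below -/
import Mathlib

section
/- Let R be a Noetherian ring, 𝔞, 𝔟 ideals with 𝔟 ⊆ Rad(𝔞) and dim R/𝔞 = 1, and M a 𝔟-weakly cofinite R-module. Then H^i_𝔞(M) is 𝔞-weakly cofinite for all i ≥ 0. -/
open CategoryTheory

universe u

variable (R : Type u) [CommRing R]

/-- The `i`-th Ext module `Ext^i_R(N, M)` of `R`-modules. -/
noncomputable def extModule (i : ℕ) (N M : ModuleCat.{u} R) : ModuleCat.{u} R :=
  ((Ext R (ModuleCat.{u} R) i).obj (Opposite.op N)).obj M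

/-- A module is weakly Laskerian if every quotient has finitely many associated primes. -/
def IsWeaklyLaskerian (M : Type u) [AddCommGroup M] [Module R M] : Prop :=
  ∀ N : Submodule R M, (associatedPrimes R (M ⧸ N)).Finite

/-- `M` is `𝔞`-cofinite: `Supp M ⊆ V(𝔞)` and all `Ext^i_R(R/𝔞, M)` are finitely generated. -/
def IsCofinite (𝔞 : Ideal R) (M : ModuleCat.{u} R) : Prop :=
  Module.support R M ⊆ PrimeSpectrum.zeroLocus (𝔞 : Set R) ∧
    ∀ i : ℕ, Module.Finite R (extModule R i (ModuleCat.of R (R ⧸ 𝔞)) M)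

/-- `M` is `𝔞`-weakly cofinite: `Supp M ⊆ V(𝔞)` and all `Ext^i_R(R/𝔞, M)` are weakly
Laskerian. -/
def IsWeaklyCofinite (𝔞 : Ideal R) (M : ModuleCat.{u} R) : Prop :=
  Module.support R M ⊆ PrimeSpectrum.zeroLocus (𝔞 : Set R) ∧
    ∀ i : ℕ, IsWeaklyLaskerian R (extModule R i (ModuleCat.of R (R ⧸ 𝔞)) M)

/-- The Krull dimension of the support of a module. -/
noncomputable def suppDim (M : Type u) [AddCommGroup M] [Module R M] : WithBot ℕ∞ :=
  Order.krullDim (Module.support R M)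

/-- The cohomological dimension `cd(𝔞, M) = sup {i | H^i_𝔞(M) ≠ 0}`, as an element of `ℕ∞`. -/
noncomputable def cohomologicalDim (𝔞 : Ideal R) (M : ModuleCat.{u} R) : ℕ∞ :=
  ⨆ i ∈ {i : ℕ | Nontrivial ((localCohomology 𝔞 i).obj M)}, (i : ℕ∞)

/-- `p` is an attached prime of `M`: `p` is prime and is the annihilator of a quotient
of `M`. -/
def IsAttachedPrime (M : Type u) [AddCommGroup M] [Module R M] (p : Ideal R) : Prop :=
  p.IsPrime ∧ ∃ N : Submodule R M, p = Module.annihilator R (M ⧸ N)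

namespace S14

section WL

variable {R}
variable {A B C : Type u} [AddCommGroup A] [AddCommGroup B] [AddCommGroup C]
  [Module R A] [Module R B] [Module R C]

theorem wl_of_surjective (f : A →ₗ[R] B) (hf : Function.Surjective f)
    (h : IsWeaklyLaskerian R A) : IsWeaklyLaskerian R B := by
  intro N
  refine (h (N.comap f)).subset ?_
  have e : (A ⧸ N.comap f) ≃ₗ[R] (B ⧸ N) := by
    refine LinearEquiv.ofBijective (Submodule.mapQ (N.comap f) N f le_rfl) ⟨?_, ?_⟩
    · rw [← LinearMap.ker_eq_bot, Submodule.mapQ, Submodule.ker_liftQ_eq_bot]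
      intro x hx
      simpa using hx
    · intro y
      obtain ⟨b, rfl⟩ := Submodule.mkQ_surjective _ y
      obtain ⟨a, rfl⟩ := hf b
      exact ⟨Submodule.Quotient.mk a, rfl⟩
  rw [LinearEquiv.AssociatedPrimes.eq e]

theorem wl_of_injective (f : A →ₗ[R] B) (hf : Function.Injective f)
    (h : IsWeaklyLaskerian R B) : IsWeaklyLaskerian R A := by
  intro N
  refine (h (N.map f)).subset ?_
  apply associatedPrimes.subset_of_injective
    (f := Submodule.mapQ N (N.map f) f (Submodule.le_comap_map f N))
  rw [← LinearMap.ker_eq_bot, Submodule.mapQ, Submodule.ker_liftQ_eq_bot]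
  intro x hx
  have : f x ∈ N.map f := by simpa using hx
  obtain ⟨y, hy, hxy⟩ := this
  rwa [← hf hxy]

theorem wl_of_equiv (e : A ≃ₗ[R] B) (h : IsWeaklyLaskerian R A) : IsWeaklyLaskerian R B :=
  wl_of_surjective e.toLinearMap e.surjective h

theorem wl_of_shortExact (N : Submodule R B) (h1 : IsWeaklyLaskerian R N)
    (h2 : IsWeaklyLaskerian R (B ⧸ N)) : IsWeaklyLaskerian R B := by
  intro K
  have h3 := h1 (K.comap N.subtype)
  have h4 := h2 (K.map N.mkQ)
  refine (h3.union h4).subset ?_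
  refine associatedPrimes.subset_union_of_exact
    (f := Submodule.mapQ (K.comap N.subtype) K N.subtype le_rfl)
    (g := Submodule.mapQ K (K.map N.mkQ) N.mkQ (Submodule.le_comap_map _ _)) ?_ ?_
  · rw [← LinearMap.ker_eq_bot, Submodule.mapQ, Submodule.ker_liftQ_eq_bot]
    intro x hx
    simpa using hx
  · intro y
    obtain ⟨b, rfl⟩ := Submodule.mkQ_surjective _ y
    constructor
    · intro hb
      have hb' : N.mkQ b ∈ K.map N.mkQ := by simpa using hb
      obtain ⟨k, hk, hkb⟩ := hb'
      have : b - k ∈ N := by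
        rw [← Submodule.Quotient.mk_eq_zero, Submodule.Quotient.mk_sub, sub_eq_zero]
        exact hkb.symm
      refine ⟨Submodule.Quotient.mk ⟨b - k, this⟩, ?_⟩
      change Submodule.Quotient.mk (b - k) = Submodule.Quotient.mk b
      rw [Submodule.Quotient.eq]
      simpa using hk
    · rintro ⟨x, hx⟩
      obtain ⟨a, rfl⟩ := Submodule.mkQ_surjective _ x
      rw [← hx]
      change Submodule.Quotient.mk (Submodule.Quotient.mk (a : B)) = _
      rw [(Submodule.Quotient.mk_eq_zero N).2 a.2]
      simp

theorem wl_of_exact (f : A →ₗ[R] B) (g : B →ₗ[R] C) (h : ∀ y, g y = 0 → ∃ x, f x = y)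
    (h1 : IsWeaklyLaskerian R A) (h2 : IsWeaklyLaskerian R C) : IsWeaklyLaskerian R B := by
  apply wl_of_shortExact (LinearMap.ker g)
  · have : LinearMap.ker g ≤ LinearMap.range f := fun y hy => h y hy
    exact wl_of_injective (Submodule.inclusion this) (Submodule.inclusion_injective _)
      (wl_of_surjective f.rangeRestrict f.surjective_rangeRestrict h1)
  · refine wl_of_injective ((LinearMap.ker g).liftQ g le_rfl) ?_ h2
    rw [← LinearMap.ker_eq_bot, Submodule.ker_liftQ_eq_bot]
    exact le_rfl

theorem wl_of_subsingleton [Subsingleton A] : IsWeaklyLaskerian R A := by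
  intro N
  have : Subsingleton (A ⧸ N) := (Submodule.mkQ_surjective N).subsingleton
  rw [associatedPrimes.eq_empty_of_subsingleton]
  exact Set.finite_empty

theorem wl_of_finite [IsNoetherianRing R] [Module.Finite R A] : IsWeaklyLaskerian R A :=
  fun _ => associatedPrimes.finite R _

/-- A prime containing an annihilator of an element contains an associated prime. -/
theorem exists_assoc_le [IsNoetherianRing R] (x : A) (q : Ideal R) [q.IsPrime]
    (hq : ∀ r : R, r • x = 0 → r ∈ q) : ∃ q₀ ∈ associatedPrimes R A, q₀ ≤ q := by
  have h1 : Module.annihilator R (Submodule.span R {x}) ≤ q := by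
    intro r hr
    apply hq
    have := Module.mem_annihilator.1 hr ⟨x, Submodule.mem_span_singleton_self x⟩
    simpa using congrArg Subtype.val this
  obtain ⟨q₀, h2, h3⟩ := Ideal.exists_minimalPrimes_le h1
  refine ⟨q₀, ?_, h3⟩
  exact associatedPrimes.subset_of_injective
    (f := (Submodule.span R {x}).subtype) (Submodule.subtype_injective _)
    (Module.associatedPrimes.minimalPrimes_annihilator_subset_associatedPrimes R _ h2)

theorem wl_of_finite_supp [IsNoetherianRing R] (hA : (associatedPrimes R A).Finite)
    (h : ∀ q₀ ∈ associatedPrimes R A, {q : Ideal R | q.IsPrime ∧ q₀ ≤ q}.Finite) :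
    IsWeaklyLaskerian R A := by
  intro N
  refine (hA.biUnion h).subset ?_
  intro q hq
  have hq' : IsAssociatedPrime q (A ⧸ N) := hq
  rw [isAssociatedPrime_iff] at hq'
  obtain ⟨hp, y, hy⟩ := hq'
  obtain ⟨x, rfl⟩ := Submodule.mkQ_surjective _ y
  obtain ⟨q₀, h0, h1⟩ := exists_assoc_le x q (fun r hr => by
    rw [hy, Submodule.mem_colon_singleton, ← map_smul, hr]; simp)
  simp only [Set.mem_iUnion]
  exact ⟨q₀, h0, hp, h1⟩

end WL

section ExtLES

variable {R}
variable {A B C : Type u} [AddCommGroup A] [AddCommGroup B] [AddCommGroup C]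
  [Module R A] [Module R B] [Module R C]
variable (N M : Type u) [AddCommGroup N] [Module R N] [AddCommGroup M] [Module R M]

variable (R) in
/-- Ext of unbundled modules (derived category version). -/
abbrev E (N M : Type u) [AddCommGroup N] [Module R N] [AddCommGroup M] [Module R M] (i : ℕ) :
    Type u := Abelian.Ext (ModuleCat.of R N) (ModuleCat.of R M) i

/-- The short complex attached to an exact pair. -/
abbrev sc (f : A →ₗ[R] B) (g : B →ₗ[R] C) (h : Function.Exact f g) :
    ShortComplex (ModuleCat.{u} R) :=
  ShortComplex.mk (ModuleCat.ofHom f) (ModuleCat.ofHom g) (by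
    rw [← ModuleCat.ofHom_comp, h.linearMap_comp_eq_zero]; rfl)

theorem sc_shortExact (f : A →ₗ[R] B) (g : B →ₗ[R] C) (h : Function.Exact f g)
    (hf : Function.Injective f) (hg : Function.Surjective g) : (sc f g h).ShortExact where
  exact := (ShortComplex.ShortExact.moduleCat_exact_iff_function_exact _).2 h
  mono_f := (ModuleCat.mono_iff_injective _).2 hf
  epi_g := (ModuleCat.epi_iff_surjective _).2 hg


theorem covM (f : A →ₗ[R] B) (g : B →ₗ[R] C) (h : Function.Exact f g)
    (hf : Function.Injective f) (hg : Function.Surjective g) {i : ℕ}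
    (h1 : IsWeaklyLaskerian R (E R N A i)) (h2 : IsWeaklyLaskerian R (E R N C i)) :
    IsWeaklyLaskerian R (E R N B i) :=
  wl_of_exact ((Abelian.Ext.mk₀ (sc f g h).f).postcompOfLinear R _ (add_zero i))
    ((Abelian.Ext.mk₀ (sc f g h).g).postcompOfLinear R _ (add_zero i))
    (fun y hy => Abelian.Ext.covariant_sequence_exact₂ _ (sc_shortExact f g h hf hg) y hy) h1 h2

theorem covR (f : A →ₗ[R] B) (g : B →ₗ[R] C) (h : Function.Exact f g)
    (hf : Function.Injective f) (hg : Function.Surjective g) {i : ℕ}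
    (h1 : IsWeaklyLaskerian R (E R N B i))
    (h2 : IsWeaklyLaskerian R (E R N A (i + 1))) :
    IsWeaklyLaskerian R (E R N C i) :=
  wl_of_exact ((Abelian.Ext.mk₀ (sc f g h).g).postcompOfLinear R _ (add_zero i))
    ((sc_shortExact f g h hf hg).extClass.postcompOfLinear R _ rfl)
    (fun y hy => Abelian.Ext.covariant_sequence_exact₃ _ (sc_shortExact f g h hf hg) y rfl hy) h1 h2

theorem covL (f : A →ₗ[R] B) (g : B →ₗ[R] C) (h : Function.Exact f g)
    (hf : Function.Injective f) (hg : Function.Surjective g) {i : ℕ}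
    (h1 : IsWeaklyLaskerian R (E R N C i))
    (h2 : IsWeaklyLaskerian R (E R N B (i + 1))) :
    IsWeaklyLaskerian R (E R N A (i + 1)) :=
  wl_of_exact ((sc_shortExact f g h hf hg).extClass.postcompOfLinear R _ rfl)
    ((Abelian.Ext.mk₀ (sc f g h).f).postcompOfLinear R _ (add_zero (i + 1)))
    (fun y hy => Abelian.Ext.covariant_sequence_exact₁ _ (sc_shortExact f g h hf hg) y hy rfl) h1 h2

theorem conM (f : A →ₗ[R] B) (g : B →ₗ[R] C) (h : Function.Exact f g)
    (hf : Function.Injective f) (hg : Function.Surjective g) {i : ℕ}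
    (h1 : IsWeaklyLaskerian R (E R A M i)) (h2 : IsWeaklyLaskerian R (E R C M i)) :
    IsWeaklyLaskerian R (E R B M i) :=
  wl_of_exact ((Abelian.Ext.mk₀ (sc f g h).g).precompOfLinear R _ (zero_add i))
    ((Abelian.Ext.mk₀ (sc f g h).f).precompOfLinear R _ (zero_add i))
    (fun y hy => Abelian.Ext.contravariant_sequence_exact₂ (sc_shortExact f g h hf hg) _ y hy) h2 h1

theorem conR (f : A →ₗ[R] B) (g : B →ₗ[R] C) (h : Function.Exact f g)
    (hf : Function.Injective f) (hg : Function.Surjective g) {i : ℕ}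
    (h1 : IsWeaklyLaskerian R (E R A M i))
    (h2 : IsWeaklyLaskerian R (E R B M (i + 1))) :
    IsWeaklyLaskerian R (E R C M (i + 1)) :=
  wl_of_exact ((sc_shortExact f g h hf hg).extClass.precompOfLinear R _ (add_comm 1 i))
    ((Abelian.Ext.mk₀ (sc f g h).g).precompOfLinear R _ (zero_add (i + 1)))
    (fun y hy => Abelian.Ext.contravariant_sequence_exact₃ (sc_shortExact f g h hf hg) _ y hy
      (add_comm 1 i)) h1 h2

theorem covL0 (f : A →ₗ[R] B) (hf : Function.Injective f) (h2 : IsWeaklyLaskerian R (E R N B 0)) :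
    IsWeaklyLaskerian R (E R N A 0) := by
  have : Mono (ModuleCat.ofHom f) := (ModuleCat.mono_iff_injective _).2 hf
  exact wl_of_injective ((Abelian.Ext.mk₀ (ModuleCat.ofHom f)).postcompOfLinear R _ (add_zero 0))
    (Abelian.Ext.postcomp_mk₀_injective_of_mono _ (ModuleCat.ofHom f)) h2

theorem conR0 (g : B →ₗ[R] C) (hg : Function.Surjective g) (h2 : IsWeaklyLaskerian R (E R B M 0)) :
    IsWeaklyLaskerian R (E R C M 0) := by
  have : Epi (ModuleCat.ofHom g) := (ModuleCat.epi_iff_surjective _).2 hg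
  exact wl_of_injective ((Abelian.Ext.mk₀ (ModuleCat.ofHom g)).precompOfLinear R _ (zero_add 0))
    (Abelian.Ext.precomp_mk₀_injective_of_epi _ (ModuleCat.ofHom g)) h2

end ExtLES

section ExtFin

variable {R}
variable {M : Type u} [AddCommGroup M] [Module R M]

/-- Linear equivalence on Ext induced by an equivalence on the first variable. -/
theorem wl_congr_left {N N' : Type u} [AddCommGroup N] [Module R N] [AddCommGroup N'] [Module R N']
    (e : N ≃ₗ[R] N') {i : ℕ} (h : IsWeaklyLaskerian R (E R N M i)) :
    IsWeaklyLaskerian R (E R N' M i) := by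
  refine wl_of_injective
    ((Abelian.Ext.mk₀ (ModuleCat.ofHom e.toLinearMap)).precompOfLinear R _ (zero_add i)) ?_ h
  refine Function.LeftInverse.injective
    (g := ((Abelian.Ext.mk₀ (ModuleCat.ofHom e.symm.toLinearMap)).precompOfLinear R _ (zero_add i)))
    ?_
  intro x
  have : ModuleCat.ofHom e.symm.toLinearMap ≫ ModuleCat.ofHom e.toLinearMap = 𝟙 _ := by
    rw [← ModuleCat.ofHom_comp]; simp
  simp [this]

theorem wl_congr_right {N N' : Type u} [AddCommGroup N] [Module R N] [AddCommGroup N'] [Module R N']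
    (e : N ≃ₗ[R] N') {i : ℕ} (h : IsWeaklyLaskerian R (E R M N i)) :
    IsWeaklyLaskerian R (E R M N' i) := by
  refine wl_of_injective
    ((Abelian.Ext.mk₀ (ModuleCat.ofHom e.symm.toLinearMap)).postcompOfLinear R _ (add_zero i)) ?_ h
  refine Function.LeftInverse.injective
    (g := ((Abelian.Ext.mk₀ (ModuleCat.ofHom e.toLinearMap)).postcompOfLinear R _ (add_zero i)))
    ?_
  intro x
  have : ModuleCat.ofHom e.symm.toLinearMap ≫ ModuleCat.ofHom e.toLinearMap = 𝟙 _ := by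
    rw [← ModuleCat.ofHom_comp]; simp
  simp [this]

theorem ext_wl_of_support [IsNoetherianRing R] (b : Ideal R)
    (hM : ∀ i, IsWeaklyLaskerian R (E R (R ⧸ b) M i)) (i : ℕ) :
    ∀ (N : Type u) [AddCommGroup N] [Module R N] [Module.Finite R N],
      Module.support R N ⊆ PrimeSpectrum.zeroLocus (b : Set R) →
      IsWeaklyLaskerian R (E R N M i) := by
  induction i with
  | zero =>
    intro N _ _ hfin
    induction hfin using IsNoetherianRing.induction_on_isQuotientEquivQuotientPrime R with
    | subsingleton N =>
      intro _
      have : Subsingleton (E R N M 0) :=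
        ⟨fun x y => by
          rw [(Abelian.Ext.linearEquiv₀ (R := R)).injective.eq_iff.symm]
          ext n
          rw [Subsingleton.elim n 0]; simp⟩
      exact wl_of_subsingleton
    | quotient N p e =>
      intro hN
      have hp : b ≤ p.1 := by
        have : p ∈ Module.support R N := by
          rw [e.support_eq, Module.support_eq_zeroLocus, Ideal.annihilator_quotient]; exact (PrimeSpectrum.mem_zeroLocus _ _).2 le_rfl
        exact hN this
      exact wl_congr_left e.symm (conR0 M (Submodule.factor hp) (Submodule.factor_surjective hp) (hM 0))
    | exact N₁ N₂ N₃ f g hf hg hfg ih1 ih3 =>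
      intro hN
      rw [Module.support_of_exact hfg hf hg] at hN
      exact conM M f g hfg hf hg (ih1 (Set.subset_union_left.trans hN))
        (ih3 (Set.subset_union_right.trans hN))
  | succ i ih =>
    intro N _ _ hfin
    induction hfin using IsNoetherianRing.induction_on_isQuotientEquivQuotientPrime R with
    | subsingleton N =>
      intro _
      have : Projective (ModuleCat.of R N) :=
        (IsProjective.iff_projective (P := N)).1 inferInstance
      have : Subsingleton (E R N M (i + 1)) :=
        ⟨fun x y => by rw [Abelian.Ext.eq_zero_of_projective x, Abelian.Ext.eq_zero_of_projective y]⟩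
      exact wl_of_subsingleton
    | quotient N p e =>
      intro hN
      have hp : b ≤ p.1 := by
        have : p ∈ Module.support R N := by
          rw [e.support_eq, Module.support_eq_zeroLocus, Ideal.annihilator_quotient]; exact (PrimeSpectrum.mem_zeroLocus _ _).2 le_rfl
        exact hN this
      refine wl_congr_left e.symm (conR M (LinearMap.ker (Submodule.factor hp)).subtype
        (Submodule.factor hp) (LinearMap.exact_subtype_ker_map _) (Submodule.subtype_injective _)
        (Submodule.factor_surjective hp) (ih _ ?_) (hM (i + 1)))
      refine (Module.support_subset_of_injective (Submodule.subtype _)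
        (Submodule.subtype_injective _)).trans ?_
      rw [Module.support_eq_zeroLocus, Ideal.annihilator_quotient]
    | exact N₁ N₂ N₃ f g hf hg hfg ih1 ih3 =>
      intro hN
      rw [Module.support_of_exact hfg hf hg] at hN
      exact conM M f g hfg hf hg (ih1 (Set.subset_union_left.trans hN))
        (ih3 (Set.subset_union_right.trans hN))

theorem ext_wl_of_wl [IsNoetherianRing R] (hM : IsWeaklyLaskerian R M) (i : ℕ)
    (N : Type u) [AddCommGroup N] [Module R N] [Module.Finite R N] :
    IsWeaklyLaskerian R (E R N M i) := by
  refine ext_wl_of_support (⊥ : Ideal R) (fun j => ?_) i N (by simp)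
  refine wl_congr_left (Submodule.quotEquivOfEqBot (⊥ : Ideal R) rfl).symm ?_
  cases j with
  | zero =>
    exact wl_of_equiv ((Abelian.Ext.linearEquiv₀ (R := R)).trans
      ((ModuleCat.homLinearEquiv (S := R)).trans (LinearMap.ringLmapEquivSelf R R M))).symm hM
  | succ j =>
    have : Projective (ModuleCat.of R R) :=
      (IsProjective.iff_projective (P := R)).1 inferInstance
    have : Subsingleton (E R R M (j + 1)) :=
      ⟨fun x y => by rw [Abelian.Ext.eq_zero_of_projective x, Abelian.Ext.eq_zero_of_projective y]⟩
    exact wl_of_subsingleton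

end ExtFin

end S14

namespace S14

section Bridge

open Opposite

variable {R}

theorem extMk_zero_deg {X Y : ModuleCat.{u} R} (P : ProjectiveResolution X)
    (f : P.complex.X 0 ⟶ Y) (hf : P.complex.d 1 0 ≫ f = 0)
    (h : P.extMk f 1 rfl hf = 0) : f = 0 := by
  rw [← P.extEquivCohomologyClass.apply_eq_iff_eq,
    ProjectiveResolution.extEquivCohomologyClass_extMk,
    ProjectiveResolution.extEquivCohomologyClass_zero,
    CochainComplex.HomComplex.CohomologyClass.mk_eq_zero_iff,
    CochainComplex.HomComplex.Cocycle.toSingleMk_mem_coboundaries_iff _ _ _ _ _ 1 (by simp)] at h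
  obtain ⟨g, hg⟩ := h
  have hz : Limits.IsZero (P.cochainComplex.X 1) :=
    P.cochainComplex.isZero_of_isStrictlyLE 0 1 (by lia)
  rw [hz.eq_of_src g 0, Limits.comp_zero] at hg
  rw [← cancel_epi (P.cochainComplexXIso (-(0 : ℕ)) 0 rfl).hom, ← hg, Limits.comp_zero]

variable {X X' : ModuleCat.{u} R} (P : ProjectiveResolution X) (P' : ProjectiveResolution X')
  (Y : ModuleCat.{u} R) (n : ℕ)

/-- cocycles to Ext -/
noncomputable def cocMap : LinearMap.ker (Linear.leftComp R Y (P.complex.d (n + 1) n)) →ₗ[R]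
    Abelian.Ext X Y n where
  toFun f := P.extMk f.1 (n + 1) rfl f.2
  map_add' f g := (P.add_extMk f.1 g.1 (n + 1) rfl f.2 g.2).symm
  map_smul' r f := by
    have h := P.extMk_comp_mk₀ f.1 (n + 1) rfl f.2 (r • 𝟙 Y)
    rw [RingHom.id_apply, Abelian.Ext.smul_eq_comp_mk₀]
    refine Eq.trans ?_ h.symm
    have h2 : (r • f).1 = f.1 ≫ (r • 𝟙 Y) := by simp
    congr 1

theorem cocMap_surjective : Function.Surjective (cocMap P Y n) := by
  intro α
  obtain ⟨f, hf, h⟩ := P.extMk_surjective α (n + 1) rfl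
  exact ⟨⟨f, hf⟩, h⟩

/-- Short complex in the opposite category computing the old Ext. -/
noncomputable abbrev scOp : ShortComplex (ModuleCat.{u} R)ᵒᵖ :=
  (((((linearYoneda R (ModuleCat.{u} R)).obj Y).rightOp).mapHomologicalComplex
    (ComplexShape.down ℕ)).obj P.complex).sc n

theorem mem_ker_iff (f : (scOp P Y n).unop.X₂) :
    f ∈ LinearMap.ker (scOp P Y n).unop.g.hom ↔
      f ∈ LinearMap.ker (Linear.leftComp R Y (P.complex.d (n + 1) n)) := by
  have : (ComplexShape.down ℕ).prev n = n + 1 := by simp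
  change P.complex.d ((ComplexShape.down ℕ).prev n) n ≫ f = 0 ↔ P.complex.d (n + 1) n ≫ f = 0
  rw [this]

theorem mem_range_iff (f : LinearMap.ker (scOp P Y n).unop.g.hom) :
    f ∈ LinearMap.range (scOp P Y n).unop.moduleCatToCycles ↔
      cocMap P Y n ⟨f.1, (mem_ker_iff P Y n _).1 f.2⟩ = 0 := by
  have h1 : f ∈ LinearMap.range (scOp P Y n).unop.moduleCatToCycles ↔
      ∃ g : P.complex.X ((ComplexShape.down ℕ).next n) ⟶ Y,
        P.complex.d n ((ComplexShape.down ℕ).next n) ≫ g = f.1 := by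
    constructor
    · rintro ⟨g, hg⟩
      exact ⟨g, congrArg Subtype.val hg⟩
    · rintro ⟨g, hg⟩
      exact ⟨g, Subtype.ext hg⟩
  rw [h1]
  cases n with
  | zero =>
    rw [ChainComplex.next_nat_zero, P.complex.shape 0 0 (by simp)]
    constructor
    · rintro ⟨g, hg⟩
      have : f.1 = 0 := by rw [← hg]; exact Limits.zero_comp
      have h2 : (⟨f.1, (mem_ker_iff P Y 0 _).1 f.2⟩ :
        LinearMap.ker (Linear.leftComp R Y (P.complex.d (0 + 1) 0))) = 0 := Subtype.ext this
      rw [h2, map_zero]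
    · intro h
      have := extMk_zero_deg P _ ((mem_ker_iff P Y 0 _).1 f.2) h
      exact ⟨0, Limits.zero_comp.trans this.symm⟩
  | succ n =>
    rw [ChainComplex.next_nat_succ]
    exact (P.extMk_eq_zero_iff f.1 (n + 1 + 1) rfl ((mem_ker_iff P Y _ _).1 f.2) n rfl).symm

/-- concrete homology to Ext -/
noncomputable def concMap : (scOp P Y n).unop.moduleCatLeftHomologyData.H →ₗ[R] Abelian.Ext X Y n :=
  (LinearMap.range (scOp P Y n).unop.moduleCatToCycles).liftQ
    ((cocMap P Y n).comp (Submodule.inclusion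
      (p := LinearMap.ker (scOp P Y n).unop.g.hom) (fun f hf => (mem_ker_iff P Y n f).1 hf)))
    (fun f hf => (mem_range_iff P Y n f).1 hf)

theorem concMap_bijective : Function.Bijective (concMap P Y n) := by
  constructor
  · rw [← LinearMap.ker_eq_bot]
    refine Submodule.ker_liftQ_eq_bot _ _ _ ?_
    intro f hf
    exact (mem_range_iff P Y n f).2 hf
  · intro α
    obtain ⟨f, hf⟩ := cocMap_surjective P Y n α
    exact ⟨Submodule.Quotient.mk ⟨f.1, (mem_ker_iff P Y n _).2 f.2⟩, hf⟩

/-- bridge -/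
noncomputable def oldIso : extModule R n X Y ≅ (scOp P Y n).unop.moduleCatLeftHomologyData.H :=
  ((P.isoLeftDerivedObj ((linearYoneda R (ModuleCat.{u} R)).obj Y).rightOp n) ≪≫
    ((scOp P Y n).unop.moduleCatLeftHomologyData.op.homologyIso)).unop.symm

/-- bridge -/
noncomputable def bridgeP : extModule R n X Y ≃ₗ[R] Abelian.Ext X Y n :=
  (oldIso P Y n).toLinearEquiv.trans (LinearEquiv.ofBijective _ (concMap_bijective P Y n))

/-- map of short complexes -/
noncomputable abbrev scMap {P : ProjectiveResolution X} {P' : ProjectiveResolution X'}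
  (φ : P.complex ⟶ P'.complex) :
    scOp P Y n ⟶ scOp P' Y n :=
  (HomologicalComplex.shortComplexFunctor _ _ n).map
    (((((linearYoneda R (ModuleCat.{u} R)).obj Y).rightOp).mapHomologicalComplex
    (ComplexShape.down ℕ)).map φ)

theorem oldIso_nat (g : X ⟶ X') (φ : ProjectiveResolution.Hom P P' g)
    (z : (scOp P' Y n).unop.moduleCatLeftHomologyData.H) :
    ((((Ext R (ModuleCat.{u} R) n).map g.op).app Y) ((oldIso P' Y n).inv z)) =
     (oldIso P Y n).inv ((ShortComplex.leftHomologyMap' (ShortComplex.unopMap (scMap Y n φ.hom))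
        (scOp P' Y n).unop.moduleCatLeftHomologyData
        (scOp P Y n).unop.moduleCatLeftHomologyData) z) := by
  have h1 := ProjectiveResolution.isoLeftDerivedObj_hom_naturality g P P' φ.hom
    (by simpa using φ.hom_f_zero_comp_π_f_zero)
    ((linearYoneda R (ModuleCat.{u} R)).obj Y).rightOp n
  have h2 := (ShortComplex.leftHomologyMapData (ShortComplex.unopMap (scMap Y n φ.hom))
        (scOp P' Y n).unop.moduleCatLeftHomologyData
        (scOp P Y n).unop.moduleCatLeftHomologyData).op.homologyMap_comm
  have h3 : (((linearYoneda R (ModuleCat.{u} R)).obj Y).rightOp.leftDerived n).map g ≫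
      ((P'.isoLeftDerivedObj ((linearYoneda R (ModuleCat.{u} R)).obj Y).rightOp n) ≪≫
    ((scOp P' Y n).unop.moduleCatLeftHomologyData.op.homologyIso)).hom =
     ((P.isoLeftDerivedObj ((linearYoneda R (ModuleCat.{u} R)).obj Y).rightOp n) ≪≫
    ((scOp P Y n).unop.moduleCatLeftHomologyData.op.homologyIso)).hom ≫
      (ShortComplex.leftHomologyMap' (ShortComplex.unopMap (scMap Y n φ.hom))
        (scOp P' Y n).unop.moduleCatLeftHomologyData
        (scOp P Y n).unop.moduleCatLeftHomologyData).op := by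
    refine (Category.assoc _ _ _).symm.trans ?_
    rw [h1]
    refine (Category.assoc _ _ _).trans ?_
    refine Eq.trans ?_ (Category.assoc _ _ _).symm
    exact congrArg _ h2
  have h4 := congrArg Quiver.Hom.unop h3
  exact congrArg (fun f => (ModuleCat.Hom.hom f) z) h4

theorem conc_nat (g : X ⟶ X') (φ : ProjectiveResolution.Hom P P' g)
    (z : (scOp P' Y n).unop.moduleCatLeftHomologyData.H) :
    concMap P Y n ((ShortComplex.leftHomologyMap' (ShortComplex.unopMap (scMap Y n φ.hom))
        (scOp P' Y n).unop.moduleCatLeftHomologyData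
        (scOp P Y n).unop.moduleCatLeftHomologyData) z) =
      (Abelian.Ext.mk₀ g).comp (concMap P' Y n z) (zero_add n) := by
  obtain ⟨f, rfl⟩ := Submodule.mkQ_surjective _ z
  have h1 : (ShortComplex.leftHomologyMap' (ShortComplex.unopMap (scMap Y n φ.hom))
        (scOp P' Y n).unop.moduleCatLeftHomologyData
        (scOp P Y n).unop.moduleCatLeftHomologyData)
        ((scOp P' Y n).unop.moduleCatLeftHomologyData.π f) =
        (scOp P Y n).unop.moduleCatLeftHomologyData.π
        ((ShortComplex.cyclesMap' (ShortComplex.unopMap (scMap Y n φ.hom))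
        (scOp P' Y n).unop.moduleCatLeftHomologyData
        (scOp P Y n).unop.moduleCatLeftHomologyData) f) :=
    congrArg (fun f' => (ModuleCat.Hom.hom f') f)
      (ShortComplex.leftHomologyπ_naturality' (ShortComplex.unopMap (scMap Y n φ.hom))
        (scOp P' Y n).unop.moduleCatLeftHomologyData
        (scOp P Y n).unop.moduleCatLeftHomologyData)
  have h2 : (scOp P Y n).unop.moduleCatLeftHomologyData.i
        ((ShortComplex.cyclesMap' (ShortComplex.unopMap (scMap Y n φ.hom))
        (scOp P' Y n).unop.moduleCatLeftHomologyData
        (scOp P Y n).unop.moduleCatLeftHomologyData) f) =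
        φ.hom.f n ≫ f.1 :=
    congrArg (fun f' => (ModuleCat.Hom.hom f') f)
      (ShortComplex.cyclesMap'_i (ShortComplex.unopMap (scMap Y n φ.hom))
        (scOp P' Y n).unop.moduleCatLeftHomologyData
        (scOp P Y n).unop.moduleCatLeftHomologyData)
  have h3 := ProjectiveResolution.mk₀_comp_extMk f.1 (n + 1) rfl
    ((mem_ker_iff P' Y n f.1).1 f.2) φ
  refine Eq.trans ?_ h3.symm
  refine (congrArg (concMap P Y n) h1).trans ?_
  have key : ∀ (a b : P.complex.X n ⟶ Y) (ha : P.complex.d (n + 1) n ≫ a = 0)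
      (hb : P.complex.d (n + 1) n ≫ b = 0), a = b →
      P.extMk a (n + 1) rfl ha = P.extMk b (n + 1) rfl hb := by
    rintro a _ _ _ rfl; rfl
  exact key _ _ ((mem_ker_iff P Y n _).1 (Subtype.property _)) _ h2

variable {P P'} in
theorem bridgeP_nat (g : X ⟶ X') (φ : ProjectiveResolution.Hom P P' g) (z : extModule R n X' Y) :
    bridgeP P Y n ((((Ext R (ModuleCat.{u} R) n).map g.op).app Y) z) =
      (Abelian.Ext.mk₀ g).comp (bridgeP P' Y n z) (zero_add n) := by
  obtain ⟨w, rfl⟩ := (oldIso P' Y n).symm.toLinearEquiv.surjective z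
  have h1 := oldIso_nat P P' Y n g φ w
  have h2 := conc_nat P P' Y n g φ w
  have h4 : ∀ v, (oldIso P Y n).hom ((oldIso P Y n).inv v) = v := fun v => by simp
  have h5 : ∀ v, (oldIso P' Y n).hom ((oldIso P' Y n).inv v) = v := fun v => by simp
  have e1 : ∀ v, bridgeP P Y n ((oldIso P Y n).inv v) = concMap P Y n v := fun v =>
    congrArg (concMap P Y n) (h4 v)
  have e2 : ∀ v, bridgeP P' Y n ((oldIso P' Y n).inv v) = concMap P' Y n v := fun v =>
    congrArg (concMap P' Y n) (h5 v)
  refine (congrArg (bridgeP P Y n) h1).trans ((e1 _).trans (h2.trans ?_))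
  exact congrArg (fun t => (Abelian.Ext.mk₀ g).comp t (zero_add n)) (e2 w).symm

variable (X) in
/-- The comparison between the two versions of Ext. -/
noncomputable def bridge : extModule R n X Y ≃ₗ[R] Abelian.Ext X Y n :=
  bridgeP (projectiveResolution X) Y n

theorem bridge_nat (g : X ⟶ X') (z : extModule R n X' Y) :
    bridge X Y n ((((Ext R (ModuleCat.{u} R) n).map g.op).app Y) z) =
      (Abelian.Ext.mk₀ g).comp (bridge X' Y n z) (zero_add n) :=
  bridgeP_nat Y n g
    { hom := ProjectiveResolution.lift g _ _
      hom_f_zero_comp_π_f_zero := by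
        rw [← HomologicalComplex.comp_f, ProjectiveResolution.lift_commutes]; rfl } z

end Bridge
end S14

namespace S14

section Art

variable {T : Type u} [CommRing T]

theorem art_single {A : Type u} [AddCommGroup A] [Module T A] (x : T)
    (hx : ∀ m : A, ∃ k : ℕ, x ^ k • m = 0)
    [IsArtinian T (Submodule.torsionBy T A x)] : IsArtinian T A := by
  rw [← monotone_stabilizes_iff_artinian]
  intro f
  let F : ℕ → Submodule T A := fun n => OrderDual.ofDual (f n)
  have hf : ∀ {i j : ℕ}, i ≤ j → F j ≤ F i := fun h => f.monotone h
  let g : ℕ → ℕ → Submodule T (Submodule.torsionBy T A x) := fun n k =>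
    ((F n).map (LinearMap.lsmul T A (x ^ k))).comap (Submodule.subtype _)
  have g_mem : ∀ n k (m : Submodule.torsionBy T A x), m ∈ g n k ↔ ∃ y ∈ F n, x ^ k • y = m := by
    intro n k m; rfl
  have g1 : ∀ {n n' k}, n ≤ n' → g n' k ≤ g n k := by
    intro n n' k h m hm
    rw [g_mem] at hm ⊢
    obtain ⟨y, hy, e⟩ := hm
    exact ⟨y, hf h hy, e⟩
  have g2 : ∀ {n k k'}, k ≤ k' → g n k' ≤ g n k := by
    intro n k k' h m hm
    rw [g_mem] at hm ⊢
    obtain ⟨y, hy, e⟩ := hm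
    refine ⟨x ^ (k' - k) • y, Submodule.smul_mem _ _ hy, ?_⟩
    rw [← mul_smul, ← pow_add, Nat.add_sub_cancel' h, e]
  obtain ⟨K, hK⟩ := IsArtinian.monotone_stabilizes (R := T)
    (⟨fun n => OrderDual.toDual (g n n), fun i j h => (g1 h).trans (g2 h)⟩ :
      ℕ →o (Submodule T (Submodule.torsionBy T A x))ᵒᵈ)
  have hst : ∀ k, ∃ N, ∀ n, N ≤ n → g N k = g n k := fun k =>
    IsArtinian.monotone_stabilizes (R := T)
      (⟨fun n => OrderDual.toDual (g n k), fun i j h => (g1 h)⟩ :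
      ℕ →o (Submodule T (Submodule.torsionBy T A x))ᵒᵈ)
  choose N hN using hst
  have hK' : ∀ n, K ≤ n → g K K = g n n := hK
  let N0 := (Finset.range K).sup N ⊔ K
  have key : ∀ n, N0 ≤ n → ∀ k, g N0 k ≤ g n k := by
    intro n hn k
    by_cases hk : k < K
    · have h1 : N k ≤ N0 := (Finset.le_sup (Finset.mem_range.2 hk)).trans le_sup_left
      rw [← hN k N0 h1, ← hN k n (h1.trans hn)]
    · push Not at hk
      have h1 : K ≤ N0 := le_sup_right
      calc g N0 k ≤ g K K := (g1 h1).trans (g2 hk)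
        _ = g (max n k) (max n k) := hK' _ (hk.trans (le_max_right _ _))
        _ ≤ g n k := (g1 (le_max_left _ _)).trans (g2 (le_max_right _ _))
  refine ⟨N0, fun n hn => ?_⟩
  have main : ∀ j : ℕ, ∀ m ∈ F N0, x ^ j • m = 0 → m ∈ F n := by
    intro j
    induction j with
    | zero => intro m _ h; simp at h; subst h; exact Submodule.zero_mem _
    | succ j ih =>
      intro m hm h
      have h1 : x ^ j • m ∈ Submodule.torsionBy T A x := by
        rw [Submodule.mem_torsionBy_iff, ← mul_smul, ← pow_succ', h]
      have h2 : (⟨x ^ j • m, h1⟩ : Submodule.torsionBy T A x) ∈ g n j :=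
        key n hn j ((g_mem _ _ _).2 ⟨m, hm, rfl⟩)
      obtain ⟨y, hy, e⟩ := (g_mem _ _ _).1 h2
      have h3 := ih (m - y) (Submodule.sub_mem _ hm (hf hn hy)) (by
        rw [smul_sub, e]; simp)
      have := Submodule.add_mem _ h3 hy
      simpa using this
  have hFF : F N0 = F n := by
    refine le_antisymm ?_ (hf hn)
    intro m hm
    obtain ⟨j, hj⟩ := hx m
    exact main j m hm hj
  exact hFF

theorem art_finset {A : Type u} [AddCommGroup A] [Module T A] (s : Finset T) :
    (∀ x ∈ s, ∀ m : A, ∃ k : ℕ, x ^ k • m = 0) →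
    IsArtinian T (Submodule.torsionBySet T A (s : Set T)) → IsArtinian T A := by
  classical
  induction s using Finset.induction_on with
  | empty =>
    intro _ h
    have : Submodule.torsionBySet T A ((∅ : Finset T) : Set T) = ⊤ := by
      rw [eq_top_iff]; intro x _; simp
    rw [this] at h
    exact (LinearEquiv.isArtinian_iff Submodule.topEquiv).1 h
  | insert x s hx ih =>
    intro h1 h2
    refine ih (fun y hy => h1 y (Finset.mem_insert_of_mem hy)) ?_
    have : IsArtinian T (Submodule.torsionBy T (Submodule.torsionBySet T A (s : Set T)) x) := by
      refine isArtinian_of_injective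
        (LinearMap.codRestrict (Submodule.torsionBySet T A ((insert x s : Finset T) : Set T))
          ((Submodule.subtype _).comp (Submodule.subtype
            (Submodule.torsionBy T (Submodule.torsionBySet T A (s : Set T)) x))) ?_) ?_
      · rintro ⟨⟨y, hy⟩, hy2⟩
        rw [Submodule.mem_torsionBySet_iff] at *
        rintro ⟨z, hz⟩
        simp only [Finset.coe_insert, Set.mem_insert_iff] at hz
        rcases hz with rfl | hz
        · rw [Submodule.mem_torsionBy_iff] at hy2
          exact congrArg Subtype.val hy2
        · exact hy ⟨z, hz⟩
      · intro y z hyz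
        have := congrArg Subtype.val hyz
        exact Subtype.ext (Subtype.ext this)
    refine art_single x ?_
    rintro ⟨m, hm⟩
    obtain ⟨k, hk⟩ := h1 x (Finset.mem_insert_self _ _) m
    exact ⟨k, Subtype.ext hk⟩

/-- A finitely generated or artinian module killed by a power of an ideal `a` with
zero-dimensional quotient. -/
theorem art_iff_noeth [IsNoetherianRing T] (a : Ideal T)
    (ha : ∀ p : Ideal T, p.IsPrime → a ≤ p → p.IsMaximal)
    {A : Type u} [AddCommGroup A] [Module T A] (k : ℕ)
    (hA : ∀ r ∈ a ^ k, ∀ m : A, r • m = 0) : IsNoetherian T A ↔ IsArtinian T A := by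
  have hdim : Ring.KrullDimLE 0 (T ⧸ a ^ k) := by
    rw [Ring.krullDimLE_zero_iff]
    intro q hq
    have h1 : (q.comap (Ideal.Quotient.mk (a ^ k))).IsPrime := hq.comap _
    have h2 : a ≤ q.comap (Ideal.Quotient.mk (a ^ k)) := by
      apply Ideal.IsPrime.le_of_pow_le (n := k)
      intro r hr
      rw [Ideal.mem_comap, Ideal.Quotient.eq_zero_iff_mem.2 hr]
      exact zero_mem _
    have h3 := ha _ h1 h2
    rcases Ideal.map_eq_top_or_isMaximal_of_surjective (Ideal.Quotient.mk (a ^ k))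
      Ideal.Quotient.mk_surjective h3 with h | h
    · rw [Ideal.map_comap_of_surjective _ Ideal.Quotient.mk_surjective] at h
      exact absurd h hq.ne_top
    · rwa [Ideal.map_comap_of_surjective _ Ideal.Quotient.mk_surjective] at h
  have : IsArtinianRing (T ⧸ a ^ k) :=
    isArtinianRing_iff_isNoetherianRing_krullDimLE_zero.2 ⟨inferInstance, hdim⟩
  have h : Module.IsTorsionBySet T A (a ^ k : Ideal T) := by
    rintro m ⟨r, hr⟩
    exact hA r hr m
  let _ := h.module
  rw [h.semilinearMap.isArtinian_iff_of_bijective Function.bijective_id,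
    h.semilinearMap.isNoetherian_iff_of_bijective Function.bijective_id]
  exact IsSemiprimaryRing.isNoetherian_iff_isArtinian

theorem exists_stable {A : Type u} [AddCommGroup A] [Module T A] [IsArtinian T A]
    (a : Ideal T) (C : Submodule T A) : ∃ k : ℕ, ∀ j, k ≤ j → a • (a ^ j • C) = a ^ j • C := by
  have hmono : ∀ {i j : ℕ}, i ≤ j → a ^ j • C ≤ a ^ i • C := fun h =>
    Submodule.smul_mono_left (Ideal.pow_le_pow_right h)
  obtain ⟨k, hk⟩ := IsArtinian.monotone_stabilizes (R := T)
    (⟨fun n => OrderDual.toDual (a ^ n • C), fun i j h => hmono h⟩ : ℕ →o (Submodule T A)ᵒᵈ)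
  have hk' : ∀ m, k ≤ m → a ^ k • C = a ^ m • C := hk
  refine ⟨k, fun j hj => ?_⟩
  rw [← Submodule.mul_smul, ← pow_succ', ← hk' _ (hj.trans (Nat.le_succ j)), hk' j hj]

theorem pow_stable {A : Type u} [AddCommGroup A] [Module T A]
    (a : Ideal T) (C : Submodule T A) (h : a • C = C) (k : ℕ) : a ^ k • C = C := by
  induction k with
  | zero => simp
  | succ k ih => rw [pow_succ, Submodule.mul_smul, h, ih]

theorem exists_primes [IsNoetherianRing T] {A : Type u} [AddCommGroup A] [Module T A]
    [IsArtinian T A] (a : Ideal T) (C : Submodule T A) : a • C = C →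
    ∃ Q : Finset (Ideal T), (∀ q ∈ Q, q.IsPrime ∧ ¬ a ≤ q) ∧
      ∀ x : T, (∀ q ∈ Q, x ∉ q) → ∀ m ∈ C, ∃ m' ∈ C, x • m' = m := by
  classical
  induction C using WellFoundedLT.induction with
  | ind C ih =>
  intro haC
  by_cases hsum : ∃ C1 C2 : Submodule T A, C1 < C ∧ C2 < C ∧ C1 ⊔ C2 = C
  · obtain ⟨C1, C2, h1, h2, h⟩ := hsum
    obtain ⟨k1, hk1⟩ := exists_stable a C1
    obtain ⟨k2, hk2⟩ := exists_stable a C2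
    let k := max k1 k2
    obtain ⟨Q1, hQ1, hx1⟩ := ih (a ^ k • C1) (lt_of_le_of_lt Submodule.smul_le_right h1)
      (hk1 k (le_max_left _ _))
    obtain ⟨Q2, hQ2, hx2⟩ := ih (a ^ k • C2) (lt_of_le_of_lt Submodule.smul_le_right h2)
      (hk2 k (le_max_right _ _))
    refine ⟨Q1 ∪ Q2, ?_, ?_⟩
    · intro q hq
      rcases Finset.mem_union.1 hq with hq | hq
      · exact hQ1 q hq
      · exact hQ2 q hq
    · intro x hx m hm
      have hC : C = a ^ k • C1 ⊔ a ^ k • C2 := by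
        rw [← Submodule.smul_sup, h, pow_stable a C haC]
      rw [hC] at hm
      obtain ⟨y, hy, z, hz, rfl⟩ := Submodule.mem_sup.1 hm
      obtain ⟨y', hy', ey⟩ := hx1 x (fun q hq => hx q (Finset.mem_union_left _ hq)) y hy
      obtain ⟨z', hz', ez⟩ := hx2 x (fun q hq => hx q (Finset.mem_union_right _ hq)) z hz
      refine ⟨y' + z', ?_, by rw [smul_add, ey, ez]⟩
      rw [hC]
      exact Submodule.add_mem_sup hy' hz'
  · by_cases hbot : C = ⊥
    · refine ⟨∅, by simp, ?_⟩
      intro x _ m hm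
      rw [hbot, Submodule.mem_bot] at hm
      exact ⟨0, Submodule.zero_mem _, by simp [hm]⟩
    · have hirr : ∀ C1 C2 : Submodule T A, C1 < C → C2 < C → C1 ⊔ C2 < C := by
        intro C1 C2 h1 h2
        refine lt_of_le_of_ne (sup_le h1.le h2.le) fun h => hsum ⟨C1, C2, h1, h2, h⟩
      let F : T → Submodule T A := fun x => C.map (LinearMap.lsmul T A x)
      have F_le : ∀ x, F x ≤ C := by
        rintro x _ ⟨y, hy, rfl⟩
        exact C.smul_mem x hy
      have F_mul : ∀ x y, F (x * y) = (F y).map (LinearMap.lsmul T A x) := by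
        intro x y
        change C.map _ = (C.map _).map _
        rw [← Submodule.map_comp]
        congr 1
        ext m
        simp [mul_smul, smul_comm x y]
      let q : Ideal T :=
        { carrier := {x | F x < C}
          zero_mem' := by
            refine lt_of_le_of_ne (F_le 0) fun h => hbot ?_
            rw [← h, eq_bot_iff]
            rintro _ ⟨y, hy, rfl⟩
            simp
          add_mem' := by
            intro x y hx hy
            refine lt_of_le_of_lt ?_ (hirr _ _ hx hy)
            rintro _ ⟨m, hm, rfl⟩
            rw [LinearMap.lsmul_apply, add_smul]
            exact Submodule.add_mem_sup ⟨m, hm, rfl⟩ ⟨m, hm, rfl⟩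
          smul_mem' := by
            intro r x hx
            refine lt_of_le_of_lt ?_ (show F x < C from hx)
            rw [smul_eq_mul, mul_comm]
            rw [F_mul]
            rintro _ ⟨m, hm, rfl⟩
            exact ⟨m, F_le _ hm, rfl⟩ }
      have hq_mem : ∀ x, x ∈ q ↔ F x < C := fun x => Iff.rfl
      have hnot : ∀ x, x ∉ q → F x = C := fun x hx => by
        by_contra h
        exact hx (lt_of_le_of_ne (F_le x) h)
      have hprime : q.IsPrime := by
        refine ⟨?_, ?_⟩
        · rw [Ideal.ne_top_iff_one, hq_mem]
          intro h
          refine h.not_ge fun m hm => ⟨m, hm, by simp⟩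
        · intro x y hxy
          by_contra! h
          rw [hq_mem, F_mul, hnot y h.2] at hxy
          exact hxy.ne (hnot x h.1)
      refine ⟨{q}, ?_, ?_⟩
      · intro q' hq'
        rw [Finset.mem_singleton] at hq'
        subst hq'
        refine ⟨hprime, fun hle => ?_⟩
        have key : ∀ I : Ideal T, I.FG → (I ≤ q → I • C < C) := by
          intro I hI
          refine Submodule.fg_induction (motive := fun I _ => I ≤ q → I • C < C) ?_ ?_ I hI
          · intro x hx
            refine lt_of_le_of_lt ?_ ((hq_mem x).1 (hx (Submodule.mem_span_singleton_self x)))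
            rw [Submodule.smul_le]
            intro r hr m hm
            obtain ⟨t, rfl⟩ := Submodule.mem_span_singleton.1 hr
            exact ⟨t • m, C.smul_mem t hm, by
              rw [LinearMap.lsmul_apply, ← mul_smul, smul_eq_mul, mul_comm]⟩
          · intro I J _ _ hI hJ hIJ
            rw [Submodule.sup_smul]
            exact hirr _ _ (hI (le_sup_left.trans hIJ)) (hJ (le_sup_right.trans hIJ))
        exact (key a (IsNoetherian.noetherian a) hle).ne haC
      · intro x hx m hm
        have := hnot x (hx q (Finset.mem_singleton_self q))
        rw [← this] at hm
        exact hm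

/-- Good elements: for `A` an `a`-torsion module with `0 :_A a` finitely generated. -/
theorem exists_good [IsNoetherianRing T] (a : Ideal T)
    (ha : ∀ p : Ideal T, p.IsPrime → a ≤ p → p.IsMaximal)
    {A : Type u} [AddCommGroup A] [Module T A]
    (htors : ∀ x ∈ a, ∀ m : A, ∃ k : ℕ, x ^ k • m = 0)
    (hfg : Module.Finite T (Submodule.torsionBySet T A (a : Set T))) :
    ∃ Q : Finset (Ideal T), (∀ q ∈ Q, q.IsPrime ∧ ¬ a ≤ q) ∧
      ∀ x : T, (∀ q ∈ Q, x ∉ q) →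
        Module.Finite T (A ⧸ (⊤ : Submodule T A).map (LinearMap.lsmul T A x)) := by
  have h1 : IsArtinian T (Submodule.torsionBySet T A (a : Set T)) := by
    rw [← art_iff_noeth a ha 1]
    · exact isNoetherian_of_isNoetherianRing_of_finite T _
    · rintro r hr ⟨m, hm⟩
      rw [pow_one] at hr
      exact Subtype.ext ((Submodule.mem_torsionBySet_iff _ _).1 hm ⟨r, hr⟩)
  have h2 : IsArtinian T A := by
    obtain ⟨s, hs⟩ := (IsNoetherian.noetherian a : a.FG)
    refine art_finset s (fun x hx => htors x (hs ▸ Submodule.subset_span hx)) ?_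
    have : Submodule.torsionBySet T A (s : Set T) = Submodule.torsionBySet T A (a : Set T) := by
      rw [← hs]
      exact Submodule.torsionBySet_eq_torsionBySet_span _
    rw [this]
    exact h1
  obtain ⟨k, hk⟩ := exists_stable a (⊤ : Submodule T A)
  obtain ⟨Q, hQ, hx⟩ := exists_primes a (a ^ k • (⊤ : Submodule T A)) (hk k le_rfl)
  refine ⟨Q, hQ, fun x hxQ => ?_⟩
  have h3 : IsArtinian T (A ⧸ (⊤ : Submodule T A).map (LinearMap.lsmul T A x)) := inferInstance
  have h4 := (art_iff_noeth a ha k ?_).2 h3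
  · infer_instance
  · intro r hr m
    obtain ⟨m, rfl⟩ := Submodule.mkQ_surjective _ m
    obtain ⟨m', _, e⟩ := hx x hxQ (r • m) (Submodule.smul_mem_smul hr trivial)
    rw [← map_smul, Submodule.mkQ_apply, Submodule.Quotient.mk_eq_zero]
    exact ⟨m', trivial, e⟩

end Art
end S14

namespace S14

section Setup

variable {R}

/-- The finite set of one-dimensional minimal primes with infinitely many overprimes. -/
structure Good (a : Ideal R) (V : Finset (Ideal R)) (S : Submonoid R) : Prop where
  prime : ∀ p ∈ V, p.IsPrime
  le : ∀ p ∈ V, a ≤ p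
  inf : ∀ p ∈ V, {q : Ideal R | q.IsPrime ∧ p ≤ q}.Infinite
  minl : ∀ p ∈ V, ∀ p' : Ideal R, p'.IsPrime → a ≤ p' → p' ≤ p → p' = p
  mem : ∀ s, s ∈ S ↔ ∀ p ∈ V, s ∉ p
  fin : ∀ q : Ideal R, q.IsPrime → a ≤ q → q ∉ V → {q' : Ideal R | q'.IsPrime ∧ q ≤ q'}.Finite

theorem avoid (V : Finset (Ideal R)) (hV : ∀ p ∈ V, p.IsPrime) (I : Ideal R)
    (hI : ∀ p ∈ V, ¬ I ≤ p) : ∃ x ∈ I, ∀ p ∈ V, x ∉ p := by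
  by_contra! h
  have := (Ideal.subset_union_prime (s := V) (f := id) ⊤ ⊤ (fun p hp _ _ => hV p hp) (I := I)).1
    (fun x hx => by
      obtain ⟨p, hp, hxp⟩ := h x hx
      simp only [Set.mem_iUnion]
      exact ⟨p, hp, hxp⟩)
  obtain ⟨p, hp, hle⟩ := this
  exact hI p hp hle

theorem exists_Good [IsNoetherianRing R] (a : Ideal R) (hdim : ringKrullDim (R ⧸ a) ≤ 1) :
    ∃ V S, Good a V S := by
  classical
  have hfin := Ideal.finite_minimalPrimes_of_isNoetherianRing R a
  let V : Finset (Ideal R) := hfin.toFinset.filter fun p => {q : Ideal R | q.IsPrime ∧ p ≤ q}.Infinite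
  have memV : ∀ p, p ∈ V ↔ p ∈ a.minimalPrimes ∧ {q : Ideal R | q.IsPrime ∧ p ≤ q}.Infinite := by
    intro p; simp [V]
  have hprime : ∀ p ∈ V, p.IsPrime := fun p hp => ((memV p).1 hp).1.1.1
  let S : Submonoid R :=
    { carrier := {s | ∀ p ∈ V, s ∉ p}
      one_mem' := fun p hp h => (hprime p hp).ne_top ((Ideal.eq_top_iff_one _).2 h)
      mul_mem' := fun {x y} hx hy p hp h => ((hprime p hp).mem_or_mem h).elim (hx p hp) (hy p hp) }
  refine ⟨V, S, hprime, fun p hp => ((memV p).1 hp).1.1.2, fun p hp => ((memV p).1 hp).2,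
    fun p hp p' h1 h2 h3 => le_antisymm h3 (((memV p).1 hp).1.2 ⟨h1, h2⟩ h3), fun s => Iff.rfl, ?_⟩
  intro q hq haq hqV
  rw [ringKrullDim_quotient, Order.krullDim_le_one_iff] at hdim
  rcases hdim ⟨⟨q, hq⟩, haq⟩ with h | h
  · by_contra hinf
    refine hqV ((memV q).2 ⟨⟨⟨hq, haq⟩, ?_⟩, hinf⟩)
    rintro p' ⟨h1, h2⟩ h3
    exact h (b := ⟨⟨p', h1⟩, h2⟩) h3
  · refine (Set.finite_singleton q).subset ?_
    rintro q' ⟨h1, h2⟩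
    exact le_antisymm (h (b := ⟨⟨q', h1⟩, haq.trans h2⟩) h2) h2

theorem Good.exists_mem {a : Ideal R} {V S} (G : Good a V S) (I : Ideal R) 
    (hI : ∀ p ∈ V, ¬ I ≤ p) : ∃ s ∈ S, s ∈ I := by
  obtain ⟨x, h1, h2⟩ := avoid V G.prime I hI
  exact ⟨x, (G.mem x).2 h2, h1⟩

theorem Good.meets {a : Ideal R} {V S} (G : Good a V S) (q : Ideal R) (hq : q.IsPrime) (ha : a ≤ q)
    (hV : q ∉ V) : ∃ s ∈ S, s ∈ q :=
  G.exists_mem q fun p hp hle => hV (by rw [G.minl p hp q hq ha hle]; exact hp)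

theorem Good.fin' {a : Ideal R} {V S} (G : Good a V S) (q : Ideal R) (hq : q.IsPrime) (ha : a ≤ q)
    (hS : ∃ s ∈ S, s ∈ q) : {q' : Ideal R | q'.IsPrime ∧ q ≤ q'}.Finite := by
  refine G.fin q hq ha fun hV => ?_
  obtain ⟨s, h1, h2⟩ := hS
  exact (G.mem s).1 h1 q hV h2

theorem Good.mem_V {a : Ideal R} {V S} (G : Good a V S) (q : Ideal R) (hq : q.IsPrime) (ha : a ≤ q)
    (hS : Disjoint (S : Set R) (q : Set R)) : q ∈ V := by
  by_contra h
  obtain ⟨s, h1, h2⟩ := G.meets q hq ha h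
  exact Set.disjoint_left.1 hS h1 h2

/-- Finitely generated up to elements of `S`. -/
def SFG (S : Submonoid R) (Q : Type u) [AddCommGroup Q] [Module R Q] : Prop :=
  ∃ L : Submodule R Q, L.FG ∧ ∀ q : Q, ∃ s ∈ S, s • q ∈ L

variable {Q : Type u} [AddCommGroup Q] [Module R Q]

theorem exists_fg_lift (N : Submodule R Q) (L : Submodule R (Q ⧸ N)) (hL : L.FG) :
    ∃ L' : Submodule R Q, L'.FG ∧ L'.map N.mkQ = L := by
  refine Submodule.fg_induction (motive := fun L _ => ∃ L' : Submodule R Q, L'.FG ∧ L'.map N.mkQ = L)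
    ?_ ?_ L hL
  · intro x
    obtain ⟨y, rfl⟩ := N.mkQ_surjective x
    exact ⟨Submodule.span R {y}, Submodule.fg_span_singleton y, by rw [Submodule.map_span]; simp⟩
  · rintro _ _ _ _ ⟨L1, h1, rfl⟩ ⟨L2, h2, rfl⟩
    exact ⟨L1 ⊔ L2, h1.sup h2, Submodule.map_sup _ _ _⟩

theorem SFG.ext {S : Submonoid R} (N : Submodule R Q) (h1 : SFG S N) (h2 : SFG S (Q ⧸ N)) :
    SFG S Q := by
  obtain ⟨L1, f1, c1⟩ := h1
  obtain ⟨L2, f2, c2⟩ := h2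
  obtain ⟨L2, f2', rfl⟩ := exists_fg_lift N L2 f2
  refine ⟨L1.map N.subtype ⊔ L2, (f1.map _).sup f2', fun q => ?_⟩
  obtain ⟨s, hs, l, hl, e⟩ := c2 (N.mkQ q)
  have h3 : s • q - l ∈ N := by
    rw [← Submodule.Quotient.mk_eq_zero, ← Submodule.mkQ_apply, map_sub, e, map_smul, sub_self]
  obtain ⟨s', hs', h4⟩ := c1 ⟨_, h3⟩
  refine ⟨s' * s, S.mul_mem hs' hs, ?_⟩
  have : (s' * s) • q = s' • (s • q - l) + s' • l := by rw [smul_sub, mul_smul]; abel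
  rw [this]
  exact Submodule.add_mem_sup ⟨_, h4, rfl⟩ (L2.smul_mem _ hl)

theorem SFG.of_kill {S : Submonoid R} (s : R) (hs : s ∈ S) (h : ∀ q : Q, s • q = 0) : SFG S Q :=
  ⟨⊥, Submodule.fg_bot, fun q => ⟨s, hs, by rw [h]; exact Submodule.zero_mem _⟩⟩

theorem not_wl_of_indep [IsNoetherianRing R] (p : Ideal R) (hinf : {q : Ideal R | q.IsPrime ∧ p ≤ q}.Infinite)
    (e : ℕ → Q) (he : ∀ f : ℕ →₀ R, Finsupp.linearCombination R e f = 0 → ∀ n, f n ∈ p) :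
    ¬ IsWeaklyLaskerian R Q := by
  intro hwl
  let m := hinf.natEmbedding
  let N0 : Submodule R (ℕ →₀ R) :=
    { carrier := {f | ∀ n, f n ∈ (m n : Ideal R)}
      zero_mem' := fun n => by simp
      add_mem' := fun hx hy n => Ideal.add_mem _ (hx n) (hy n)
      smul_mem' := fun r x hx n => Ideal.mul_mem_left _ r (hx n) }
  let N := N0.map (Finsupp.linearCombination R e)
  refine Set.infinite_of_injective_forall_mem (f := fun n => (m n : Ideal R))
    (fun i j h => m.injective (Subtype.ext h)) ?_ (hwl N)
  intro n
  change IsAssociatedPrime _ _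
  rw [isAssociatedPrime_iff]
  have hprime : (m n : Ideal R).IsPrime := (m n).2.1
  refine ⟨hprime, N.mkQ (e n), ?_⟩
  ext r
  rw [Submodule.mem_colon_singleton, ← map_smul, Submodule.mem_bot, Submodule.mkQ_apply,
    Submodule.Quotient.mk_eq_zero]
  constructor
  · intro hr
    refine ⟨Finsupp.single n r, fun k => ?_, by simp⟩
    by_cases hk : n = k
    · subst hk; simpa using hr
    · rw [Finsupp.single_eq_of_ne (Ne.symm hk)]; exact zero_mem _
  · rintro ⟨f, hf, hfe⟩
    have h1 := he (Finsupp.single n r - f) (by rw [map_sub, hfe]; simp) n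
    have h2 := (m n : Ideal R).add_mem ((m n).2.2 h1) (hf n)
    simpa using h2

theorem w2_prime [IsNoetherianRing R] {S : Submonoid R} (p : Ideal R) [p.IsPrime]
    (hinf : {q : Ideal R | q.IsPrime ∧ p ≤ q}.Infinite)
    (hS : ∀ r, r ∉ p → ∃ s ∈ S, s ∈ Ideal.span {r} ⊔ p)
    (hwl : IsWeaklyLaskerian R Q) (hk : ∀ r ∈ p, ∀ q : Q, r • q = 0) : SFG S Q := by
  have ht : Module.IsTorsionBySet R Q (p : Set R) := fun q r => hk r r.2 q
  let _ := ht.module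
  have : IsScalarTower R (R ⧸ p) Q := ht.isScalarTower
  obtain ⟨s, hs, hmax⟩ := exists_maximal_linearIndepOn (R ⧸ p) (id : Q → Q)
  rw [Set.image_id] at hmax
  by_cases hfin : s.Finite
  · refine ⟨Submodule.span R s, Submodule.fg_span hfin, fun q => ?_⟩
    by_cases hq : q ∈ s
    · exact ⟨1, S.one_mem, Submodule.smul_mem _ _ (Submodule.subset_span hq)⟩
    obtain ⟨a, ha, hmem⟩ := hmax q hq
    obtain ⟨r, rfl⟩ := Ideal.Quotient.mk_surjective a
    rw [Ne, Ideal.Quotient.eq_zero_iff_mem] at ha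
    obtain ⟨t, htS, htr⟩ := hS r ha
    refine ⟨t, htS, ?_⟩
    obtain ⟨x, hx, y, hy, rfl⟩ := Submodule.mem_sup.1 htr
    obtain ⟨z, rfl⟩ := Ideal.mem_span_singleton'.1 hx
    rw [add_smul, hk y hy, add_zero, mul_smul]
    refine Submodule.smul_mem _ _ ?_
    rw [← Submodule.restrictScalars_span R (R ⧸ p) Ideal.Quotient.mk_surjective]
    exact hmem
  · exfalso
    let e := Set.Infinite.natEmbedding s hfin
    refine not_wl_of_indep p hinf (fun n => (e n : Q)) ?_ hwl
    intro f hf n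
    have hli : LinearIndependent (R ⧸ p) (fun n => (e n : Q)) :=
      LinearIndependent.comp (v := fun x : s => (x : Q)) hs e e.injective
    rw [linearIndependent_iff] at hli
    have := hli (f.mapRange (Ideal.Quotient.mk p) (map_zero _)) (by
      rw [← hf, Finsupp.linearCombination_apply, Finsupp.linearCombination_apply,
        Finsupp.sum_mapRange_index (by simp)]
      rfl)
    have := DFunLike.congr_fun this n
    rwa [Finsupp.mapRange_apply, Finsupp.zero_apply, Ideal.Quotient.eq_zero_iff_mem] at this

theorem w2 [IsNoetherianRing R] {a : Ideal R} {V S} (G : Good a V S) (I : Ideal R) :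
    ∀ (Q : Type u) [AddCommGroup Q] [Module R Q], IsWeaklyLaskerian R Q → a ≤ I →
      (∀ r ∈ I, ∀ q : Q, r • q = 0) → SFG S Q := by
  induction I using WellFoundedGT.induction with
  | ind I ih =>
  intro Q _ _ hwl haI hk
  by_cases htop : I = ⊤
  · refine SFG.of_kill 1 S.one_mem fun q => hk 1 (by rw [htop]; trivial) q
  by_cases hp : I.IsPrime
  · by_cases hV : I ∈ V
    · refine w2_prime I (G.inf I hV) (fun r hr => G.exists_mem _ fun p hp' hle => hr ?_) hwl hk
      have : I = p := G.minl p hp' I hp haI (le_sup_right.trans hle)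
      rw [this]
      exact hle (Submodule.mem_sup_left (Ideal.mem_span_singleton_self r))
    · obtain ⟨s, h1, h2⟩ := G.meets I hp haI hV
      exact SFG.of_kill s h1 (hk s h2)
  · rw [Ideal.isPrime_iff] at hp
    push Not at hp
    obtain ⟨x, y, hxy, hx, hy⟩ := hp htop
    have lt : ∀ z, z ∉ I → I < I ⊔ Ideal.span {z} := fun z hz =>
      lt_of_le_of_ne le_sup_left fun h => hz (by
        rw [h]; exact Submodule.mem_sup_right (Ideal.mem_span_singleton_self z))
    refine SFG.ext (LinearMap.range (LinearMap.lsmul R Q x)) ?_ ?_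
    · refine ih _ (lt y hy) _ (wl_of_injective (Submodule.subtype _) (Submodule.subtype_injective _) hwl)
        (haI.trans le_sup_left) ?_
      rintro r hr ⟨_, q, rfl⟩
      obtain ⟨c, hc, d, hd, rfl⟩ := Submodule.mem_sup.1 hr
      obtain ⟨z, rfl⟩ := Ideal.mem_span_singleton'.1 hd
      apply Subtype.ext
      change (c + z * y) • (x • q) = 0
      rw [add_smul, hk c hc, zero_add, ← mul_smul]
      exact hk _ (by rw [mul_assoc, mul_comm y x]; exact I.mul_mem_left _ hxy) q
    · refine ih _ (lt x hx) _ (wl_of_surjective (Submodule.mkQ _) (Submodule.mkQ_surjective _) hwl)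
        (haI.trans le_sup_left) ?_
      intro r hr q
      obtain ⟨q, rfl⟩ := Submodule.mkQ_surjective _ q
      obtain ⟨c, hc, d, hd, rfl⟩ := Submodule.mem_sup.1 hr
      obtain ⟨z, rfl⟩ := Ideal.mem_span_singleton'.1 hd
      rw [← map_smul, Submodule.mkQ_apply, Submodule.Quotient.mk_eq_zero, add_smul, hk c hc, zero_add]
      exact ⟨z • q, by simp [mul_comm z x, mul_smul, smul_comm x z]⟩

end Setup
end S14

namespace S14

section GoodX

variable {R}
variable {X : Type u} [AddCommGroup X] [Module R X]

theorem loc_mem (S : Submonoid R) (W : Submodule R X) (z : LocalizedModule S X) :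
    z ∈ W.localized S ↔ ∃ m ∈ W, ∃ s : S, LocalizedModule.mk m s = z := by
  rw [Submodule.mem_localized']
  simp_rw [IsLocalizedModule.mk_eq_mk']

theorem smul_loc (S : Submonoid R) (r : R) (m : X) (s : S) :
    algebraMap R (Localization S) r • LocalizedModule.mk m s = LocalizedModule.mk (r • m) s := by
  rw [algebraMap_smul, LocalizedModule.smul'_mk]

theorem loc_eq_zero (S : Submonoid R) (m : X) (s : S) :
    LocalizedModule.mk m s = 0 ↔ ∃ t ∈ S, t • m = 0 := by
  rw [← LocalizedModule.zero_mk (1 : S), LocalizedModule.mk_eq]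
  constructor
  · rintro ⟨u, hu⟩
    refine ⟨u, u.2, ?_⟩
    simpa [Submonoid.smul_def] using hu
  · rintro ⟨t, ht, h⟩
    refine ⟨⟨t, ht⟩, ?_⟩
    simpa [Submonoid.smul_def] using h

/-- Torsion with respect to each element of `a`. -/
def Tor (a : Ideal R) (X : Type u) [AddCommGroup X] [Module R X] : Prop :=
  ∀ x ∈ a, ∀ m : X, ∃ k : ℕ, x ^ k • m = 0

theorem kill_fg (S : Submonoid R) (m : X) (I : Ideal R) (hI : I.FG) :
    (∀ r ∈ I, ∃ s ∈ S, s • r • m = 0) → ∃ s ∈ S, ∀ r ∈ I, s • r • m = 0 := by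
  refine Submodule.fg_induction (motive := fun I _ => (∀ r ∈ I, ∃ s ∈ S, s • r • m = 0) →
    ∃ s ∈ S, ∀ r ∈ I, s • r • m = 0) ?_ ?_ I hI
  · intro x hx
    obtain ⟨s, hs, h⟩ := hx x (Submodule.mem_span_singleton_self x)
    refine ⟨s, hs, fun r hr => ?_⟩
    obtain ⟨t, rfl⟩ := Submodule.mem_span_singleton.1 hr
    rw [smul_assoc, smul_comm s t, h, smul_zero]
  · intro I J _ _ hI hJ h
    obtain ⟨s, hs, h1⟩ := hI fun r hr => h r (Submodule.mem_sup_left hr)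
    obtain ⟨t, ht, h2⟩ := hJ fun r hr => h r (Submodule.mem_sup_right hr)
    refine ⟨s * t, S.mul_mem hs ht, fun r hr => ?_⟩
    obtain ⟨x, hx, y, hy, rfl⟩ := Submodule.mem_sup.1 hr
    rw [add_smul, smul_add, mul_comm, mul_smul, h1 x hx, mul_comm, mul_smul, h2 y hy]
    simp

theorem loc_torsion_fg [IsNoetherianRing R] (S : Submonoid R) (a : Ideal R)
    (h : SFG S (Submodule.torsionBySet R X (a : Set R))) :
    Module.Finite (Localization S) (Submodule.torsionBySet (Localization S) (LocalizedModule S X)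
      (a.map (algebraMap R (Localization S)) : Set (Localization S))) := by
  have : IsNoetherianRing (Localization S) := IsLocalization.isNoetherianRing S _ inferInstance
  obtain ⟨L, ⟨t, ht⟩, hL⟩ := h
  let D : Submodule (Localization S) (LocalizedModule S X) :=
    Submodule.span _ ((fun z : Submodule.torsionBySet R X (a : Set R) =>
      LocalizedModule.mk (z : X) (1 : S)) '' (t : Set _))
  have hDfg : D.FG := Submodule.fg_span (t.finite_toSet.image _)
  have hLD : ∀ z ∈ L, LocalizedModule.mk (z : X) (1 : S) ∈ D := by
    intro z hz
    rw [← ht] at hz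
    induction hz using Submodule.span_induction with
    | mem x hx => exact Submodule.subset_span ⟨x, hx, rfl⟩
    | zero => 
      have : LocalizedModule.mk (((0 : Submodule.torsionBySet R X (a : Set R))) : X) (1 : S) = 0 :=
        LocalizedModule.zero_mk 1
      rw [this]; exact Submodule.zero_mem _
    | add x y _ _ hx hy =>
      have := Submodule.add_mem _ hx hy
      rw [LocalizedModule.mk_add_mk] at this
      simpa using this
    | smul r x _ hx =>
      have := D.smul_mem (algebraMap R (Localization S) r) hx
      rw [smul_loc] at this
      exact this
  have hle : Submodule.torsionBySet (Localization S) (LocalizedModule S X)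
      (a.map (algebraMap R (Localization S)) : Set (Localization S)) ≤ D := by
    intro z hz
    rw [Submodule.mem_torsionBySet_iff] at hz
    induction z using LocalizedModule.induction_on with
    | h m s =>
    obtain ⟨s1, hs1, h1⟩ := kill_fg S m a (IsNoetherian.noetherian a) (by
      intro r hr
      have h2 := hz ⟨algebraMap R _ r, Ideal.mem_map_of_mem _ hr⟩
      change algebraMap R (Localization S) r • LocalizedModule.mk m s = 0 at h2
      rw [smul_loc, loc_eq_zero] at h2
      exact h2)
    have h3 : s1 • m ∈ Submodule.torsionBySet R X (a : Set R) := by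
      rw [Submodule.mem_torsionBySet_iff]
      rintro ⟨r, hr⟩
      change r • s1 • m = 0
      rw [smul_comm, h1 r hr]
    obtain ⟨s2, hs2, h4⟩ := hL ⟨_, h3⟩
    have h5 := D.smul_mem (Localization.mk 1 (⟨s2 * s1, S.mul_mem hs2 hs1⟩ * s)) (hLD _ h4)
    rw [LocalizedModule.mk_smul_mk] at h5
    convert h5 using 1
    rw [LocalizedModule.mk_eq]
    refine ⟨1, ?_⟩
    simp only [Submonoid.smul_def, Submonoid.coe_mul, Submonoid.coe_one, one_smul, mul_one,
      Submodule.coe_smul]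
    simp only [← mul_smul]
    congr 1
    ring
  have : IsNoetherian (Localization S) D := isNoetherian_of_fg_of_noetherian D hDfg
  exact Module.Finite.of_injective (Submodule.inclusion hle) (Submodule.inclusion_injective _)

theorem sfg_of_loc (S : Submonoid R) (x : R)
    (h : Module.Finite (Localization S) (LocalizedModule S X ⧸
      (⊤ : Submodule (Localization S) (LocalizedModule S X)).map
        (LinearMap.lsmul (Localization S) (LocalizedModule S X) (algebraMap R _ x)))) :
    SFG S (X ⧸ LinearMap.range (LinearMap.lsmul R X x)) := by
  set K := (⊤ : Submodule (Localization S) (LocalizedModule S X)).map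
        (LinearMap.lsmul (Localization S) (LocalizedModule S X) (algebraMap R _ x)) with hK
  have key : ∀ D : Submodule (Localization S) (LocalizedModule S X ⧸ K), D.FG →
      ∃ P : Submodule R X, P.FG ∧ D ≤ (P.localized S).map K.mkQ := by
    intro D hD
    refine Submodule.fg_induction (motive := fun D _ =>
      ∃ P : Submodule R X, P.FG ∧ D ≤ (P.localized S).map K.mkQ) ?_ ?_ D hD
    · intro z
      obtain ⟨z, rfl⟩ := K.mkQ_surjective z
      induction z using LocalizedModule.induction_on with
      | h m s =>
      refine ⟨Submodule.span R {m}, Submodule.fg_span_singleton m, ?_⟩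
      rw [Submodule.span_singleton_le_iff_mem]
      exact ⟨_, (loc_mem _ _ _).2 ⟨m, Submodule.mem_span_singleton_self m, s, rfl⟩, rfl⟩
    · rintro D1 D2 _ _ ⟨P1, f1, h1⟩ ⟨P2, f2, h2⟩
      have hmono : ∀ {P P' : Submodule R X}, P ≤ P' → P.localized S ≤ P'.localized S := by
        intro P P' hPP z hz
        rw [loc_mem] at hz ⊢
        obtain ⟨m, hm, r⟩ := hz
        exact ⟨m, hPP hm, r⟩
      refine ⟨P1 ⊔ P2, f1.sup f2, sup_le ?_ ?_⟩
      · exact h1.trans (Submodule.map_mono (hmono le_sup_left))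
      · exact h2.trans (Submodule.map_mono (hmono le_sup_right))
  obtain ⟨P, hP, hle⟩ := key ⊤ h.fg_top
  refine ⟨P.map (Submodule.mkQ _), hP.map _, fun q => ?_⟩
  obtain ⟨q, rfl⟩ := Submodule.mkQ_surjective _ q
  obtain ⟨z, hz, e⟩ := hle (Submodule.mem_top (x := K.mkQ (LocalizedModule.mk q (1 : S))))
  have h1 : LocalizedModule.mk q (1 : S) - z ∈ K := by
    rw [← Submodule.Quotient.mk_eq_zero, ← Submodule.mkQ_apply, map_sub, e, sub_self]
  obtain ⟨w, -, hw⟩ := h1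
  obtain ⟨m, hm, s, rfl⟩ := (loc_mem _ _ _).1 hz
  induction w using LocalizedModule.induction_on with
  | h w t =>
  rw [LinearMap.lsmul_apply, smul_loc, eq_sub_iff_add_eq, LocalizedModule.mk_add_mk,
    LocalizedModule.mk_eq] at hw
  obtain ⟨u, hu⟩ := hw
  refine ⟨(u * (t * s) : S), (u * (t * s) : S).2, ?_⟩
  have h2 : ((u * (t * s) : S) : R) • q = ((u * t : S) : R) • m + x • ((u * s : S) : R) • w := by
    simp only [Submonoid.smul_def, Submonoid.coe_mul, Submonoid.coe_one, one_smul] at hu ⊢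
    rw [mul_smul, ← hu, smul_add]
    simp only [← mul_smul]
    rw [add_comm]
    congr 2
    ring
  rw [← map_smul, h2, map_add]
  refine Submodule.add_mem _ ⟨_, P.smul_mem _ hm, rfl⟩ ?_
  have : (LinearMap.range (LinearMap.lsmul R X x)).mkQ (x • ((u * s : S) : R) • w) = 0 := by
    rw [Submodule.mkQ_apply, Submodule.Quotient.mk_eq_zero]
    exact ⟨_, rfl⟩
  rw [this]
  exact Submodule.zero_mem _

theorem good_x [IsNoetherianRing R] {a : Ideal R} {V S} (G : Good a V S)
    (hT : Tor a X) (h : SFG S (Submodule.torsionBySet R X (a : Set R))) :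
    ∃ x ∈ a, SFG S (X ⧸ LinearMap.range (LinearMap.lsmul R X x)) := by
  classical
  have : IsNoetherianRing (Localization S) := IsLocalization.isNoetherianRing S _ inferInstance
  have hc1 : ∀ p : Ideal (Localization S), p.IsPrime → a.map (algebraMap R (Localization S)) ≤ p →
      p.IsMaximal := by
    intro p hp hap
    obtain ⟨m, hm, hpm⟩ := Ideal.exists_le_maximal p hp.ne_top
    have hV : ∀ p : Ideal (Localization S), p.IsPrime → a.map (algebraMap R (Localization S)) ≤ p →
        p.under R ∈ V := by
      intro p hp hap
      refine G.mem_V _ inferInstance (Ideal.map_le_iff_le_comap.1 hap) ?_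
      rw [IsLocalization.disjoint_under_iff S (Localization S)]
      exact hp.ne_top
    have h1 := hV m hm.isPrime (hap.trans hpm)
    have h2 := G.minl _ h1 (p.under R) inferInstance (G.le _ (hV p hp hap)) (Ideal.comap_mono hpm)
    rw [← IsLocalization.map_under S (Localization S) p, h2,
      IsLocalization.map_under S (Localization S) m]
    exact hm
  have hc2 : ∀ x ∈ a.map (algebraMap R (Localization S)), ∀ m : LocalizedModule S X,
      ∃ k : ℕ, x ^ k • m = 0 := by
    intro y hy m
    induction m using LocalizedModule.induction_on with
    | h m s =>
    obtain ⟨⟨⟨r, hr⟩, t⟩, e⟩ := (IsLocalization.mem_map_algebraMap_iff S (Localization S)).1 hy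
    obtain ⟨k, hk⟩ := hT r hr m
    refine ⟨k, ?_⟩
    have hu : IsUnit (algebraMap R (Localization S) t ^ k) :=
      (IsLocalization.map_units (Localization S) t).pow k
    rw [← hu.smul_eq_zero, ← mul_smul, mul_comm, ← mul_pow, e, ← map_pow, smul_loc, hk,
      LocalizedModule.zero_mk]
  obtain ⟨Q, hQ, hx⟩ := exists_good (T := Localization S) (A := LocalizedModule S X)
    (a.map (algebraMap R (Localization S))) hc1 hc2 (loc_torsion_fg S a h)
  obtain ⟨x, hxa, hxQ⟩ := avoid (Q.image fun q => q.under R) (by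
      intro p hp
      obtain ⟨q, hq, rfl⟩ := Finset.mem_image.1 hp
      have := (hQ q hq).1
      infer_instance) a (by
      intro p hp hle
      obtain ⟨q, hq, rfl⟩ := Finset.mem_image.1 hp
      exact (hQ q hq).2 (Ideal.map_le_iff_le_comap.2 hle))
  refine ⟨x, hxa, sfg_of_loc S x (hx _ fun q hq hxq => ?_)⟩
  exact hxQ _ (Finset.mem_image_of_mem _ hq) hxq

theorem hom_tor (a : Ideal R) (h : IsWeaklyLaskerian R (E R (R ⧸ a) X 0)) :
    IsWeaklyLaskerian R (Submodule.torsionBySet R X (a : Set R)) := by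
  refine wl_of_injective (B := E R (R ⧸ a) X 0)
    { toFun := fun y => Abelian.Ext.mk₀ (ModuleCat.ofHom (Submodule.liftQ a
        (LinearMap.toSpanSingleton R X y) (fun r hr =>
          (Submodule.mem_torsionBySet_iff _ _).1 y.2 ⟨r, hr⟩)))
      map_add' := ?_
      map_smul' := ?_ } ?_ h
  · intro y z
    rw [← Abelian.Ext.mk₀_add]
    congr 1
    ext
    simp
    change _ = (1 : R) • (y : X) + (1 : R) • (z : X)
    simp
  · intro r y
    rw [RingHom.id_apply, ← Abelian.Ext.mk₀_smul]
    congr 1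
    ext
    simp
    change _ = r • (1 : R) • (y : X)
    simp
  · intro y z hyz
    have h1 := Abelian.Ext.homEquiv₀.symm.injective hyz
    have h2 := congrArg (fun f => f.hom (Submodule.Quotient.mk (1 : R))) h1
    have h3 : (1 : R) • (y : X) = (1 : R) • (z : X) := h2
    simpa using h3

theorem w3 [IsNoetherianRing R] {a : Ideal R} {V S} (G : Good a V S)
    (hT : Tor a X) (h : SFG S X) (h0 : IsWeaklyLaskerian R (E R (R ⧸ a) X 0)) :
    IsWeaklyLaskerian R X := by
  obtain ⟨L, hfg, hL⟩ := h
  have : Module.Finite R L := Module.Finite.iff_fg.2 hfg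
  have hLwl : IsWeaklyLaskerian R L := wl_of_finite
  have h1 : IsWeaklyLaskerian R (E R (R ⧸ a) (X ⧸ L) 0) :=
    covR (R ⧸ a) L.subtype L.mkQ (LinearMap.exact_subtype_mkQ L) (Submodule.subtype_injective _)
      (Submodule.mkQ_surjective _) h0 (ext_wl_of_wl hLwl 1 (R ⧸ a))
  refine wl_of_shortExact L hLwl ?_
  have h2 := hom_tor a h1
  have hass : ∀ q ∈ associatedPrimes R (X ⧸ L), q.IsPrime ∧ a ≤ q ∧ (∃ s ∈ S, s ∈ q) ∧
      q ∈ associatedPrimes R (Submodule.torsionBySet R (X ⧸ L) (a : Set R)) := by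
    intro q hq
    have hq' : IsAssociatedPrime q (X ⧸ L) := hq
    rw [isAssociatedPrime_iff] at hq'
    obtain ⟨hp, y, hy⟩ := hq'
    have hy' : ∀ r, r ∈ q ↔ r • y = 0 := by
      intro r; rw [hy, Submodule.mem_colon_singleton, Submodule.mem_bot]
    obtain ⟨x, rfl⟩ := Submodule.mkQ_surjective _ y
    have haq : a ≤ q := by
      intro r hr
      obtain ⟨k, hk⟩ := hT r hr x
      refine hp.mem_of_pow_mem k ?_
      rw [hy', ← map_smul, hk, map_zero]
    refine ⟨hp, haq, ?_, ?_⟩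
    · obtain ⟨s, hs, h3⟩ := hL x
      refine ⟨s, hs, ?_⟩
      rw [hy', ← map_smul, Submodule.mkQ_apply, Submodule.Quotient.mk_eq_zero]
      exact h3
    · change IsAssociatedPrime _ _
      rw [isAssociatedPrime_iff]
      refine ⟨hp, ⟨L.mkQ x, ?_⟩, ?_⟩
      · rw [Submodule.mem_torsionBySet_iff]
        rintro ⟨r, hr⟩
        exact (hy' r).1 (haq hr)
      · ext r
        rw [Submodule.mem_colon_singleton, Submodule.mem_bot, hy', Subtype.ext_iff]
        rfl
  refine wl_of_finite_supp ?_ fun q hq => ?_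
  · have h3 := h2 ⊥
    rw [LinearEquiv.AssociatedPrimes.eq (Submodule.quotEquivOfEqBot _ rfl)] at h3
    exact h3.subset fun q hq => (hass q hq).2.2.2
  · obtain ⟨h3, h4, h5, -⟩ := hass q hq
    exact G.fin' q h3 h4 h5

end GoodX
end S14

namespace S14

section Key

variable {R}
variable {X : Type u} [AddCommGroup X] [Module R X]

theorem ext_smul_zero (a : Ideal R) (x : R) (hx : x ∈ a) (i : ℕ) (y : E R (R ⧸ a) X i) :
    x • y = 0 := by
  have h1 : x • y = (x • Abelian.Ext.mk₀ (𝟙 (ModuleCat.of R (R ⧸ a)))).comp y (zero_add i) := by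
    rw [Abelian.Ext.smul_comp, Abelian.Ext.mk₀_id_comp]
  have h2 : x • (𝟙 (ModuleCat.of R (R ⧸ a))) = 0 := by
    ext r
    change x • (Submodule.Quotient.mk (1 : R) : R ⧸ a) = 0
    rw [← Submodule.Quotient.mk_smul, Submodule.Quotient.mk_eq_zero, smul_eq_mul, mul_one]
    exact hx
  rw [h1, ← Abelian.Ext.mk₀_smul, h2, Abelian.Ext.mk₀_zero, Abelian.Ext.zero_comp]

theorem Tor.of_inj {a : Ideal R} {Y : Type u} [AddCommGroup Y] [Module R Y] (h : Tor a Y)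
    (f : X →ₗ[R] Y) (hf : Function.Injective f) : Tor a X := by
  intro x hx m
  obtain ⟨k, hk⟩ := h x hx (f m)
  exact ⟨k, hf (by rw [map_smul, hk, map_zero])⟩

theorem Tor.of_surj {a : Ideal R} {Y : Type u} [AddCommGroup Y] [Module R Y] (h : Tor a X)
    (f : X →ₗ[R] Y) (hf : Function.Surjective f) : Tor a Y := by
  intro x hx m
  obtain ⟨m, rfl⟩ := hf m
  obtain ⟨k, hk⟩ := h x hx m
  exact ⟨k, by rw [← map_smul, hk, map_zero]⟩

theorem key_step (a : Ideal R) (x : R) (hx : x ∈ a) (i : ℕ)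
    (hN : IsWeaklyLaskerian R (E R (R ⧸ a) (LinearMap.ker (LinearMap.lsmul R X x)) i))
    (hY : ∀ j, IsWeaklyLaskerian R (E R (R ⧸ a) (X ⧸ LinearMap.range (LinearMap.lsmul R X x)) j)) :
    IsWeaklyLaskerian R (E R (R ⧸ a) X i) := by
  let m := LinearMap.lsmul R X x
  let f := m.rangeRestrict
  let g := (LinearMap.range m).subtype
  have ex1 : Function.Exact (LinearMap.ker m).subtype f := by
    intro y
    rw [← LinearMap.mem_ker, LinearMap.ker_rangeRestrict]
    simp
  have ex2 : Function.Exact g (LinearMap.range m).mkQ := LinearMap.exact_subtype_mkQ _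
  have se1 := sc_shortExact (LinearMap.ker m).subtype f ex1 (Submodule.subtype_injective _)
    m.surjective_rangeRestrict
  have se2 := sc_shortExact g (LinearMap.range m).mkQ ex2 (Submodule.subtype_injective _)
    (Submodule.mkQ_surjective _)
  let F : E R (R ⧸ a) X i →ₗ[R] E R (R ⧸ a) (LinearMap.range m) i :=
    (Abelian.Ext.mk₀ (ModuleCat.ofHom f)).postcompOfLinear R _ (add_zero i)
  let H : E R (R ⧸ a) (LinearMap.range m) i →ₗ[R] E R (R ⧸ a) X i :=
    (Abelian.Ext.mk₀ (ModuleCat.ofHom g)).postcompOfLinear R _ (add_zero i)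
  have hHF : ∀ y, H (F y) = 0 := by
    intro y
    change (y.comp (Abelian.Ext.mk₀ (ModuleCat.ofHom f)) (add_zero i)).comp
      (Abelian.Ext.mk₀ (ModuleCat.ofHom g)) (add_zero i) = 0
    rw [Abelian.Ext.comp_assoc_of_third_deg_zero, Abelian.Ext.mk₀_comp_mk₀]
    have : ModuleCat.ofHom f ≫ ModuleCat.ofHom g = x • 𝟙 (ModuleCat.of R X) := by
      ext y
      rfl
    rw [this, Abelian.Ext.mk₀_smul, Abelian.Ext.comp_smul, Abelian.Ext.comp_mk₀_id]
    exact ext_smul_zero a x hx i y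
  have hK : IsWeaklyLaskerian R (LinearMap.ker H) := by
    cases i with
    | zero =>
      have : Mono (ModuleCat.ofHom g) := (ModuleCat.mono_iff_injective _).2 (Submodule.subtype_injective _)
      have : Function.Injective H := Abelian.Ext.postcomp_mk₀_injective_of_mono _ (ModuleCat.ofHom g)
      have hb := LinearMap.ker_eq_bot.2 this
      rw [hb]
      exact wl_of_subsingleton
    | succ j =>
      let D : E R (R ⧸ a) (X ⧸ LinearMap.range m) j →ₗ[R] E R (R ⧸ a) (LinearMap.range m) (j + 1) :=
        se2.extClass.postcompOfLinear R _ rfl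
      have hle : LinearMap.ker H ≤ LinearMap.range D := by
        intro y hy
        exact Abelian.Ext.covariant_sequence_exact₁ _ se2 y hy rfl
      exact wl_of_injective (Submodule.inclusion hle) (Submodule.inclusion_injective _)
        (wl_of_surjective D.rangeRestrict D.surjective_rangeRestrict (hY j))
  refine wl_of_exact ((Abelian.Ext.mk₀ (sc (LinearMap.ker m).subtype f ex1).f).postcompOfLinear R _
      (add_zero i)) (F.codRestrict (LinearMap.ker H) hHF) ?_ hN hK
  intro y hy
  exact Abelian.Ext.covariant_sequence_exact₂ _ se1 y (congrArg Subtype.val hy)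

theorem key [IsNoetherianRing R] {a : Ideal R} {V S} (G : Good a V S) (I : Ideal R) :
    ∀ (X : Type u) [AddCommGroup X] [Module R X], Module.annihilator R X = I → Tor a X →
      IsWeaklyLaskerian R (E R (R ⧸ a) X 0) → IsWeaklyLaskerian R (E R (R ⧸ a) X 1) →
      ∀ i, IsWeaklyLaskerian R (E R (R ⧸ a) X i) := by
  induction I using WellFoundedGT.induction with
  | ind I ih =>
  intro X _ _ hI hT h0 h1
  have hs : SFG S (Submodule.torsionBySet R X (a : Set R)) := by
    refine w2 G a _ (hom_tor a h0) le_rfl ?_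
    rintro r hr ⟨m, hm⟩
    exact Subtype.ext ((Submodule.mem_torsionBySet_iff _ _).1 hm ⟨r, hr⟩)
  obtain ⟨x, hxa, hx⟩ := good_x G hT hs
  by_cases hxI : x ∈ I
  · have hX : SFG S X := by
      refine SFG.ext _ (SFG.of_kill 1 S.one_mem ?_) hx
      rintro ⟨_, y, rfl⟩
      rw [← hI, Module.mem_annihilator] at hxI
      apply Subtype.ext
      change (1 : R) • x • y = 0
      rw [hxI, smul_zero]
    have hwl := w3 G hT hX h0
    exact fun i => ext_wl_of_wl hwl i _
  · let m := LinearMap.lsmul R X x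
    let f := m.rangeRestrict
    let g := (LinearMap.range m).subtype
    have ex1 : Function.Exact (LinearMap.ker m).subtype f := by
      intro y
      rw [← LinearMap.mem_ker, LinearMap.ker_rangeRestrict]
      simp
    have ex2 : Function.Exact g (LinearMap.range m).mkQ := LinearMap.exact_subtype_mkQ _
    have n0 : IsWeaklyLaskerian R (E R (R ⧸ a) (LinearMap.ker m) 0) :=
      covL0 (R ⧸ a) (LinearMap.ker m).subtype (Submodule.subtype_injective _) h0
    have z0 : IsWeaklyLaskerian R (E R (R ⧸ a) (LinearMap.range m) 0) :=
      covL0 (R ⧸ a) (LinearMap.range m).subtype (Submodule.subtype_injective _) h0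
    have n1 : IsWeaklyLaskerian R (E R (R ⧸ a) (LinearMap.ker m) 1) :=
      covL (R ⧸ a) _ f ex1 (Submodule.subtype_injective _) m.surjective_rangeRestrict z0 h1
    have nall := ih (Module.annihilator R (LinearMap.ker m)) (by
        refine lt_of_le_of_ne ?_ ?_
        · rw [← hI]
          exact LinearMap.annihilator_le_of_injective (LinearMap.ker m).subtype
            (Submodule.subtype_injective _)
        · intro h
          apply hxI
          rw [h, Module.mem_annihilator]
          rintro ⟨y, hy⟩
          exact Subtype.ext hy) _ rfl
      (hT.of_inj (LinearMap.ker m).subtype (Submodule.subtype_injective _)) n0 n1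
    have z1 : IsWeaklyLaskerian R (E R (R ⧸ a) (LinearMap.range m) 1) :=
      covR (R ⧸ a) _ f ex1 (Submodule.subtype_injective _) m.surjective_rangeRestrict h1 (nall 2)
    have y0 : IsWeaklyLaskerian R (E R (R ⧸ a) (X ⧸ LinearMap.range m) 0) :=
      covR (R ⧸ a) g _ ex2 (Submodule.subtype_injective _) (Submodule.mkQ_surjective _) h0 z1
    have hwl := w3 G (hT.of_surj (LinearMap.range m).mkQ (Submodule.mkQ_surjective _)) hx y0
    exact fun i => key_step a x hxa i (nall i) fun j => ext_wl_of_wl hwl j _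

end Key
end S14

namespace S14

section Gamma

variable {R}
variable {X Y : Type u} [AddCommGroup X] [Module R X] [AddCommGroup Y] [Module R Y]

/-- Uniform power torsion. -/
def TorP (a : Ideal R) (X : Type u) [AddCommGroup X] [Module R X] : Prop :=
  ∀ m : X, ∃ n : ℕ, ∀ r ∈ a ^ n, r • m = 0

theorem TorP.tor {a : Ideal R} (h : TorP a X) : Tor a X := by
  intro x hx m
  obtain ⟨n, hn⟩ := h m
  exact ⟨n, hn _ (Ideal.pow_mem_pow hx n)⟩

theorem TorP.of_surj {a : Ideal R} (h : TorP a X) (f : X →ₗ[R] Y)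
    (hf : Function.Surjective f) : TorP a Y := by
  intro m
  obtain ⟨m, rfl⟩ := hf m
  obtain ⟨k, hk⟩ := h m
  exact ⟨k, fun r hr => by rw [← map_smul, hk r hr, map_zero]⟩

/-- The torsion submodule. -/
def Gam (a : Ideal R) (X : Type u) [AddCommGroup X] [Module R X] : Submodule R X where
  carrier := {m | ∃ n : ℕ, ∀ r ∈ a ^ n, r • m = 0}
  zero_mem' := ⟨0, fun r _ => smul_zero r⟩
  add_mem' := by
    rintro x y ⟨n, hn⟩ ⟨m, hm⟩
    refine ⟨n + m, fun r hr => ?_⟩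
    rw [smul_add, hn r (Ideal.pow_le_pow_right (Nat.le_add_right n m) hr),
      hm r (Ideal.pow_le_pow_right (Nat.le_add_left m n) hr), add_zero]
  smul_mem' := by
    rintro c x ⟨n, hn⟩
    exact ⟨n, fun r hr => by rw [smul_comm, hn r hr, smul_zero]⟩

theorem gam_torP (a : Ideal R) : TorP a (Gam a X) := by
  rintro ⟨m, n, hn⟩
  exact ⟨n, fun r hr => Subtype.ext (hn r hr)⟩

/-- Torsion-free. -/
def TF (a : Ideal R) (X : Type u) [AddCommGroup X] [Module R X] : Prop :=
  ∀ (n : ℕ) (x : X), (∀ r ∈ a ^ n, r • x = 0) → x = 0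

theorem unif_kill [IsNoetherianRing R] (a I : Ideal R) (g : I →ₗ[R] X) (h : TorP a X) :
    ∃ k : ℕ, ∀ r ∈ a ^ k, ∀ y : I, r • g y = 0 := by
  have hfg : (LinearMap.range g).FG := Module.Finite.iff_fg.1 inferInstance
  suffices H : ∀ N : Submodule R X, N.FG → ∃ k : ℕ, ∀ r ∈ a ^ k, ∀ y ∈ N, r • y = 0 by
    obtain ⟨k, hk⟩ := H _ hfg
    exact ⟨k, fun r hr y => hk r hr _ ⟨y, rfl⟩⟩
  intro N hN
  induction N, hN using Submodule.fg_induction with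
  | singleton x =>
    obtain ⟨k, hk⟩ := h x
    refine ⟨k, fun r hr y hy => ?_⟩
    obtain ⟨c, rfl⟩ := Submodule.mem_span_singleton.1 hy
    rw [smul_comm, hk r hr, smul_zero]
  | sup N₁ N₂ _ _ h1 h2 =>
    obtain ⟨k, hk⟩ := h1
    obtain ⟨l, hl⟩ := h2
    refine ⟨k + l, fun r hr y hy => ?_⟩
    obtain ⟨y, hy1, z, hz, rfl⟩ := Submodule.mem_sup.1 hy
    rw [smul_add, hk r (Ideal.pow_le_pow_right (Nat.le_add_right k l) hr) y hy1,
      hl r (Ideal.pow_le_pow_right (Nat.le_add_left l k) hr) z hz, add_zero]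

theorem tf_quot [IsNoetherianRing R] (a : Ideal R) : TF a (X ⧸ Gam a X) := by
  intro n x hx
  obtain ⟨x, rfl⟩ := Submodule.mkQ_surjective _ x
  have h1 : ∀ r ∈ a ^ n, r • x ∈ Gam a X := by
    intro r hr
    have := hx r hr
    rwa [← map_smul, Submodule.mkQ_apply, Submodule.Quotient.mk_eq_zero] at this
  let g : ↥(a ^ n) →ₗ[R] Gam a X :=
    ((LinearMap.toSpanSingleton R X x).comp (a ^ n).subtype).codRestrict _ (fun r => h1 r r.2)
  obtain ⟨k, hk⟩ := unif_kill a (a ^ n) g (gam_torP a)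
  rw [Submodule.mkQ_apply, Submodule.Quotient.mk_eq_zero]
  refine ⟨k + n, fun r hr => ?_⟩
  rw [pow_add] at hr
  refine Submodule.mul_induction_on hr ?_ ?_
  · intro s hs t ht
    have := congrArg Subtype.val (hk s hs ⟨t, ht⟩)
    rw [mul_smul]
    exact this
  · intro s t hs ht
    rw [add_smul, hs, ht, add_zero]

theorem TF.of_inj {a : Ideal R} (h : TF a Y) (f : X →ₗ[R] Y) (hf : Function.Injective f) :
    TF a X := by
  intro n x hx
  apply hf
  rw [map_zero]
  exact h n _ (fun r hr => by rw [← map_smul, hx r hr, map_zero])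

theorem gam_injective [IsNoetherianRing R] (a : Ideal R) (hX : Module.Injective R X) :
    Module.Injective R (Gam a X) := by
  apply Module.Baer.injective
  intro I g
  obtain ⟨k, hk⟩ := unif_kill a I g (gam_torP a)
  obtain ⟨c, hc⟩ := Ideal.exists_pow_inf_eq_pow_smul a (I : Submodule R R)
  have h1 : ∀ (y : R) (hy : y ∈ I), y ∈ a ^ (c + k) → g ⟨y, hy⟩ = 0 := by
    intro y hy hya
    have h2 := hc (c + k) (Nat.le_add_right c k)
    rw [Nat.add_sub_cancel_left] at h2
    have h3 : y ∈ a ^ k • (a ^ c • ⊤ ⊓ (I : Submodule R R)) := by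
      rw [← h2]
      exact ⟨by simpa using hya, hy⟩
    have h4 : y ∈ a ^ k • (I : Submodule R R) :=
      Submodule.smul_mono le_rfl inf_le_right h3
    have : ∃ hy' : y ∈ I, g ⟨y, hy'⟩ = 0 := by
      refine Submodule.smul_induction_on h4 ?_ ?_
      · intro s hs t ht
        refine ⟨I.mul_mem_left s ht, ?_⟩
        rw [← hk s hs ⟨t, ht⟩, ← map_smul]
        rfl
      · rintro s t ⟨hs, hs'⟩ ⟨ht, ht'⟩
        refine ⟨I.add_mem hs ht, ?_⟩
        have : (⟨s + t, I.add_mem hs ht⟩ : I) = ⟨s, hs⟩ + ⟨t, ht⟩ := rfl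
        rw [this, map_add, hs', ht', add_zero]
    exact this.2
  let n := c + k
  let J : Submodule R I := Submodule.comap I.subtype (a ^ n)
  let i : (I ⧸ J) →ₗ[R] (R ⧸ a ^ n) := Submodule.mapQ J (a ^ n) I.subtype le_rfl
  have hi : Function.Injective i := by
    rw [← LinearMap.ker_eq_bot]
    simp [i, J, Submodule.mapQ, Submodule.ker_liftQ, LinearMap.ker_comp]
  let g' : (I ⧸ J) →ₗ[R] X := J.liftQ ((Gam a X).subtype.comp g) (by
    rintro ⟨y, hy⟩ hyJ
    change ((g ⟨y, hy⟩ : Gam a X) : X) = 0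
    rw [h1 y hy hyJ]
    rfl)
  obtain ⟨H, hH⟩ := hX.out i hi g'
  let e := H (Submodule.Quotient.mk 1)
  have he : e ∈ Gam a X := by
    refine ⟨n, fun r hr => ?_⟩
    rw [← map_smul, ← Submodule.Quotient.mk_smul, smul_eq_mul, mul_one,
      (Submodule.Quotient.mk_eq_zero _).2 hr, map_zero]
  refine ⟨LinearMap.toSpanSingleton R _ ⟨e, he⟩, fun x hx => Subtype.ext ?_⟩
  change x • e = ((g ⟨x, hx⟩ : Gam a X) : X)
  have := hH (Submodule.Quotient.mk ⟨x, hx⟩)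
  rw [← map_smul, ← Submodule.Quotient.mk_smul, smul_eq_mul, mul_one]
  exact this

theorem quot_injective [IsNoetherianRing R] (a : Ideal R) (hX : Module.Injective R X) :
    Module.Injective R (X ⧸ Gam a X) := by
  obtain ⟨r, hr⟩ := (gam_injective a hX).out (Gam a X).subtype (Submodule.subtype_injective _)
    LinearMap.id
  let s : (X ⧸ Gam a X) →ₗ[R] X := (Gam a X).liftQ (LinearMap.id - (Gam a X).subtype.comp r) (by
    intro x hx
    have := congrArg Subtype.val (hr ⟨x, hx⟩)
    change x - ((r x : Gam a X) : X) = 0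
    rw [sub_eq_zero]
    exact this.symm)
  have hs : ∀ q, (Gam a X).mkQ (s q) = q := by
    intro q
    obtain ⟨x, rfl⟩ := Submodule.mkQ_surjective _ q
    change (Gam a X).mkQ (x - ((r x : Gam a X) : X)) = _
    rw [map_sub, sub_eq_self]
    simp
  constructor
  intro A B _ _ _ _ f hf g
  obtain ⟨h, hh⟩ := hX.out f hf (s.comp g)
  exact ⟨(Gam a X).mkQ.comp h, fun x => by
    rw [LinearMap.comp_apply, hh, LinearMap.comp_apply, hs]⟩

theorem ext_tf_zero {a b : Ideal R} (hX : TF a X) (n : ℕ) (hb : a ^ n ≤ b) :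
    Subsingleton (E R (R ⧸ b) X 0) := by
  have H : ∀ f : ModuleCat.of R (R ⧸ b) ⟶ ModuleCat.of R X, f = 0 := by
    intro f
    ext
    refine hX n _ (fun r hr => ?_)
    change r • f.hom (Submodule.Quotient.mk (1 : R) : R ⧸ b) = 0
    rw [← map_smul, ← Submodule.Quotient.mk_smul, smul_eq_mul, mul_one,
        (Submodule.Quotient.mk_eq_zero _).2 (hb hr), map_zero]
  refine ⟨fun x y => ?_⟩
  rw [(Abelian.Ext.linearEquiv₀ (R := R)).injective.eq_iff.symm]
  exact (H _).trans (H _).symm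

theorem ext_inj_zero (N : Type u) [AddCommGroup N] [Module R N] (hX : Module.Injective R X)
    (i : ℕ) : Subsingleton (E R N X (i + 1)) := by
  have : Injective (ModuleCat.of R X) := Module.injective_object_of_injective_module R X
  exact ⟨fun x y => by rw [Abelian.Ext.eq_zero_of_injective x, Abelian.Ext.eq_zero_of_injective y]⟩

variable (X) in
theorem exists_inj : ∃ (Q : Type u) (_ : AddCommGroup Q) (_ : Module R Q) (f : X →ₗ[R] Q),
    Module.Injective R Q ∧ Function.Injective f := by
  let Q : ModuleCat.{u} R := Injective.under (ModuleCat.of R X)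
  have hQ : Injective (ModuleCat.of R Q) :=
    inferInstanceAs (Injective (Injective.under (ModuleCat.of R X)))
  refine ⟨Q, inferInstance, inferInstance, (Injective.ι (ModuleCat.of R X)).hom, ?_, ?_⟩
  · exact Module.injective_module_of_injective_object R Q
  · exact (ModuleCat.mono_iff_injective _).1 inferInstance

/-- Torsion module embeds in a torsion injective. -/
theorem exists_inj_torP [IsNoetherianRing R] (a : Ideal R) (h : TorP a X) :
    ∃ (Q : Type u) (_ : AddCommGroup Q) (_ : Module R Q) (f : X →ₗ[R] Q),
    Module.Injective R Q ∧ Function.Injective f ∧ TorP a Q := by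
  obtain ⟨Q, _, _, f, hQ, hf⟩ := exists_inj (R := R) X
  refine ⟨Gam a Q, inferInstance, inferInstance, f.codRestrict _ (fun x => ?_),
    gam_injective a hQ, ?_, gam_torP a⟩
  · obtain ⟨n, hn⟩ := h x
    exact ⟨n, fun r hr => by rw [← map_smul, hn r hr, map_zero]⟩
  · intro x y hxy
    exact hf (congrArg Subtype.val hxy)

/-- Torsion-free module embeds in a torsion-free injective. -/
theorem exists_inj_tf [IsNoetherianRing R] (a : Ideal R) (h : TF a X) :
    ∃ (Q : Type u) (_ : AddCommGroup Q) (_ : Module R Q) (f : X →ₗ[R] Q),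
    Module.Injective R Q ∧ Function.Injective f ∧ TF a Q := by
  obtain ⟨Q, _, _, f, hQ, hf⟩ := exists_inj (R := R) X
  refine ⟨Q ⧸ Gam a Q, inferInstance, inferInstance, (Gam a Q).mkQ.comp f,
    quot_injective a hQ, ?_, tf_quot a⟩
  rw [← LinearMap.ker_eq_bot, LinearMap.ker_eq_bot']
  intro x hx
  rw [LinearMap.comp_apply, Submodule.mkQ_apply, Submodule.Quotient.mk_eq_zero] at hx
  obtain ⟨n, hn⟩ := hx
  refine h n x (fun r hr => hf ?_)
  rw [map_smul, hn r hr, map_zero]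

end Gamma

end S14

namespace S14

section Colim

variable {R}
variable {F F' : ℕ → Type u} [∀ n, AddCommGroup (F n)] [∀ n, Module R (F n)]
  [∀ n, AddCommGroup (F' n)] [∀ n, Module R (F' n)]
variable {L L' : Type u} [AddCommGroup L'] [Module R L'] [AddCommGroup L] [Module R L]

/-- L is a direct limit of the system. -/
def IsCol (f : ∀ i j, i ≤ j → F i →ₗ[R] F j) (L : Type u) [AddCommGroup L] [Module R L] : Prop :=
  ∃ ψ : ∀ n, F n →ₗ[R] L, (∀ i j h x, ψ j (f i j h x) = ψ i x) ∧ (∀ y, ∃ n x, ψ n x = y) ∧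
    ∀ n x, ψ n x = 0 → ∃ m h, f n m h x = 0

theorem IsCol.dl {f : ∀ i j, i ≤ j → F i →ₗ[R] F j} (h : IsCol f L) :
    Nonempty (Module.DirectLimit F f ≃ₗ[R] L) := by
  obtain ⟨ψ, h1, h2, h3⟩ := h
  refine ⟨LinearEquiv.ofBijective (Module.DirectLimit.lift R ℕ F f ψ h1) ⟨?_, ?_⟩⟩
  · rw [← LinearMap.ker_eq_bot, LinearMap.ker_eq_bot']
    intro z hz
    obtain ⟨n, x, rfl⟩ := Module.DirectLimit.exists_of z
    rw [Module.DirectLimit.lift_of] at hz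
    obtain ⟨m, hm, h⟩ := h3 n x hz
    rw [← Module.DirectLimit.of_f (hij := hm), h, map_zero]
  · intro y
    obtain ⟨n, x, rfl⟩ := h2 y
    exact ⟨Module.DirectLimit.of R ℕ F f n x, Module.DirectLimit.lift_of _ _ _⟩

theorem IsCol.uniq {f : ∀ i j, i ≤ j → F i →ₗ[R] F j} (h : IsCol f L) (h' : IsCol f L') :
    Nonempty (L ≃ₗ[R] L') := by
  obtain ⟨e⟩ := h.dl
  obtain ⟨e'⟩ := h'.dl
  exact ⟨e.symm.trans e'⟩

theorem dl_isCol (f : ∀ i j, i ≤ j → F i →ₗ[R] F j) [DirectedSystem F (f · · ·)] :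
    IsCol f (Module.DirectLimit F f) := by
  refine ⟨Module.DirectLimit.of R ℕ F f, fun i j h x => Module.DirectLimit.of_f, fun y => ?_,
    fun n x hx => ?_⟩
  · exact Module.DirectLimit.exists_of y
  · exact Module.DirectLimit.of.zero_exact hx

theorem IsCol.pull {f : ∀ i j, i ≤ j → F i →ₗ[R] F j} {f' : ∀ i j, i ≤ j → F' i →ₗ[R] F' j}
    (h : IsCol f' L) (φ : ∀ n, F n →ₗ[R] F' n)
    (hφ : ∀ i j h x, φ j (f i j h x) = f' i j h (φ i x))
    (hi : ∀ n x, φ n x = 0 → ∃ m h, f n m h x = 0)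
    (ht : ∀ i j k (h : i ≤ j) (h' : j ≤ k) x, f j k h' (f i j h x) = f i k (h.trans h') x)
    (hs : ∀ n y, ∃ m h x, φ m x = f' n m h y) : IsCol f L := by
  obtain ⟨ψ, h1, h2, h3⟩ := h
  refine ⟨fun n => (ψ n).comp (φ n), fun i j h x => ?_, fun y => ?_, fun n x hx => ?_⟩
  · rw [LinearMap.comp_apply, hφ, h1]; rfl
  · obtain ⟨n, z, rfl⟩ := h2 y
    obtain ⟨m, h, x, hx⟩ := hs n z
    exact ⟨m, x, by rw [LinearMap.comp_apply, hx, h1]⟩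
  · obtain ⟨m, h, hm⟩ := h3 n _ hx
    rw [← hφ] at hm
    obtain ⟨k, h', hk⟩ := hi m _ hm
    exact ⟨k, h.trans h', by rw [← hk, ht]⟩

end Colim

section Trans

variable {R}
variable {X Y Z : Type u} [AddCommGroup X] [Module R X] [AddCommGroup Y] [Module R Y]
  [AddCommGroup Z] [Module R Z]

/-- projection between quotients by powers. -/
def pr (a : Ideal R) (n m : ℕ) (h : n ≤ m) : (R ⧸ a ^ m) →ₗ[R] (R ⧸ a ^ n) :=
  Submodule.mapQ (a ^ m) (a ^ n) LinearMap.id (Ideal.pow_le_pow_right h)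

variable (X) in
/-- transition maps on Ext. -/
noncomputable def tr (a : Ideal R) (i n m : ℕ) (h : n ≤ m) :
    E R (R ⧸ a ^ n) X i →ₗ[R] E R (R ⧸ a ^ m) X i :=
  (Abelian.Ext.mk₀ (ModuleCat.ofHom (pr a n m h))).precompOfLinear R _ (zero_add i)

theorem tr_apply (a : Ideal R) (i n m : ℕ) (h : n ≤ m) (e : E R (R ⧸ a ^ n) X i) :
    tr X a i n m h e = (Abelian.Ext.mk₀ (ModuleCat.ofHom (pr a n m h))).comp e (zero_add i) := rfl

theorem tr_trans (a : Ideal R) (i n m k : ℕ) (h : n ≤ m) (h' : m ≤ k)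
    (e : E R (R ⧸ a ^ n) X i) : tr X a i m k h' (tr X a i n m h e) = tr X a i n k (h.trans h') e := by
  have : ModuleCat.ofHom (pr a m k h') ≫ ModuleCat.ofHom (pr a n m h) =
      ModuleCat.ofHom (pr a n k (h.trans h')) := by
    rw [← ModuleCat.ofHom_comp]
    congr 1
    ext
    rfl
  rw [tr_apply, tr_apply, tr_apply, Abelian.Ext.mk₀_comp_mk₀_assoc, this]

instance (a : Ideal R) (i : ℕ) :
    DirectedSystem (fun n => E R (R ⧸ a ^ n) X i) (tr X a i · · ·) where
  map_self n x := by
    have : ModuleCat.ofHom (pr a n n le_rfl) = 𝟙 _ := by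
      ext
      rfl
    rw [tr_apply, this, Abelian.Ext.mk₀_id_comp]
  map_map k j i h1 h2 x := tr_trans _ _ _ _ _ _ _ _

theorem tr_comp (a : Ideal R) (i n m : ℕ) (h : n ≤ m) {j k : ℕ}
    (c : E R (R ⧸ a ^ n) X i) (d : E R X Y j) (hk : i + j = k) :
    tr Y a k n m h (c.comp d hk) = (tr X a i n m h c).comp d hk := by
  rw [tr_apply, tr_apply, Abelian.Ext.comp_assoc]
  lia

theorem exists_hom (x : E R X Y 0) : ∃ f : X →ₗ[R] Y, x = Abelian.Ext.mk₀ (ModuleCat.ofHom f) :=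
  ⟨(Abelian.Ext.homEquiv₀ x).hom, (Abelian.Ext.homEquiv₀.symm_apply_apply x).symm⟩

theorem indZero [IsNoetherianRing R] (a : Ideal R) (j : ℕ) : ∀ (X : Type u) [AddCommGroup X]
    [Module R X], TorP a X → ∀ (n : ℕ) (e : E R (R ⧸ a ^ n) X (j + 1)),
    ∃ m h, tr X a (j + 1) n m h e = 0 := by
  induction j with
  | zero =>
    intro X _ _ hX n e
    obtain ⟨Q, _, _, f, hQ, hf, hT⟩ := exists_inj_torP a hX
    let g := (LinearMap.range f).mkQ
    have hfg : Function.Exact f g := LinearMap.exact_map_mkQ_range f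
    have se := sc_shortExact f g hfg hf (Submodule.mkQ_surjective _)
    have := ext_inj_zero (R ⧸ a ^ n) hQ 0
    obtain ⟨c, rfl⟩ := Abelian.Ext.covariant_sequence_exact₁ _ se e (Subsingleton.elim _ _)
      (zero_add 1)
    obtain ⟨c, rfl⟩ := exists_hom c
    obtain ⟨q, hq⟩ := Submodule.mkQ_surjective _ (c (Submodule.Quotient.mk 1))
    obtain ⟨m, hm⟩ := hT q
    have hm' : ∀ r ∈ a ^ (n + m), r • q = 0 :=
      fun r hr => hm r (Ideal.pow_le_pow_right (Nat.le_add_left m n) hr)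
    let c' : (R ⧸ a ^ (n + m)) →ₗ[R] Q :=
      Submodule.liftQ _ (LinearMap.toSpanSingleton R Q q) hm'
    have hc : ModuleCat.ofHom (pr a n (n + m) (Nat.le_add_right n m)) ≫ ModuleCat.ofHom c =
        ModuleCat.ofHom c' ≫ ModuleCat.ofHom g := by
      rw [← ModuleCat.ofHom_comp, ← ModuleCat.ofHom_comp]
      congr 1
      ext
      change c (Submodule.Quotient.mk 1) = g ((1 : R) • q)
      rw [one_smul, hq]
    refine ⟨n + m, Nat.le_add_right n m, ?_⟩
    refine (tr_comp a 0 n (n + m) _ _ se.extClass _).trans ?_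
    rw [tr_apply, Abelian.Ext.mk₀_comp_mk₀, hc, ← Abelian.Ext.mk₀_comp_mk₀,
      Abelian.Ext.comp_assoc_of_second_deg_zero]
    rw [se.comp_extClass]
    simp
  | succ j ih =>
    intro X _ _ hX n e
    obtain ⟨Q, _, _, f, hQ, hf, hT⟩ := exists_inj_torP a hX
    let g := (LinearMap.range f).mkQ
    have hfg : Function.Exact f g := LinearMap.exact_map_mkQ_range f
    have se := sc_shortExact f g hfg hf (Submodule.mkQ_surjective _)
    have := ext_inj_zero (R ⧸ a ^ n) hQ (j + 1)
    obtain ⟨c, rfl⟩ := Abelian.Ext.covariant_sequence_exact₁ _ se e (Subsingleton.elim _ _) rfl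
    obtain ⟨m, h, hm⟩ := ih _ (hT.of_surj g (Submodule.mkQ_surjective _)) n c
    refine ⟨m, h, ?_⟩
    refine (tr_comp a (j + 1) n m _ _ se.extClass _).trans ?_
    exact (congrArg (fun t => Abelian.Ext.comp t se.extClass rfl) hm).trans
      (Abelian.Ext.zero_comp _ _ _ _ _)

theorem shiftA [IsNoetherianRing R] (a : Ideal R) (i : ℕ) {L : Type u} [AddCommGroup L]
    [Module R L] (f : X →ₗ[R] Y) (g : Y →ₗ[R] Z) (hfg : Function.Exact f g)
    (hf : Function.Injective f) (hg : Function.Surjective g) (hX : TorP a X)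
    (h : IsCol (tr Z a (i + 1)) L) : IsCol (tr Y a (i + 1)) L := by
  have se := sc_shortExact f g hfg hf hg
  refine h.pull (fun n => (Abelian.Ext.mk₀ (ModuleCat.ofHom g)).postcompOfLinear R _
    (add_zero (i + 1))) ?_ ?_ ?_ ?_
  · intro n m h x
    exact (tr_comp a (i + 1) n m h x (Abelian.Ext.mk₀ (ModuleCat.ofHom g)) (add_zero (i + 1))).symm
  · intro n x hx
    obtain ⟨y, rfl⟩ := Abelian.Ext.covariant_sequence_exact₂ _ se x hx
    obtain ⟨m, h, hm⟩ := indZero a i _ hX n y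
    refine ⟨m, h, ?_⟩
    refine (tr_comp a _ n m _ _ (Abelian.Ext.mk₀ (ModuleCat.ofHom f)) _).trans ?_
    exact (congrArg (fun t => Abelian.Ext.comp t _ rfl) hm).trans
      (Abelian.Ext.zero_comp _ _ _ _ _)
  · intro i j k h h' x
    exact tr_trans _ _ _ _ _ _ _ _
  · intro n z
    obtain ⟨m, h, hm⟩ := indZero a (i + 1) _ hX n (z.comp se.extClass rfl)
    refine ⟨m, h, ?_⟩
    refine Abelian.Ext.covariant_sequence_exact₃ _ se _ rfl ?_
    rw [← hm]
    exact (tr_comp a _ n m _ _ _ _).symm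

theorem shiftB (a : Ideal R) (i : ℕ) {L : Type u} [AddCommGroup L]
    [Module R L] (f : X →ₗ[R] Y) (g : Y →ₗ[R] Z) (hfg : Function.Exact f g)
    (hf : Function.Injective f) (hg : Function.Surjective g)
    (hY : ∀ n j, Subsingleton (E R (R ⧸ a ^ n) Y j)) (h : IsCol (tr X a (i + 1)) L) :
    IsCol (tr Z a i) L := by
  have se := sc_shortExact f g hfg hf hg
  refine h.pull (fun n => se.extClass.postcompOfLinear R _ rfl) ?_ ?_ ?_ ?_
  · intro n m h x
    exact (tr_comp a _ n m h x _ rfl).symm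
  · intro n x hx
    have := hY n i
    obtain ⟨y, rfl⟩ := Abelian.Ext.covariant_sequence_exact₃ _ se x rfl hx
    refine ⟨n, le_rfl, ?_⟩
    rw [Subsingleton.elim y (0 : E R (R ⧸ a ^ n) Y i), Abelian.Ext.zero_comp, map_zero]
  · intro i j k h h' x
    exact tr_trans _ _ _ _ _ _ _ _
  · intro n z
    have := hY n (i + 1)
    refine ⟨n, le_rfl, ?_⟩
    exact Abelian.Ext.covariant_sequence_exact₁ _ se _ (Subsingleton.elim _ _) rfl

theorem gam_isCol (a : Ideal R) : IsCol (tr X a 0) (Gam a X) := by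
  let ev (n : ℕ) : E R (R ⧸ a ^ n) X 0 →ₗ[R] X :=
    (LinearMap.applyₗ (Submodule.Quotient.mk (1 : R) : R ⧸ a ^ n)).comp
      ((Abelian.Ext.linearEquiv₀ (R := R)).trans
      (ModuleCat.homLinearEquiv (S := R))).toLinearMap
  have hev : ∀ n (f : (R ⧸ a ^ n) →ₗ[R] X),
      ev n (Abelian.Ext.mk₀ (ModuleCat.ofHom f)) = f (Submodule.Quotient.mk 1) := by
    intro n f
    have : Abelian.Ext.linearEquiv₀ (R := R) (Abelian.Ext.mk₀ (ModuleCat.ofHom f)) =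
      ModuleCat.ofHom f := Abelian.Ext.linearEquiv₀.apply_symm_apply _
    simp only [ev, LinearMap.comp_apply, LinearEquiv.coe_coe, LinearEquiv.trans_apply, this]
    rfl
  have h1 : ∀ n x, ev n x ∈ Gam a X := by
    intro n x
    obtain ⟨f, rfl⟩ := exists_hom x
    refine ⟨n, fun r hr => ?_⟩
    rw [hev, ← map_smul, ← Submodule.Quotient.mk_smul, smul_eq_mul, mul_one,
        (Submodule.Quotient.mk_eq_zero _).2 hr, map_zero]
  refine ⟨fun n => (ev n).codRestrict _ (h1 n), ?_, ?_, ?_⟩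
  · intro n m h x
    obtain ⟨f, rfl⟩ := exists_hom x
    apply Subtype.ext
    change ev m _ = ev n _
    rw [tr_apply, Abelian.Ext.mk₀_comp_mk₀, ← ModuleCat.ofHom_comp, hev, hev]
    rfl
  · rintro ⟨y, n, hn⟩
    refine ⟨n, Abelian.Ext.mk₀ (ModuleCat.ofHom
      (Submodule.liftQ _ (LinearMap.toSpanSingleton R X y) hn)), Subtype.ext ?_⟩
    change ev n _ = y
    rw [hev]
    exact one_smul R y
  · intro n x hx
    obtain ⟨f, rfl⟩ := exists_hom x
    have hx' : ev n _ = 0 := congrArg Subtype.val hx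
    rw [hev] at hx'
    have : f = 0 := by
      ext
      exact hx'
    refine ⟨n, le_rfl, ?_⟩
    rw [this, ModuleCat.ofHom_zero, Abelian.Ext.mk₀_zero, map_zero]

theorem gam_wl [IsNoetherianRing R] {a : Ideal R} {V S} (G : Good a V S)
    (hX : ∀ j, IsWeaklyLaskerian R (E R (R ⧸ a) X j)) (j : ℕ) :
    IsWeaklyLaskerian R (E R (R ⧸ a) (Gam a X) j) := by
  have := ext_tf_zero (tf_quot (X := X) a) 1 (pow_one a).le
  refine key G _ (Gam a X) rfl (gam_torP a).tor ?_ ?_ j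
  · exact covL0 _ (Gam a X).subtype (Submodule.subtype_injective _) (hX 0)
  · exact covL _ (Gam a X).subtype (Gam a X).mkQ (LinearMap.exact_subtype_mkQ _)
      (Submodule.subtype_injective _) (Submodule.mkQ_surjective _) wl_of_subsingleton (hX 1)

theorem main_ind [IsNoetherianRing R] {a : Ideal R} {V S} (G : Good a V S) (i : ℕ) :
    ∀ (X : Type u) [AddCommGroup X] [Module R X]
    (_ : ∀ j, IsWeaklyLaskerian R (E R (R ⧸ a) X j))
    (L : Type u) [AddCommGroup L] [Module R L] (_ : IsCol (tr X a i) L) (j : ℕ),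
    IsWeaklyLaskerian R (E R (R ⧸ a) L j) := by
  induction i with
  | zero =>
    intro X _ _ hX L _ _ hL j
    obtain ⟨e⟩ := (gam_isCol a).uniq hL
    exact wl_congr_right e (gam_wl G hX j)
  | succ i ih =>
    intro X _ _ hX L _ _ hL j
    have hM : ∀ j, IsWeaklyLaskerian R (E R (R ⧸ a) (X ⧸ Gam a X) j) := fun j =>
      covR _ (Gam a X).subtype (Gam a X).mkQ (LinearMap.exact_subtype_mkQ _)
        (Submodule.subtype_injective _) (Submodule.mkQ_surjective _) (hX j) (gam_wl G hX (j + 1))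
    have hD := dl_isCol (tr (X ⧸ Gam a X) a (i + 1))
    obtain ⟨e⟩ := (shiftA a i (Gam a X).subtype (Gam a X).mkQ (LinearMap.exact_subtype_mkQ _)
        (Submodule.subtype_injective _) (Submodule.mkQ_surjective _) (gam_torP a) hD).uniq hL
    refine wl_congr_right e ?_
    obtain ⟨Q, _, _, f, hQ, hf, hT⟩ := exists_inj_tf a (tf_quot (X := X) a)
    have hQ0 : ∀ n b, a ^ n ≤ b → ∀ j, Subsingleton (E R (R ⧸ b) Q j) := by
      intro n b hb j
      cases j with
      | zero => exact ext_tf_zero hT n hb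
      | succ j => exact ext_inj_zero _ hQ j
    let g := (LinearMap.range f).mkQ
    have hfg : Function.Exact f g := LinearMap.exact_map_mkQ_range f
    have hg : Function.Surjective g := Submodule.mkQ_surjective _
    refine ih (Q ⧸ LinearMap.range f) (fun j => ?_) _
      (shiftB a i f g hfg hf hg (fun n => hQ0 n _ le_rfl) hD) j
    have := hQ0 1 a (pow_one a).le j
    exact covR _ f g hfg hf hg wl_of_subsingleton (hM (j + 1))

theorem isCol_torP {a : Ideal R} {i : ℕ} {L : Type u} [AddCommGroup L]
    [Module R L] (h : IsCol (tr X a i) L) : TorP a L := by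
  obtain ⟨ψ, h1, h2, h3⟩ := h
  intro y
  obtain ⟨n, x, rfl⟩ := h2 y
  exact ⟨n, fun r hr => by rw [← map_smul, ext_smul_zero _ r hr, map_zero]⟩

theorem torP_support {a : Ideal R} (h : TorP a X) :
    Module.support R X ⊆ PrimeSpectrum.zeroLocus (a : Set R) := by
  intro p hp
  rw [Module.mem_support_iff_exists_annihilator] at hp
  obtain ⟨m, hm⟩ := hp
  obtain ⟨n, hn⟩ := h m
  rw [PrimeSpectrum.mem_zeroLocus]
  intro r hr
  refine p.2.mem_of_pow_mem n (hm ?_)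
  rw [Submodule.mem_annihilator_span_singleton]
  exact hn _ (Ideal.pow_mem_pow hr n)

end Trans

end S14

namespace S14

section Final

open Limits Opposite

variable {R}

theorem pres : PreservesColimitsOfShape (ℕᵒᵖ)ᵒᵖ (forget (ModuleCat.{u} R)) := by
  have h1 : PreservesFilteredColimitsOfSize.{0, 0} (forget (ModuleCat.{u} R)) :=
    preservesFilteredColimitsOfSize_shrink.{0, u, 0, u} _
  infer_instance

theorem lc_isCol (a : Ideal R) (i : ℕ) (M : ModuleCat.{u} R) :
    IsCol (tr M a i) ((localCohomology a i).obj M) := by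
  have := pres (R := R)
  have := localCohomology.hasColimitDiagram.{u, 0} (localCohomology.idealPowersDiagram a) i
  let D := localCohomology.diagram (localCohomology.idealPowersDiagram a) i
  let ev := (evaluation (ModuleCat.{u} R) (ModuleCat.{u} R)).obj M
  have hc : IsColimit (ev.mapCocone (colimit.cocone D)) :=
    isColimitOfPreserves ev (colimit.isColimit D)
  let br (n : ℕ) : (D.obj (op (op n))).obj M ≃ₗ[R] E R (R ⧸ a ^ n) M i :=
    bridge (ModuleCat.of R (R ⧸ a ^ n)) M i
  let ι (n : ℕ) : (D.obj (op (op n))).obj M →ₗ[R] ((localCohomology a i).obj M) :=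
    ((ev.mapCocone (colimit.cocone D)).ι.app (op (op n))).hom
  have hbr : ∀ n m (h : n ≤ m) (z : (D.obj (op (op n))).obj M),
      br m (((D.map (homOfLE h).op.op).app M).hom z) = tr M a i n m h (br n z) := by
    intro n m h z
    exact bridge_nat M i (ModuleCat.ofHom (pr a n m h)) z
  have hι : ∀ n m (h : n ≤ m) (z : (D.obj (op (op n))).obj M),
      ι m (((D.map (homOfLE h).op.op).app M).hom z) = ι n z := by
    intro n m h z
    have := (ev.mapCocone (colimit.cocone D)).w (homOfLE h).op.op
    exact congrArg (fun t => t.hom z) this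
  refine ⟨fun n => (ι n).comp (br n).symm.toLinearMap, ?_, ?_, ?_⟩
  · intro n m h x
    obtain ⟨z, rfl⟩ := (br n).surjective x
    simp only [LinearMap.comp_apply, LinearEquiv.coe_coe]
    rw [← hbr, LinearEquiv.symm_apply_apply, LinearEquiv.symm_apply_apply, hι]
  · intro y
    obtain ⟨j, z, hz⟩ := Concrete.isColimit_exists_rep (D ⋙ ev) hc y
    refine ⟨j.unop.unop, br _ z, ?_⟩
    simp only [LinearMap.comp_apply, LinearEquiv.coe_coe, LinearEquiv.symm_apply_apply]
    exact hz
  · intro n x hx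
    obtain ⟨z, rfl⟩ := (br n).surjective x
    simp only [LinearMap.comp_apply, LinearEquiv.coe_coe, LinearEquiv.symm_apply_apply] at hx
    obtain ⟨k, f, g, hfg⟩ := Concrete.isColimit_exists_of_rep_eq (D ⋙ ev) hc
      (i := op (op n)) (j := op (op n)) z 0 (hx.trans (map_zero (ι n)).symm)
    have hle : n ≤ k.unop.unop := leOfHom f.unop.unop
    refine ⟨k.unop.unop, hle, ?_⟩
    rw [← hbr]
    have : ((D.map (homOfLE hle).op.op).app M).hom z = 0 :=
      hfg.trans (map_zero ((D ⋙ ev).map g).hom)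
    rw [this, map_zero]

end Final

theorem final [IsNoetherianRing R] (𝔞 𝔟 : Ideal R) (hrad : 𝔟 ≤ 𝔞.radical)
    (hdim : ringKrullDim (R ⧸ 𝔞) = 1) (M : ModuleCat.{u} R) (h : IsWeaklyCofinite R 𝔟 M) :
    ∀ i : ℕ, IsWeaklyCofinite R 𝔞 ((localCohomology 𝔞 i).obj M) := by
  intro i
  obtain ⟨V, S, G⟩ := exists_Good 𝔞 hdim.le
  have hb : ∀ j, IsWeaklyLaskerian R (E R (R ⧸ 𝔟) M j) :=
    fun j => wl_of_equiv (bridge (ModuleCat.of R (R ⧸ 𝔟)) M j) (h.2 j)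
  have ha : ∀ j, IsWeaklyLaskerian R (E R (R ⧸ 𝔞) M j) := by
    intro j
    refine ext_wl_of_support 𝔟 hb j (R ⧸ 𝔞) ?_
    rw [Module.support_eq_zeroLocus, Ideal.annihilator_quotient,
      ← PrimeSpectrum.zeroLocus_radical 𝔞]
    exact PrimeSpectrum.zeroLocus_anti_mono hrad
  have hL := lc_isCol 𝔞 i M
  exact ⟨torP_support (isCol_torP hL), fun j => wl_of_equiv
    (bridge (ModuleCat.of R (R ⧸ 𝔞)) ((localCohomology 𝔞 i).obj M) j).symm
    (main_ind G i M ha _ hL j)⟩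

end S14

theorem stmt14 [IsNoetherianRing R] (𝔞 𝔟 : Ideal R) (hrad : 𝔟 ≤ 𝔞.radical)
    (hdim : ringKrullDim (R ⧸ 𝔞) = 1) (M : ModuleCat.{u} R)
    (h : IsWeaklyCofinite R 𝔟 M) :
    ∀ i : ℕ, IsWeaklyCofinite R 𝔞 ((localCohomology 𝔞 i).obj M) :=
  S14.final R 𝔞 𝔟 hrad hdim M h
end

section
/- Let R be a Noetherian ring and 𝔞 an ideal of R. If f : M → N is an R-module homomorphism between 𝔞-weakly cofinite modules M, N with dim Supp(M) ≤ 1 and dim Supp(N) ≤ 1, then ker f and coker f are 𝔞-weakly cofinite (with support of dimension at most 1). Hence the category of 𝔞-weakly cofinite modules of support dimension ≤ 1 is an Abelian subcategory of the category of R-modules. -/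
open CategoryTheory

universe u

variable (R : Type u) [CommRing R]

section PartA
variable {R}

theorem WL.assFinite {M : Type u} [AddCommGroup M] [Module R M] (h : IsWeaklyLaskerian R M) :
    (associatedPrimes R M).Finite := by
  have := h ⊥
  rwa [LinearEquiv.AssociatedPrimes.eq (Submodule.quotEquivOfEqBot (⊥ : Submodule R M) rfl)] at this

theorem WL.of_surjective {M N : Type u} [AddCommGroup M] [Module R M] [AddCommGroup N] [Module R N]
    (f : M →ₗ[R] N) (hf : Function.Surjective f) (h : IsWeaklyLaskerian R M) :
    IsWeaklyLaskerian R N := by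
  intro K
  have h1 := h (K.comap f)
  have hg : Function.Surjective (K.mkQ ∘ₗ f) := (Submodule.mkQ_surjective K).comp hf
  have e := (Submodule.quotEquivOfEq (K.comap f) (LinearMap.ker (K.mkQ ∘ₗ f))
    (by rw [LinearMap.ker_comp, Submodule.ker_mkQ])).trans
      ((K.mkQ ∘ₗ f).quotKerEquivOfSurjective hg)
  rwa [LinearEquiv.AssociatedPrimes.eq e] at h1

theorem WL.of_injective {M N : Type u} [AddCommGroup M] [Module R M] [AddCommGroup N] [Module R N]
    (f : M →ₗ[R] N) (hf : Function.Injective f) (h : IsWeaklyLaskerian R N) :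
    IsWeaklyLaskerian R M := by
  intro K
  refine (h (K.map f)).subset (associatedPrimes.subset_of_injective
    (f := K.mapQ (K.map f) f (Submodule.le_comap_map f K)) ?_)
  rw [← LinearMap.ker_eq_bot, Submodule.mapQ, Submodule.ker_liftQ_eq_bot]
  rw [LinearMap.ker_comp, Submodule.ker_mkQ, Submodule.comap_map_eq_of_injective hf]

theorem WL.of_equiv {M N : Type u} [AddCommGroup M] [Module R M] [AddCommGroup N] [Module R N]
    (e : M ≃ₗ[R] N) (h : IsWeaklyLaskerian R N) : IsWeaklyLaskerian R M :=
  WL.of_injective e.toLinearMap e.injective h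

theorem WL.of_submodule {B : Type u} [AddCommGroup B] [Module R B] (S : Submodule R B)
    (h1 : IsWeaklyLaskerian R S) (h2 : IsWeaklyLaskerian R (B ⧸ S)) :
    IsWeaklyLaskerian R B := by
  intro K
  let T : Submodule R (B ⧸ K) := S.map K.mkQ
  have hT : IsWeaklyLaskerian R T := by
    refine WL.of_surjective ((K.mkQ ∘ₗ S.subtype).codRestrict T
      (fun s => Submodule.mem_map_of_mem s.2)) ?_ h1
    rintro ⟨_, b, hb, rfl⟩
    exact ⟨⟨b, hb⟩, rfl⟩
  have hQ : IsWeaklyLaskerian R ((B ⧸ K) ⧸ T) := by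
    refine WL.of_surjective (S.mapQ T K.mkQ (Submodule.le_comap_map _ _)) ?_ h2
    intro y
    obtain ⟨y, rfl⟩ := T.mkQ_surjective y
    obtain ⟨y, rfl⟩ := K.mkQ_surjective y
    exact ⟨S.mkQ y, rfl⟩
  refine ((WL.assFinite hT).union (WL.assFinite hQ)).subset
    (associatedPrimes.subset_union_of_exact (f := T.subtype) (g := T.mkQ)
      T.injective_subtype (LinearMap.exact_subtype_mkQ T))

theorem WL.of_exact {A B C : Type u} [AddCommGroup A] [Module R A] [AddCommGroup B] [Module R B]
    [AddCommGroup C] [Module R C] (f : A →ₗ[R] B) (g : B →ₗ[R] C)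
    (hfg : ∀ b, g b = 0 → ∃ a, f a = b)
    (hA : IsWeaklyLaskerian R A) (hC : IsWeaklyLaskerian R C) : IsWeaklyLaskerian R B := by
  refine WL.of_submodule (LinearMap.ker g) ?_ ?_
  · refine WL.of_injective (Submodule.inclusion (p := LinearMap.ker g) (p' := LinearMap.range f) ?_)
      (Submodule.inclusion_injective _) ?_
    · intro b hb
      exact hfg b hb
    · exact WL.of_surjective f.rangeRestrict f.surjective_rangeRestrict hA
  · exact WL.of_injective ((LinearMap.ker g).liftQ g le_rfl)
      (by rw [← LinearMap.ker_eq_bot]; exact Submodule.ker_liftQ_eq_bot _ _ _ le_rfl) hC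

theorem WL.of_subsingleton {M : Type u} [AddCommGroup M] [Module R M] [Subsingleton M] :
    IsWeaklyLaskerian R M := by
  intro K
  rw [associatedPrimes.eq_empty_of_subsingleton]
  exact Set.finite_empty

theorem WL.pi {ι : Type} [Finite ι] {M : Type u} [AddCommGroup M] [Module R M]
    (h : IsWeaklyLaskerian R M) : IsWeaklyLaskerian R (ι → M) := by
  have key : ∀ n : ℕ, IsWeaklyLaskerian R (Fin n → M) := by
    intro n
    induction n with
    | zero => exact WL.of_subsingleton
    | succ n ih =>
      refine WL.of_exact (A := M) (C := Fin n → M) (LinearMap.single R (fun _ : Fin (n+1) => M) 0)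
        (LinearMap.funLeft R M Fin.succ) ?_ h ih
      intro b hb
      refine ⟨b 0, ?_⟩
      ext i
      refine Fin.cases ?_ (fun j => ?_) i
      · simp
      · have := congrFun hb j
        simp only [LinearMap.funLeft_apply, Pi.zero_apply] at this
        simp [this]
  obtain ⟨n, ⟨e⟩⟩ := Finite.exists_equiv_fin ι
  exact WL.of_equiv (LinearEquiv.funCongrLeft R M e.symm) (key n)

variable [IsNoetherianRing R]

theorem ass_mem_iff {M : Type u} [AddCommGroup M] [Module R M] {p : Ideal R} :
    p ∈ associatedPrimes R M ↔ p.IsPrime ∧ ∃ x : M, ∀ r, r ∈ p ↔ r • x = 0 := by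
  rw [AssociatedPrimes.mem_iff, isAssociatedPrime_iff]
  refine and_congr_right fun _ => exists_congr fun x => ?_
  rw [Ideal.ext_iff]
  simp [Submodule.mem_colon_singleton]

theorem ass_mem_support {M : Type u} [AddCommGroup M] [Module R M] {p : Ideal R}
    (hp : p ∈ associatedPrimes R M) : ∃ q ∈ Module.support R M, q.asIdeal = p := by
  obtain ⟨h1, x, hx⟩ := ass_mem_iff.1 hp
  refine ⟨⟨p, h1⟩, ?_, rfl⟩
  rw [Module.mem_support_iff']
  exact ⟨x, fun r hr h => hr ((hx r).2 h)⟩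

theorem WL.of_support_finite {M : Type u} [AddCommGroup M] [Module R M]
    (h : (Module.support R M).Finite) : IsWeaklyLaskerian R M := by
  intro K
  refine (h.image PrimeSpectrum.asIdeal).subset ?_
  intro p hp
  obtain ⟨q, hq, rfl⟩ := ass_mem_support hp
  exact ⟨q, Module.support_subset_of_surjective K.mkQ K.mkQ_surjective hq, rfl⟩

theorem exists_ass_le_of_mem_support {M : Type u} [AddCommGroup M] [Module R M]
    {p : PrimeSpectrum R} (hp : p ∈ Module.support R M) :
    ∃ q ∈ associatedPrimes R M, q ≤ p.asIdeal := by
  rw [Module.mem_support_iff_exists_annihilator] at hp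
  obtain ⟨m, hm⟩ := hp
  obtain ⟨q, hq, hqp⟩ := Ideal.exists_minimalPrimes_le hm
  refine ⟨q, ?_, hqp⟩
  exact associatedPrimes.subset_of_injective (R ∙ m).injective_subtype
    (Module.associatedPrimes.minimalPrimes_annihilator_subset_associatedPrimes R _ hq)

end PartA

section PartB
open Abelian CochainComplex HomComplex
variable {R}

theorem extMk_zero_eq_zero {X Y : ModuleCat.{u} R} (P : ProjectiveResolution X)
    (f : P.complex.X 0 ⟶ Y) (m : ℕ) (hm : 0 + 1 = m)
    (hf : P.complex.d m 0 ≫ f = 0) (h : P.extMk f m hm hf = 0) : f = 0 := by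
  simp only [← P.extEquivCohomologyClass.apply_eq_iff_eq,
    ProjectiveResolution.extEquivCohomologyClass_extMk,
    ProjectiveResolution.extEquivCohomologyClass_zero,
    CohomologyClass.mk_eq_zero_iff] at h
  rw [Cocycle.toSingleMk_mem_coboundaries_iff _ _ _ _ _ (1) (by lia)] at h
  obtain ⟨g, hg⟩ := h
  have hz : P.cochainComplex.d (-(0:ℕ)) 1 = 0 :=
    (P.cochainComplex.isZero_of_isStrictlyLE 0 1 (by lia)).eq_of_tgt _ _
  rw [hz, Limits.zero_comp] at hg
  rw [← cancel_epi (P.cochainComplexXIso (-(0:ℕ)) 0 rfl).hom, ← hg, Limits.comp_zero]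

theorem WL.extModule_iff (i : ℕ) (X Y : ModuleCat.{u} R) :
    IsWeaklyLaskerian R (extModule R i X Y) ↔ IsWeaklyLaskerian R (Abelian.Ext X Y i) := by
  suffices h : Nonempty (extModule R i X Y ≃ₗ[R] Abelian.Ext X Y i) by
    obtain ⟨e⟩ := h
    exact ⟨WL.of_equiv e.symm, WL.of_equiv e⟩
  have P : ProjectiveResolution X := (HasProjectiveResolution.out (Z := X)).some
  let K := P.complex.linearYonedaObj R Y
  obtain ⟨j, hj⟩ : ∃ j, (ComplexShape.up ℕ).prev i = j := ⟨_, rfl⟩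
  let S := K.sc' j i (i + 1)
  have e1 : extModule R i X Y ≃ₗ[R] (LinearMap.ker S.g.hom ⧸ LinearMap.range S.moduleCatToCycles) :=
    (P.isoExt i Y ≪≫ K.homologyIsoSc' j i (i + 1) hj (by simp) ≪≫
      S.moduleCatHomologyIso).toLinearEquiv
  have hg : ∀ f : LinearMap.ker S.g.hom, P.complex.d (i + 1) i ≫ (show P.complex.X i ⟶ Y from f.1) = 0 :=
    fun f => f.2
  let φ : LinearMap.ker S.g.hom →ₗ[R] Abelian.Ext X Y i :=
    { toFun := fun f => P.extMk (show P.complex.X i ⟶ Y from f.1) (i + 1) rfl (hg f)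
      map_add' := fun f g => (P.add_extMk (show P.complex.X i ⟶ Y from f.1)
        (show P.complex.X i ⟶ Y from g.1) (i + 1) rfl (hg f) (hg g)).symm
      map_smul' := fun r f => by
        rw [RingHom.id_apply, Ext.smul_eq_comp_mk₀, P.extMk_comp_mk₀]
        congr 1 }
  have hφs : Function.Surjective φ := by
    intro α
    obtain ⟨f, hf, rfl⟩ := P.extMk_surjective α (i + 1) rfl
    exact ⟨⟨f, hf⟩, rfl⟩
  have hφk : LinearMap.ker φ = LinearMap.range S.moduleCatToCycles := by
    ext ⟨f, hf⟩
    change P.complex.X i ⟶ Y at f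
    change P.extMk f (i + 1) rfl (hg ⟨f, hf⟩) = 0 ↔ _
    rcases i with _ | i
    · constructor
      · intro h
        refine ⟨0, ?_⟩
        rw [map_zero]
        exact Subtype.ext (extMk_zero_eq_zero P f _ _ _ h).symm
      · rintro ⟨g, hg⟩
        have : f = 0 := by
          have h1 : S.f g = f := congrArg Subtype.val hg
          have h2 : S.f = 0 := K.shape _ _ (by simp)
          rw [← h1, h2]; rfl
        subst this
        exact P.extMk_zero _ _
    · have hp : i = j := by simpa using hj
      subst hp
      rw [P.extMk_eq_zero_iff f _ rfl _ i rfl]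
      constructor
      · rintro ⟨g, hg⟩
        exact ⟨g, Subtype.ext hg⟩
      · rintro ⟨g, hg⟩
        exact ⟨g, congrArg Subtype.val hg⟩
  exact ⟨e1.trans ((Submodule.quotEquivOfEq _ _ hφk.symm).trans (φ.quotKerEquivOfSurjective hφs))⟩

end PartB

section PartC
open Abelian
variable {R}

/-- `Ext^i(F, M)` (in the derived category sense) is weakly Laskerian. -/
def EW (F : ModuleCat.{u} R) (M : Type u) [AddCommGroup M] [Module R M] (i : ℕ) : Prop :=
  IsWeaklyLaskerian R (Abelian.Ext F (ModuleCat.of R M) i)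

variable {A B C : Type u} [AddCommGroup A] [Module R A] [AddCommGroup B] [Module R B]
    [AddCommGroup C] [Module R C]

theorem shortExact_mk (f : A →ₗ[R] B) (g : B →ₗ[R] C) (hf : Function.Injective f)
    (hg : Function.Surjective g) (hfg : Function.Exact f g) :
    ∃ h0, (ShortComplex.mk (ModuleCat.ofHom f) (ModuleCat.ofHom g) h0).ShortExact := by
  refine ⟨?_, ?_⟩
  · ext a
    exact hfg.apply_apply_eq_zero a
  · exact ModuleCat.shortComplex_shortExact _ hfg hf hg

theorem EW.mid {F : ModuleCat.{u} R} (f : A →ₗ[R] B) (g : B →ₗ[R] C) (hf : Function.Injective f)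
    (hg : Function.Surjective g) (hfg : Function.Exact f g) {i : ℕ}
    (hA : EW F A i) (hC : EW F C i) : EW F B i := by
  obtain ⟨h0, hS⟩ := shortExact_mk f g hf hg hfg
  exact WL.of_exact ((Ext.mk₀ (ModuleCat.ofHom f)).postcompOfLinear R F (add_zero i))
    ((Ext.mk₀ (ModuleCat.ofHom g)).postcompOfLinear R F (add_zero i))
    (fun b hb => Ext.covariant_sequence_exact₂ F hS b hb) hA hC

theorem EW.right {F : ModuleCat.{u} R} (f : A →ₗ[R] B) (g : B →ₗ[R] C) (hf : Function.Injective f)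
    (hg : Function.Surjective g) (hfg : Function.Exact f g) {i : ℕ}
    (hB : EW F B i) (hA : EW F A (i + 1)) : EW F C i := by
  obtain ⟨h0, hS⟩ := shortExact_mk f g hf hg hfg
  exact WL.of_exact ((Ext.mk₀ (ModuleCat.ofHom g)).postcompOfLinear R F (add_zero i))
    (hS.extClass.postcompOfLinear R F rfl)
    (fun b hb => Ext.covariant_sequence_exact₃ F hS b rfl hb) hB hA

theorem EW.left {F : ModuleCat.{u} R} (f : A →ₗ[R] B) (g : B →ₗ[R] C) (hf : Function.Injective f)
    (hg : Function.Surjective g) (hfg : Function.Exact f g) {i : ℕ}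
    (hC : EW F C i) (hB : EW F B (i + 1)) : EW F A (i + 1) := by
  obtain ⟨h0, hS⟩ := shortExact_mk f g hf hg hfg
  exact WL.of_exact (hS.extClass.postcompOfLinear R F rfl)
    ((Ext.mk₀ (ModuleCat.ofHom f)).postcompOfLinear R F (add_zero (i + 1)))
    (fun b hb => Ext.covariant_sequence_exact₁ F hS b hb rfl) hC hB

theorem ext_zero_injective {F : ModuleCat.{u} R} (f : A →ₗ[R] B) (hf : Function.Injective f) :
    Function.Injective ((Ext.mk₀ (ModuleCat.ofHom f)).postcompOfLinear R F (add_zero 0)) := by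
  have : Mono (ModuleCat.ofHom f) := (ModuleCat.mono_iff_injective _).2 hf
  exact Ext.postcomp_mk₀_injective_of_mono F (ModuleCat.ofHom f)

theorem EW.zero_inj {F : ModuleCat.{u} R} (f : A →ₗ[R] B) (hf : Function.Injective f)
    (hB : EW F B 0) : EW F A 0 :=
  WL.of_injective _ (ext_zero_injective f hf) hB

theorem EW.of_WL [IsNoetherianRing R] (F : ModuleCat.{u} R) [Module.Finite R F] {W : Type u}
    [AddCommGroup W] [Module R W] (hW : IsWeaklyLaskerian R W) (i : ℕ) : EW F W i := by
  induction i generalizing F with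
  | zero =>
    obtain ⟨n, f, hf⟩ := Module.Finite.exists_fin' R F
    refine WL.of_equiv (Ext.linearEquiv₀.trans (ModuleCat.homLinearEquiv (S := R))) ?_
    refine WL.of_injective (N := (Fin n → R) →ₗ[R] W) (LinearMap.lcomp R W f) ?_ ?_
    · intro a b hab
      refine LinearMap.ext fun y => ?_
      obtain ⟨z, rfl⟩ := hf y
      exact LinearMap.congr_fun hab z
    · exact WL.of_equiv ((Pi.basisFun R (Fin n)).constr R).symm (WL.pi hW)
  | succ n ih =>
    obtain ⟨N, _, _, _, _, f, surjf⟩ := Module.exists_finite_presentation R F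
    let exac := LinearMap.shortExact_shortComplexKer surjf
    exact WL.of_surjective (exac.extClass.precompOfLinear R (ModuleCat.of R W) (add_comm 1 n))
      (precomp_extClass_surjective_of_projective_X₂ _ exac n) (ih _)

/-- The Melkersson criterion. -/
theorem EW.melkersson {F : ModuleCat.{u} R} {M : Type u} [AddCommGroup M] [Module R M] (x : R)
    (hx : ∀ y : F, x • y = 0)
    (h1 : ∀ i, EW F (LinearMap.ker (LinearMap.lsmul R M x)) i)
    (h2 : ∀ i, EW F (M ⧸ LinearMap.range (LinearMap.lsmul R M x)) i) (i : ℕ) : EW F M i := by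
  let I := LinearMap.range (LinearMap.lsmul R M x)
  let f : M →ₗ[R] I := (LinearMap.lsmul R M x).rangeRestrict
  let g : I →ₗ[R] M := I.subtype
  let N := LinearMap.ker (LinearMap.lsmul R M x)
  have hN : Function.Exact N.subtype f := by
    intro m
    constructor
    · intro h
      exact ⟨⟨m, congrArg Subtype.val h⟩, rfl⟩
    · rintro ⟨y, rfl⟩
      exact Subtype.ext y.2
  obtain ⟨h0, hS⟩ := shortExact_mk N.subtype f N.injective_subtype
    (LinearMap.surjective_rangeRestrict _) hN
  obtain ⟨h0', hS'⟩ := shortExact_mk g I.mkQ I.injective_subtype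
    I.mkQ_surjective (LinearMap.exact_subtype_mkQ I)
  let Eg := (Ext.mk₀ (ModuleCat.ofHom g)).postcompOfLinear R F (add_zero i)
  let Ef := (Ext.mk₀ (ModuleCat.ofHom f)).postcompOfLinear R F (add_zero i)
  have hK : IsWeaklyLaskerian R (LinearMap.ker Eg) := by
    rcases i with _ | i
    · have : LinearMap.ker Eg = ⊥ := LinearMap.ker_eq_bot.2 (ext_zero_injective g I.injective_subtype)
      rw [this]
      exact WL.of_subsingleton
    · refine WL.of_injective (Submodule.inclusion (p := LinearMap.ker Eg)
        (p' := LinearMap.range (hS'.extClass.postcompOfLinear R F rfl)) ?_)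
        (Submodule.inclusion_injective _) (WL.of_surjective (LinearMap.rangeRestrict _)
          (LinearMap.surjective_rangeRestrict _) (h2 i))
      intro y hy
      exact Ext.covariant_sequence_exact₁ F hS' y hy rfl
  have hc : ∀ y, Ef y ∈ LinearMap.ker Eg := by
    intro y
    change (y.comp (Ext.mk₀ (ModuleCat.ofHom f)) (add_zero i)).comp
      (Ext.mk₀ (ModuleCat.ofHom g)) (add_zero i) = 0
    have : ModuleCat.ofHom f ≫ ModuleCat.ofHom g = x • 𝟙 (ModuleCat.of R M) := by
      ext m; rfl
    rw [Ext.comp_assoc_of_third_deg_zero, Ext.mk₀_comp_mk₀, this, ← Ext.smul_eq_comp_mk₀]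
    have hF : x • 𝟙 F = 0 := by
      ext m; exact hx m
    rw [← Ext.mk₀_id_comp y, ← Ext.smul_comp, ← Ext.mk₀_smul, hF]
    simp
  refine WL.of_exact ((Ext.mk₀ (ModuleCat.ofHom N.subtype)).postcompOfLinear R F (add_zero i))
    (Ef.codRestrict (LinearMap.ker Eg) hc) ?_ (h1 i) hK
  intro b hb
  exact Ext.covariant_sequence_exact₂ F hS b (congrArg Subtype.val hb)

theorem EW.zero_iff (𝔞 : Ideal R) {M : Type u} [AddCommGroup M] [Module R M] :
    EW (ModuleCat.of R (R ⧸ 𝔞)) M 0 ↔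
      IsWeaklyLaskerian R (Submodule.torsionBySet R M (𝔞 : Set R)) := by
  let φ : ((R ⧸ 𝔞) →ₗ[R] M) →ₗ[R] Submodule.torsionBySet R M (𝔞 : Set R) :=
    (LinearMap.applyₗ (R := R) (Ideal.Quotient.mk 𝔞 1)).codRestrict _ (by
      intro f
      rw [Submodule.mem_torsionBySet_iff]
      rintro ⟨a, ha⟩
      change a • f (Ideal.Quotient.mk 𝔞 1) = 0
      rw [← map_smul]
      have : a • (Ideal.Quotient.mk 𝔞 1) = 0 := by
        rw [Algebra.smul_def, map_one, mul_one]
        exact Ideal.Quotient.eq_zero_iff_mem.2 ha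
      rw [this, map_zero])
  have hφ : Function.Bijective φ := by
    constructor
    · intro f g hfg
      have h1 : f (Ideal.Quotient.mk 𝔞 1) = g (Ideal.Quotient.mk 𝔞 1) := congrArg Subtype.val hfg
      refine LinearMap.ext fun y => ?_
      obtain ⟨y, rfl⟩ := Ideal.Quotient.mk_surjective y
      have : Ideal.Quotient.mk 𝔞 y = y • Ideal.Quotient.mk 𝔞 1 := by
        rw [Algebra.smul_def, map_one, mul_one]; rfl
      rw [this, map_smul, map_smul, h1]
    · rintro ⟨m, hm⟩
      refine ⟨Submodule.liftQ 𝔞 (LinearMap.toSpanSingleton R M m) ?_, ?_⟩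
      · intro a ha
        exact (Submodule.mem_torsionBySet_iff _ _).1 hm ⟨a, ha⟩
      · refine Subtype.ext ?_
        change (LinearMap.toSpanSingleton R M m) 1 = m
        simp
  let e := (Ext.linearEquiv₀.trans (ModuleCat.homLinearEquiv (S := R) (M := ModuleCat.of R (R ⧸ 𝔞))
    (N := ModuleCat.of R M))).trans (LinearEquiv.ofBijective φ hφ)
  exact ⟨WL.of_equiv e.symm, WL.of_equiv e⟩

end PartC

section PartD
variable {R}

/-- Auxiliary submodule of the `x`-torsion. -/
def auxW {A M : Type*} [CommRing A] [AddCommGroup M] [Module A M] (x : A) (i : ℕ)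
    (N : Submodule A M) : Submodule A (Submodule.torsionBy A M x) :=
  (N.map (LinearMap.lsmul A M (x ^ i))).comap (Submodule.torsionBy A M x).subtype

theorem mem_auxW {A M : Type*} [CommRing A] [AddCommGroup M] [Module A M] {x : A} {i : ℕ}
    {N : Submodule A M} {v : Submodule.torsionBy A M x} :
    v ∈ auxW x i N ↔ ∃ y ∈ N, x ^ i • y = (v : M) := by
  simp [auxW]

theorem isArtinian_of_torsionBy {A M : Type*} [CommRing A] [AddCommGroup M] [Module A M] (x : A)
    (hx : ∀ m : M, ∃ n : ℕ, x ^ n • m = 0) (h : IsArtinian A (Submodule.torsionBy A M x)) :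
    IsArtinian A M := by
  have anti : ∀ N : Submodule A M, Antitone fun i => auxW x i N := by
    intro N
    apply antitone_nat_of_succ_le
    intro i v hv
    obtain ⟨y, hy, hv⟩ := mem_auxW.1 hv
    exact mem_auxW.2 ⟨x • y, N.smul_mem _ hy, by rw [← hv, smul_smul, pow_succ]⟩
  have mono : ∀ i, Monotone fun N : Submodule A M => auxW x i N := by
    intro i N N' hN v hv
    obtain ⟨y, hy, hv⟩ := mem_auxW.1 hv
    exact mem_auxW.2 ⟨y, hN hy, hv⟩
  have key : ∀ N N' : Submodule A M, N ≤ N' → (∀ i, auxW x i N' ≤ auxW x i N) → N' ≤ N := by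
    intro N N' hN hW
    have : ∀ i : ℕ, ∀ y ∈ N', x ^ i • y = 0 → y ∈ N := by
      intro i
      induction i with
      | zero => intro y _ h0; simp at h0; simp [h0]
      | succ i ih =>
        intro y hy h0
        have hv : x ^ i • y ∈ Submodule.torsionBy A M x := by
          rw [Submodule.mem_torsionBy_iff, smul_smul, ← pow_succ']; exact h0
        have h1 : (⟨_, hv⟩ : Submodule.torsionBy A M x) ∈ auxW x i N' := mem_auxW.2 ⟨y, hy, rfl⟩
        obtain ⟨z, hz, hzy⟩ := mem_auxW.1 (hW i h1)
        have := ih (y - z) (N'.sub_mem hy (hN hz)) (by rw [smul_sub, hzy]; simp)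
        have := N.add_mem this hz
        simpa using this
    intro y hy
    obtain ⟨n, hn⟩ := hx y
    exact this n y hy hn
  rw [← monotone_stabilizes_iff_artinian] at h ⊢
  intro N
  have Nanti : ∀ {a b : ℕ}, a ≤ b → (OrderDual.ofDual (N b)) ≤ OrderDual.ofDual (N a) :=
    fun hab => N.monotone hab
  obtain ⟨k0, hk0⟩ := h ⟨fun k => OrderDual.toDual (auxW x k (OrderDual.ofDual (N k))), by
    intro a b hab
    exact (anti _ hab).trans (mono a (Nanti hab))⟩
  have hi : ∀ i, ∃ n, ∀ m, n ≤ m → auxW x i (OrderDual.ofDual (N n)) = auxW x i (OrderDual.ofDual (N m)) := by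
    intro i
    exact h ⟨fun k => OrderDual.toDual (auxW x i (OrderDual.ofDual (N k))), by
      intro a b hab
      exact mono i (Nanti hab)⟩
  choose n hn using hi
  refine ⟨max k0 ((Finset.range k0).sup n), fun m hm => ?_⟩
  refine le_antisymm (α := Submodule A M) (key _ _ (Nanti hm) ?_) (Nanti hm)
  intro i
  by_cases hik : i < k0
  · have h1 : n i ≤ max k0 ((Finset.range k0).sup n) :=
      (Finset.le_sup (f := n) (Finset.mem_range.2 hik)).trans (le_max_right _ _)
    exact ((hn i _ h1).symm.trans (hn i _ (h1.trans hm))).le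
  · push Not at hik
    have hk1 : k0 ≤ max k0 ((Finset.range k0).sup n) := le_max_left _ _
    have e : auxW x k0 (OrderDual.ofDual (N k0)) =
        auxW x (max i m) (OrderDual.ofDual (N (max i m))) :=
      hk0 (max i m) (hik.trans (le_max_left _ _))
    calc auxW x i _ ≤ auxW x k0 (OrderDual.ofDual (N k0)) := (anti _ hik).trans (mono k0 (Nanti hk1))
      _ = _ := e
      _ ≤ _ := (anti _ (le_max_left i m)).trans (mono i (Nanti (le_max_right i m)))

theorem isArtinian_of_torsionBySet {A : Type*} [CommRing A] (s : Finset A) :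
    ∀ (M : Type u) [AddCommGroup M] [Module A M],
    (∀ x ∈ s, ∀ m : M, ∃ n : ℕ, x ^ n • m = 0) →
    IsArtinian A (Submodule.torsionBySet A M (s : Set A)) → IsArtinian A M := by
  classical
  induction s using Finset.induction_on with
  | empty =>
    intro M _ _ _ h
    refine isArtinian_of_injective (M := M) (P := Submodule.torsionBySet A M ((∅ : Finset A) : Set A))
      (LinearMap.codRestrict _ LinearMap.id ?_) ?_
    · intro m; simp [Submodule.mem_torsionBySet_iff]
    · intro a b hab
      exact congrArg Subtype.val hab
  | insert x s _ ih =>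
    intro M _ _ hs h
    refine ih M (fun y hy => hs y (Finset.mem_insert_of_mem hy)) ?_
    refine isArtinian_of_torsionBy x ?_ ?_
    · intro m
      obtain ⟨n, hn⟩ := hs x (Finset.mem_insert_self _ _) m.1
      exact ⟨n, Subtype.ext hn⟩
    · refine isArtinian_of_injective (P := Submodule.torsionBySet A M ((insert x s : Finset A) : Set A))
        (LinearMap.codRestrict _ ((Submodule.subtype _).comp (Submodule.subtype _)) ?_) ?_
      · intro m
        rw [Submodule.mem_torsionBySet_iff]
        rintro ⟨a, ha⟩
        simp only [Finset.coe_insert, Set.mem_insert_iff] at ha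
        rcases ha with rfl | ha
        · exact congrArg Subtype.val ((Submodule.mem_torsionBy_iff _ _).1 m.2)
        · exact (Submodule.mem_torsionBySet_iff _ _).1 m.1.2 ⟨a, ha⟩
      · intro a b hab
        have h2 : (a.1.1 : M) = b.1.1 :=
          congrArg (Submodule.subtype (Submodule.torsionBySet A M ((insert x s : Finset A) : Set A))) hab
        exact Subtype.ext (Subtype.ext h2)

/-- Secondary-type decomposition. -/
theorem secondary_dich {A M : Type*} [CommRing A] [AddCommGroup M] [Module A M] [IsArtinian A M]
    {S : Submodule A M} (hS : SupIrred S) (r : A) :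
    (∃ n : ℕ, ∀ y ∈ S, r ^ n • y = 0) ∨ (∀ y ∈ S, ∃ z ∈ S, r • z = y) := by
  have mono : Antitone fun n => S.map (LinearMap.lsmul A M (r ^ n)) := by
    apply antitone_nat_of_succ_le
    rintro n _ ⟨y, hy, rfl⟩
    exact ⟨r • y, S.smul_mem _ hy, by simp [smul_smul, pow_succ, mul_comm]⟩
  obtain ⟨n, hn⟩ := IsArtinian.monotone_stabilizes
    (⟨fun k => OrderDual.toDual (S.map (LinearMap.lsmul A M (r ^ k))), fun a b hab => mono hab⟩ :
      ℕ →o (Submodule A M)ᵒᵈ)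
  have hn' : ∀ m, n ≤ m → S.map (LinearMap.lsmul A M (r ^ n)) = S.map (LinearMap.lsmul A M (r ^ m)) := hn
  have hle : S.map (LinearMap.lsmul A M (r ^ n)) ≤ S := by
    rintro _ ⟨y, hy, rfl⟩
    exact S.smul_mem _ hy
  have hsup : (S ⊓ LinearMap.ker (LinearMap.lsmul A M (r ^ n))) ⊔
      S.map (LinearMap.lsmul A M (r ^ n)) = S := by
    refine le_antisymm (sup_le inf_le_left hle) ?_
    intro y hy
    have : r ^ n • y ∈ S.map (LinearMap.lsmul A M (r ^ (n + n))) := by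
      rw [← hn' (n + n) (by omega)]
      exact ⟨y, hy, rfl⟩
    obtain ⟨z, hz, hzy⟩ := this
    have hzy : r ^ (n + n) • z = r ^ n • y := hzy
    rw [Submodule.mem_sup]
    refine ⟨y - r ^ n • z, ⟨S.sub_mem hy (S.smul_mem _ hz), ?_⟩, r ^ n • z, ⟨z, hz, rfl⟩, by simp⟩
    simp [smul_sub, smul_smul, ← pow_add, hzy]
  rcases hS.2 hsup with h | h
  · left
    refine ⟨n, fun y hy => ?_⟩
    have : y ∈ S ⊓ LinearMap.ker (LinearMap.lsmul A M (r ^ n)) := by rw [h]; exact hy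
    exact this.2
  · right
    intro y hy
    rw [← h, hn' (n + 1) (by omega)] at hy
    obtain ⟨z, hz, hzy⟩ := hy
    exact ⟨r ^ n • z, S.smul_mem _ hz, by rw [← hzy]; simp [smul_smul, pow_succ']⟩

/-- The annihilator of `S` in `R`. -/
def annR (R : Type*) {A M : Type*} [CommRing R] [CommRing A] [Algebra R A] [AddCommGroup M]
    [Module A M] (S : Submodule A M) : Ideal R :=
  (Module.annihilator A S).comap (algebraMap R A)

theorem mem_annR {R A M : Type*} [CommRing R] [CommRing A] [Algebra R A] [AddCommGroup M]
    [Module A M] {S : Submodule A M} {r : R} :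
    r ∈ annR R S ↔ ∀ y ∈ S, algebraMap R A r • y = 0 := by
  simp [annR, Submodule.mem_annihilator, Ideal.mem_comap]

theorem secondary_prime {R A M : Type*} [CommRing R] [CommRing A] [Algebra R A] [AddCommGroup M]
    [Module A M] [IsArtinian A M] {S : Submodule A M} (hS : SupIrred S) :
    (annR R S).radical.IsPrime := by
  constructor
  · rw [Ne, Ideal.radical_eq_top, Ideal.eq_top_iff_one, mem_annR]
    intro h
    apply hS.1
    rw [isMin_iff_eq_bot, eq_bot_iff]
    intro y hy
    simpa using h y hy
  · intro a b hab
    rw [or_iff_not_imp_right]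
    intro hb
    rcases secondary_dich hS (algebraMap R A b) with ⟨n, hn⟩ | h
    · exact absurd ⟨n, mem_annR.2 (by simpa using hn)⟩ hb
    obtain ⟨n, hn⟩ := hab
    refine ⟨n, mem_annR.2 ?_⟩
    have hs : ∀ n : ℕ, ∀ y ∈ S, ∃ z ∈ S, (algebraMap R A b) ^ n • z = y := by
      intro n
      induction n with
      | zero => intro y hy; exact ⟨y, hy, by simp⟩
      | succ n ih =>
        intro y hy
        obtain ⟨z, hz, rfl⟩ := h y hy
        obtain ⟨w, hw, rfl⟩ := ih z hz
        exact ⟨w, hw, by rw [smul_smul, pow_succ']⟩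
    intro y hy
    obtain ⟨z, hz, rfl⟩ := hs n y hy
    have := mem_annR.1 hn z hz
    rw [smul_smul]
    simpa [mul_pow] using this

theorem artinian_decomp {R A M : Type*} [CommRing R] [CommRing A] [Algebra R A] [AddCommGroup M]
    [Module A M] [IsArtinian A M] [IsNoetherianRing R] (𝔞 : Ideal R) :
    ∃ (Q : Finset (Ideal R)) (n : ℕ), (∀ q ∈ Q, q.IsPrime ∧ ¬ 𝔞 ≤ q) ∧
      ∀ x : R, (∀ q ∈ Q, x ∉ q) → ∀ m : M, ∃ u v : M, m = algebraMap R A x • u + v ∧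
        ∀ a ∈ 𝔞 ^ n, algebraMap R A a • v = 0 := by
  classical
  obtain ⟨s, hs, hirr⟩ := exists_supIrred_decomposition (⊤ : Submodule A M)
  have : ∀ S : Submodule A M, ∃ n : ℕ, 𝔞 ≤ (annR R S).radical → 𝔞 ^ n ≤ annR R S := by
    intro S
    by_cases h : 𝔞 ≤ (annR R S).radical
    · obtain ⟨n, hn⟩ := Ideal.exists_pow_le_of_le_radical_of_fg h (IsNoetherian.noetherian 𝔞)
      exact ⟨n, fun _ => hn⟩
    · exact ⟨0, fun h' => absurd h' h⟩
  choose N hN using this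
  refine ⟨(s.image fun S => (annR R S).radical).filter fun q => ¬ 𝔞 ≤ q, s.sup N, ?_, ?_⟩
  · intro q hq
    simp only [Finset.mem_filter, Finset.mem_image] at hq
    obtain ⟨⟨S, hS, rfl⟩, h⟩ := hq
    exact ⟨secondary_prime (hirr hS), h⟩
  · intro x hx
    let T : Submodule A M := LinearMap.range (LinearMap.lsmul A M (algebraMap R A x)) ⊔
      Submodule.torsionBySet A M (algebraMap R A '' (𝔞 ^ (s.sup N) : Ideal R))
    have hT : (⊤ : Submodule A M) ≤ T := by
      rw [← hs]
      apply Finset.sup_le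
      intro S hS
      by_cases h : 𝔞 ≤ (annR R S).radical
      · refine le_trans ?_ le_sup_right
        intro y hy
        rw [Submodule.mem_torsionBySet_iff]
        rintro ⟨_, a, ha, rfl⟩
        exact mem_annR.1 (hN S h (Ideal.pow_le_pow_right (Finset.le_sup hS) ha)) y hy
      · refine le_trans ?_ le_sup_left
        have hxS : x ∉ (annR R S).radical := hx _ (by
          simp only [Finset.mem_filter, Finset.mem_image]
          exact ⟨⟨S, hS, rfl⟩, h⟩)
        intro y hy
        rcases secondary_dich (hirr hS) (algebraMap R A x) with ⟨n, hn⟩ | h'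
        · exact absurd ⟨n, mem_annR.2 (by simpa using hn)⟩ hxS
        · obtain ⟨z, hz, hzy⟩ := h' y hy
          exact ⟨z, hzy⟩
    intro m
    obtain ⟨_, ⟨u, rfl⟩, v, hv, hm⟩ := Submodule.mem_sup.1 (hT (Submodule.mem_top (x := m)))
    refine ⟨u, v, hm.symm, fun a ha => ?_⟩
    exact (Submodule.mem_torsionBySet_iff _ _).1 hv ⟨_, a, ha, rfl⟩

end PartD

section PartE
variable {R}

theorem WL.no_indep {M : Type u} [AddCommGroup M] [Module R M] [IsNoetherianRing R]
    (h : IsWeaklyLaskerian R M) {p : Ideal R}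
    (hp : (PrimeSpectrum.zeroLocus (p : Set R)).Infinite) (w : ℕ → M)
    (hw : ∀ f : ℕ →₀ R, Finsupp.linearCombination R w f = 0 → ∀ i, f i ∈ p) : False := by
  let P : ℕ ↪ PrimeSpectrum.zeroLocus (p : Set R) := hp.natEmbedding
  let D0 : Submodule R (ℕ →₀ R) :=
    { carrier := {f | ∀ i, f i ∈ (P i).1.asIdeal}
      add_mem' := fun {a b} ha hb i => by
        rw [Finsupp.add_apply]; exact Ideal.add_mem _ (ha i) (hb i)
      zero_mem' := fun i => by simp
      smul_mem' := fun c f hf i => by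
        rw [Finsupp.smul_apply, smul_eq_mul]; exact Ideal.mul_mem_left _ _ (hf i) }
  let D : Submodule R M := D0.map (Finsupp.linearCombination R w)
  have hfin := h D
  apply Set.infinite_of_injective_forall_mem (f := fun i : ℕ => (P i).1.asIdeal) _ _ hfin
  · intro i j hij
    exact P.injective (Subtype.ext (PrimeSpectrum.ext hij))
  · intro i
    rw [ass_mem_iff]
    refine ⟨(P i).1.2, D.mkQ (w i), fun r => ?_⟩
    rw [← map_smul, Submodule.mkQ_apply, Submodule.Quotient.mk_eq_zero]
    constructor
    · intro hr
      refine ⟨Finsupp.single i r, fun j => ?_, by simp⟩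
      by_cases hij : i = j
      · subst hij; simpa using hr
      · simp [hij]
    · rintro ⟨f, hf, hfr⟩
      have h1 := hw (Finsupp.single i r - f) (by rw [map_sub, hfr]; simp) i
      have h2 : r - f i ∈ (P i).1.asIdeal := (P i).2 (by simpa using h1)
      have h3 := Ideal.add_mem _ h2 (hf i)
      simpa using h3

theorem clear_denoms [IsNoetherianRing R] {M M' : Type*} [AddCommGroup M] [Module R M]
    [AddCommGroup M'] [Module R M'] (S : Submonoid R) (f : M →ₗ[R] M') [IsLocalizedModule S f]
    (I : Ideal R) (v : M) (hv : ∀ a ∈ I, f (a • v) = 0) :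
    ∃ t ∈ S, ∀ a ∈ I, a • t • v = 0 := by
  classical
  obtain ⟨s, hs⟩ := IsNoetherian.noetherian I
  have key : ∀ s : Finset R, (∀ a ∈ s, a ∈ I) → ∃ t ∈ S, ∀ a ∈ s, a • t • v = 0 := by
    intro s
    induction s using Finset.induction_on with
    | empty => intro _; exact ⟨1, S.one_mem, by simp⟩
    | insert a s _ ih =>
      intro h
      obtain ⟨t, ht, h1⟩ := ih fun b hb => h b (Finset.mem_insert_of_mem hb)
      obtain ⟨c, hc⟩ := IsLocalizedModule.exists_of_eq (S := S) (f := f)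
        (x₁ := a • v) (x₂ := 0) (by rw [hv a (h a (Finset.mem_insert_self _ _)), map_zero])
      have hc : (c : R) • a • v = 0 := by rw [smul_zero] at hc; exact hc
      refine ⟨c * t, S.mul_mem c.2 ht, fun b hb => ?_⟩
      rcases Finset.mem_insert.1 hb with rfl | hb
      · rw [smul_smul, show b * (c * t) = t * (c * b) by ring, mul_smul, mul_smul, hc, smul_zero]
      · rw [smul_smul, show b * (c * t) = c * (b * t) by ring, mul_smul, mul_smul, h1 b hb, smul_zero]
  obtain ⟨t, ht, h1⟩ := key s fun a ha => hs ▸ Submodule.subset_span ha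
  refine ⟨t, ht, fun a ha => ?_⟩
  have : I ≤ LinearMap.ker (LinearMap.toSpanSingleton R M (t • v)) := by
    rw [← hs, Submodule.span_le]
    intro b hb
    exact h1 b hb
  exact this ha

theorem isArtinian_local_torsion [IsNoetherianRing R] {M : Type u} [AddCommGroup M] [Module R M]
    (p : Ideal R) [hpp : p.IsPrime] (hp : (PrimeSpectrum.zeroLocus (p : Set R)).Infinite)
    (h : IsWeaklyLaskerian R (Submodule.torsionBySet R M (p : Set R))) :
    IsArtinian (Localization.AtPrime p) (Submodule.torsionBySet (Localization.AtPrime p)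
      (LocalizedModule p.primeCompl M)
      (IsLocalRing.maximalIdeal (Localization.AtPrime p) : Set (Localization.AtPrime p))) := by
  set A := Localization.AtPrime p with hA
  let m := IsLocalRing.maximalIdeal A
  let T := Submodule.torsionBySet A (LocalizedModule p.primeCompl M) (m : Set A)
  let _ : Field (A ⧸ m) := Ideal.Quotient.field m
  suffices hfin : Module.Finite (A ⧸ m) T by
    have : IsArtinian (A ⧸ m) T := inferInstance
    have tower : IsScalarTower A (A ⧸ m) T := inferInstance
    exact isArtinian_of_surjective_algebraMap (R := A ⧸ m) Ideal.Quotient.mk_surjective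
  by_contra hfin
  let b := Module.Basis.ofVectorSpace (A ⧸ m) T
  have hinf : Infinite (Module.Basis.ofVectorSpaceIndex (A ⧸ m) T) := by
    by_contra hcon
    rw [not_infinite_iff_finite] at hcon
    exact hfin (Module.Finite.of_basis b)
  let e := Infinite.natEmbedding (Module.Basis.ofVectorSpaceIndex (A ⧸ m) T)
  let v : ℕ → T := fun i => b (e i)
  have hv : LinearIndependent (A ⧸ m) v := b.linearIndependent.comp e e.injective
  let f := LocalizedModule.mkLinearMap p.primeCompl M
  have hcl : ∀ i, ∃ (w : M) (s : p.primeCompl), (∀ a ∈ p, a • w = 0) ∧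
      algebraMap R A s • ((v i : T) : LocalizedModule p.primeCompl M) = f w := by
    intro i
    obtain ⟨⟨y, s⟩, hy⟩ := IsLocalizedModule.surj p.primeCompl f
      ((v i : T) : LocalizedModule p.primeCompl M)
    have hy : (s : R) • ((v i : T) : LocalizedModule p.primeCompl M) = f y := hy
    obtain ⟨t, ht, h1⟩ := clear_denoms p.primeCompl f p y (by
      intro a ha
      have h2 : algebraMap R A a ∈ m :=
        (Localization.AtPrime.map_eq_maximalIdeal (I := p)).le (Ideal.mem_map_of_mem _ ha)
      have h3 := (Submodule.mem_torsionBySet_iff _ _).1 (v i).2 ⟨_, h2⟩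
      have h3 : algebraMap R A a • ((v i : T) : LocalizedModule p.primeCompl M) = 0 := h3
      rw [algebraMap_smul] at h3
      rw [map_smul, ← hy, smul_comm, h3, smul_zero])
    refine ⟨t • y, ⟨t, ht⟩ * s, h1, ?_⟩
    rw [algebraMap_smul, map_smul, ← hy, smul_smul]
    rfl
  choose w s hw hws using hcl
  refine WL.no_indep h hp (fun i => ⟨w i, ?_⟩) ?_
  · rw [Submodule.mem_torsionBySet_iff]
    exact fun a => hw i a a.2
  · intro g hg i
    have hg1 : g.sum (fun j r => r • w j) = 0 := by
      have := congrArg (Submodule.subtype _) hg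
      rw [Finsupp.linearCombination_apply, Finsupp.sum, map_sum, map_zero] at this
      simpa [Finsupp.sum] using this
    rw [linearIndependent_iff'] at hv
    have h4 := hv g.support (fun j => Ideal.Quotient.mk m (algebraMap R A (g j * s j))) (by
      apply Subtype.ext
      have hg2 := congrArg f hg1
      rw [Finsupp.sum, map_sum, map_zero] at hg2
      rw [← Submodule.subtype_apply, map_sum, ← Submodule.subtype_apply, map_zero, ← hg2]
      refine Finset.sum_congr rfl fun j _ => ?_
      change algebraMap R A (g j * s j) • ((v j : T) : LocalizedModule p.primeCompl M) = _
      rw [map_smul, ← hws j]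
      rw [map_mul, ← algebraMap_smul A (g j), smul_smul]) i
    by_cases hi : i ∈ g.support
    · have h5 := Ideal.Quotient.eq_zero_iff_mem.1 (h4 hi)
      have h6 : g i * s i ∈ p := by
        by_contra hcon
        have : IsUnit (algebraMap R A (g i * s i)) :=
          IsLocalization.map_units A (⟨_, hcon⟩ : p.primeCompl)
        exact (IsLocalRing.mem_maximalIdeal _).1 h5 this
      exact (hpp.mem_or_mem h6).resolve_right (s i).2
    · rw [Finsupp.notMem_support_iff.1 hi]; exact p.zero_mem

theorem local_decomp [IsNoetherianRing R] {M : Type u} [AddCommGroup M] [Module R M]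
    (p : Ideal R) [hpp : p.IsPrime] (hp : (PrimeSpectrum.zeroLocus (p : Set R)).Infinite)
    (h : IsWeaklyLaskerian R (Submodule.torsionBySet R M (p : Set R)))
    (hmin : ∀ x ∈ p, ∀ w : M, ∃ n : ℕ, ∃ s ∉ p, s • x ^ n • w = 0) (𝔞 : Ideal R) :
    ∃ (Q : Finset (Ideal R)) (n : ℕ), (∀ q ∈ Q, q.IsPrime ∧ ¬ 𝔞 ≤ q) ∧
      ∀ x : R, (∀ q ∈ Q, x ∉ q) → ∀ w : M, ∃ s ∉ p, ∃ u v : M, s • w = x • u + v ∧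
        ∀ a ∈ 𝔞 ^ n, a • v = 0 := by
  classical
  let A := Localization.AtPrime p
  let Mp := LocalizedModule p.primeCompl M
  let f := LocalizedModule.mkLinearMap p.primeCompl M
  have hart : IsArtinian A Mp := by
    obtain ⟨s, hs⟩ := IsNoetherian.noetherian p
    have hs' : Ideal.span ((s.image (algebraMap R A) : Finset A) : Set A) =
        IsLocalRing.maximalIdeal A := by
      refine Eq.trans ?_ (Localization.AtPrime.map_eq_maximalIdeal (I := p))
      rw [Finset.coe_image, ← Ideal.map_span]
      exact congrArg (Ideal.map _) hs
    refine isArtinian_of_torsionBySet (s.image (algebraMap R A)) Mp ?_ ?_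
    · intro x hx y
      obtain ⟨x, hxs, rfl⟩ := Finset.mem_image.1 hx
      have hx : x ∈ p := hs.le (Submodule.subset_span hxs)
      obtain ⟨⟨z, t⟩, hz⟩ := IsLocalizedModule.surj p.primeCompl f y
      have hz : (t : R) • y = f z := hz
      obtain ⟨n, r, hr, hn⟩ := hmin x hx z
      refine ⟨n, ?_⟩
      have h1 : ((⟨r, hr⟩ : p.primeCompl) * t) • (x ^ n • y) = 0 := by
        have h2 : (r * (t : R)) • x ^ n • y = 0 := by
          rw [mul_smul, smul_comm (t : R), hz, ← map_smul, ← map_smul, hn, map_zero]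
        exact h2
      have h2 := IsLocalizedModule.smul_injective f (((⟨r, hr⟩ : p.primeCompl) * t))
        (h1.trans (smul_zero _).symm)
      rw [← map_pow, algebraMap_smul]
      exact h2
    · rw [Submodule.torsionBySet_eq_torsionBySet_span]
      change IsArtinian A (Submodule.torsionBySet A Mp ((Ideal.span _ : Ideal A) : Set A))
      rw [hs']
      exact isArtinian_local_torsion p hp h
  obtain ⟨Q, n, hQ, hx⟩ := artinian_decomp (R := R) (A := A) (M := Mp) 𝔞
  refine ⟨Q, n, hQ, fun x hxQ w => ?_⟩
  obtain ⟨u', v', hw, hv'⟩ := hx x hxQ (f w)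
  obtain ⟨⟨u, t1⟩, hu⟩ := IsLocalizedModule.surj p.primeCompl f u'
  have hu : (t1 : R) • u' = f u := hu
  obtain ⟨⟨v, t2⟩, hv⟩ := IsLocalizedModule.surj p.primeCompl f v'
  have hv : (t2 : R) • v' = f v := hv
  obtain ⟨t3, ht3, h3⟩ := clear_denoms p.primeCompl f (𝔞 ^ n) v (by
    intro a ha
    have h4 := hv' a ha
    rw [algebraMap_smul] at h4
    rw [map_smul, ← hv, smul_comm, h4, smul_zero])
  rw [algebraMap_smul] at hw
  obtain ⟨c, hc⟩ := IsLocalizedModule.exists_of_eq (S := p.primeCompl) (f := f)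
    (x₁ := ((t1 : R) * t2) • w) (x₂ := x • (t2 : R) • u + (t1 : R) • v) (by
      rw [map_add, map_smul, map_smul, map_smul, map_smul, ← hu, ← hv, hw]
      module)
  have hc : (c : R) • ((t1 : R) * t2) • w = (c : R) • (x • (t2 : R) • u + (t1 : R) • v) := hc
  refine ⟨t3 * (c * (t1 * t2)), p.primeCompl.mul_mem ht3
    (p.primeCompl.mul_mem c.2 (p.primeCompl.mul_mem t1.2 t2.2)), (t3 * c * t2) • u,
    (c * t1 : R) • t3 • v, ?_, ?_⟩
  · rw [mul_smul, mul_smul, hc]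
    module
  · intro a ha
    rw [smul_comm, h3 a ha, smul_zero]

end PartE

section PartF
variable {R}

/-- No chains of length two in the support. -/
def NoChain (R : Type u) [CommRing R] (M : Type u) [AddCommGroup M] [Module R M] : Prop :=
  ∀ q ∈ Module.support R M, ∀ p ∈ Module.support R M, ∀ r ∈ Module.support R M,
    q < p → p < r → False

theorem NoChain.of_suppDim {M : Type u} [AddCommGroup M] [Module R M] (h : suppDim R M ≤ 1) :
    NoChain R M := by
  intro q hq p hp r hr hqp hpr
  let a : Module.support R M := ⟨q, hq⟩
  let b : Module.support R M := ⟨p, hp⟩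
  let c : Module.support R M := ⟨r, hr⟩
  have hab : a < b := hqp
  have hbc : b < c := hpr
  let s : LTSeries (Module.support R M) :=
    { length := 2
      toFun := ![a, b, c]
      step := by
        intro i
        fin_cases i
        · exact hab
        · exact hbc }
  have h1 : (s.length : WithBot ℕ∞) ≤ Order.krullDim (Module.support R M) :=
    Order.LTSeries.length_le_krullDim s
  have h2 : s.length = 2 := rfl
  have h3 := h1.trans h
  rw [h2] at h3
  have h4 : (2 : WithBot ℕ∞) ≤ 1 := h3
  exact absurd h4 (by decide)

theorem NoChain.mono {M N : Type u} [AddCommGroup M] [Module R M] [AddCommGroup N] [Module R N]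
    (h : NoChain R M) (hs : Module.support R N ⊆ Module.support R M) : NoChain R N :=
  fun q hq p hp r hr => h q (hs hq) p (hs hp) r (hs hr)

theorem suppDim_mono {M N : Type u} [AddCommGroup M] [Module R M] [AddCommGroup N] [Module R N]
    (hs : Module.support R N ⊆ Module.support R M) : suppDim R N ≤ suppDim R M :=
  Order.krullDim_le_of_strictMono (Set.inclusion hs) fun _ _ h => h

variable [IsNoetherianRing R]

theorem NoChain.minimal {M : Type u} [AddCommGroup M] [Module R M] (h : NoChain R M)
    {p : PrimeSpectrum R} (hp : p ∈ Module.support R M)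
    (hinf : (PrimeSpectrum.zeroLocus (p.asIdeal : Set R)).Infinite) :
    ∀ q ∈ Module.support R M, q ≤ p → q = p := by
  intro q hq hqp
  by_contra hne
  obtain ⟨r, hr, hrp⟩ := hinf.exists_notMem_finset {p}
  have hpr : p ≤ r := hr
  rw [Finset.mem_singleton] at hrp
  exact h q hq p hp r (Module.mem_support_mono hpr hp) (lt_of_le_of_ne hqp hne)
    (lt_of_le_of_ne hpr (Ne.symm hrp))

theorem exists_pow_smul_zero {M : Type u} [AddCommGroup M] [Module R M]
    {p : PrimeSpectrum R} (hmin : ∀ q ∈ Module.support R M, q ≤ p → q = p)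
    (x : R) (hx : x ∈ p.asIdeal) (w : M) : ∃ n : ℕ, ∃ s ∉ p.asIdeal, s • x ^ n • w = 0 := by
  by_contra hcon
  push Not at hcon
  let I : Ideal R := LinearMap.ker (LinearMap.toSpanSingleton R M w)
  have hI : ∀ r, r ∈ I ↔ r • w = 0 := fun r => Iff.rfl
  obtain ⟨q, hq, hIq, hd⟩ := Ideal.exists_le_prime_disjoint I
    (p.asIdeal.primeCompl ⊔ Submonoid.powers x) (by
      rw [Set.disjoint_left]
      rintro a ha hS
      obtain ⟨s, hs, _, ⟨n, rfl⟩, rfl⟩ := Submonoid.mem_sup.1 hS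
      refine hcon n s hs ?_
      have := (hI _).1 ha
      rwa [mul_smul] at this)
  have hqp : q ≤ p.asIdeal := by
    intro a ha
    by_contra hap
    exact Set.disjoint_left.1 hd ha (Submonoid.mem_sup_left (S := p.asIdeal.primeCompl) hap)
  have hqs : (⟨q, hq⟩ : PrimeSpectrum R) ∈ Module.support R M := by
    rw [Module.mem_support_iff']
    exact ⟨w, fun r hr h0 => hr (hIq ((hI r).2 h0))⟩
  have := hmin _ hqs hqp
  have hxq : x ∈ q := by
    have h2 : q = p.asIdeal := congrArg PrimeSpectrum.asIdeal this
    rw [h2]; exact hx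
  exact Set.disjoint_left.1 hd hxq (Submonoid.mem_sup_right (Submonoid.mem_powers x))

theorem ass_torsion {M : Type u} [AddCommGroup M] [Module R M] {𝔞 : Ideal R}
    (hs : Module.support R M ⊆ PrimeSpectrum.zeroLocus (𝔞 : Set R)) {q : Ideal R}
    (hq : q ∈ associatedPrimes R M) :
    q ∈ associatedPrimes R (Submodule.torsionBySet R M (𝔞 : Set R)) := by
  obtain ⟨q', hq', rfl⟩ := ass_mem_support hq
  rw [ass_mem_iff] at hq ⊢
  obtain ⟨hp, w, hw⟩ := hq
  have h𝔞 : 𝔞 ≤ q'.asIdeal := hs hq'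
  refine ⟨hp, ⟨w, ?_⟩, fun r => ?_⟩
  · rw [Submodule.mem_torsionBySet_iff]
    exact fun a => (hw a).1 (h𝔞 a.2)
  · rw [hw r, Subtype.ext_iff]; rfl

theorem WL.torsion_pow {M : Type u} [AddCommGroup M] [Module R M] {𝔞 : Ideal R}
    (h : IsWeaklyLaskerian R (Submodule.torsionBySet R M (𝔞 : Set R))) (n : ℕ) :
    IsWeaklyLaskerian R (Submodule.torsionBySet R M ((𝔞 ^ n : Ideal R) : Set R)) := by
  induction n with
  | zero =>
    have : Subsingleton (Submodule.torsionBySet R M ((𝔞 ^ 0 : Ideal R) : Set R)) := by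
      rw [Submodule.subsingleton_iff_eq_bot, eq_bot_iff]
      intro y hy
      rw [Submodule.mem_torsionBySet_iff] at hy
      simpa using hy ⟨1, by simp⟩
    exact WL.of_subsingleton
  | succ n ih =>
    obtain ⟨k, g, hg⟩ := Submodule.fg_iff_exists_fin_generating_family.1
      (IsNoetherian.noetherian 𝔞)
    have hga : ∀ i, g i ∈ 𝔞 := fun i => hg.le (Submodule.subset_span ⟨i, rfl⟩)
    let f : Submodule.torsionBySet R M (𝔞 : Set R) →ₗ[R]
        Submodule.torsionBySet R M ((𝔞 ^ (n + 1) : Ideal R) : Set R) :=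
      Submodule.inclusion (Submodule.torsionBySet_le_torsionBySet_of_subset
        (Ideal.pow_le_self (Nat.succ_ne_zero n)))
    let φ : Fin k → (Submodule.torsionBySet R M ((𝔞 ^ (n + 1) : Ideal R) : Set R) →ₗ[R]
        Submodule.torsionBySet R M ((𝔞 ^ n : Ideal R) : Set R)) := fun i =>
      LinearMap.codRestrict _ ((LinearMap.lsmul R M (g i)).comp (Submodule.subtype _)) (by
        intro y
        rw [Submodule.mem_torsionBySet_iff]
        intro a
        have := (Submodule.mem_torsionBySet_iff _ _).1 y.2
          ⟨a * g i, by rw [pow_succ]; exact Ideal.mul_mem_mul a.2 (hga i)⟩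
        simpa [smul_smul] using this)
    refine WL.of_exact f (LinearMap.pi φ) ?_ h (WL.pi ih)
    intro y hy
    refine ⟨⟨y.1, ?_⟩, rfl⟩
    rw [Submodule.mem_torsionBySet_iff]
    rintro ⟨a, ha⟩
    have hle : 𝔞 ≤ LinearMap.ker (LinearMap.toSpanSingleton R M y.1) := by
      refine hg.ge.trans (Submodule.span_le.2 ?_)
      rintro _ ⟨i, rfl⟩
      have := congrArg (Submodule.subtype _) (congrFun hy i)
      exact this
    exact hle ha

theorem EW.of_quot {M : Type u} [AddCommGroup M] [Module R M] {𝔞 : Ideal R}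
    (hs : Module.support R M ⊆ PrimeSpectrum.zeroLocus (𝔞 : Set R))
    (h0 : EW (ModuleCat.of R (R ⧸ 𝔞)) M 0) (L : Submodule R M) (hL : IsWeaklyLaskerian R L)
    (hfin : ∀ q ∈ Module.support R (M ⧸ L),
      (PrimeSpectrum.zeroLocus (q.asIdeal : Set R)).Finite) (i : ℕ) :
    EW (ModuleCat.of R (R ⧸ 𝔞)) M i := by
  have : Module.Finite R (ModuleCat.of R (R ⧸ 𝔞)) := inferInstanceAs (Module.Finite R (R ⧸ 𝔞))
  have hex : Function.Exact L.subtype L.mkQ := by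
    rw [LinearMap.exact_iff]; simp
  have hQ0 : EW (ModuleCat.of R (R ⧸ 𝔞)) (M ⧸ L) 0 :=
    EW.right L.subtype L.mkQ L.injective_subtype L.mkQ_surjective hex h0 (EW.of_WL _ hL 1)
  rw [EW.zero_iff] at hQ0
  have hsQ := Module.support_subset_of_surjective L.mkQ L.mkQ_surjective
  have hass : (associatedPrimes R (M ⧸ L)).Finite :=
    (WL.assFinite hQ0).subset fun q hq => ass_torsion (hsQ.trans hs) hq
  have hsupp : (Module.support R (M ⧸ L)).Finite := by
    refine (hass.biUnion (t := fun q => PrimeSpectrum.zeroLocus (q : Set R)) ?_).subset ?_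
    · intro q hq
      obtain ⟨q', hq', rfl⟩ := ass_mem_support hq
      exact hfin q' hq'
    · intro p hp
      obtain ⟨q, hq, hqp⟩ := exists_ass_le_of_mem_support hp
      exact Set.mem_biUnion hq hqp
  exact EW.mid L.subtype L.mkQ L.injective_subtype L.mkQ_surjective hex (EW.of_WL _ hL i)
    (EW.of_WL _ (WL.of_support_finite hsupp) i)

theorem EW.key (𝔞 : Ideal R) (J : Ideal R) : ∀ (M : Type u) [AddCommGroup M] [Module R M],
    Module.annihilator R M = J →
    Module.support R M ⊆ PrimeSpectrum.zeroLocus (𝔞 : Set R) → NoChain R M →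
    EW (ModuleCat.of R (R ⧸ 𝔞)) M 0 → EW (ModuleCat.of R (R ⧸ 𝔞)) M 1 →
    ∀ i, EW (ModuleCat.of R (R ⧸ 𝔞)) M i := by
  classical
  induction J using WellFoundedGT.induction with
  | ind J ih =>
  intro M _ _ hJ hs hch h0 h1
  have hT := EW.zero_iff 𝔞 |>.1 h0
  let T : Set (PrimeSpectrum R) := {p | p ∈ Module.support R M ∧
    (PrimeSpectrum.zeroLocus (p.asIdeal : Set R)).Infinite}
  have hTfin : T.Finite := by
    refine Set.Finite.of_finite_image ((WL.assFinite hT).subset ?_)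
      (f := PrimeSpectrum.asIdeal) (fun a _ b _ hab => PrimeSpectrum.ext hab)
    rintro _ ⟨p, hp, rfl⟩
    apply ass_torsion hs
    obtain ⟨q, hq, hqp⟩ := exists_ass_le_of_mem_support hp.1
    obtain ⟨q', hq', rfl⟩ := ass_mem_support hq
    rw [← hch.minimal hp.1 hp.2 q' hq' hqp]
    exact hq
  have hloc : ∀ p : PrimeSpectrum R, ∃ (Q : Finset (Ideal R)) (n : ℕ),
      (∀ q ∈ Q, q.IsPrime ∧ ¬ 𝔞 ≤ q) ∧ (p ∈ T → 
      ∀ x : R, (∀ q ∈ Q, x ∉ q) → ∀ w : M, ∃ s ∉ p.asIdeal, ∃ u v : M, s • w = x • u + v ∧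
        ∀ a ∈ 𝔞 ^ n, a • v = 0) := by
    intro p
    by_cases hp : p ∈ T
    · have : p.asIdeal.IsPrime := p.2
      obtain ⟨Q, n, hQ, h⟩ := local_decomp (M := M) p.asIdeal hp.2
        (WL.of_injective (Submodule.inclusion
          (Submodule.torsionBySet_le_torsionBySet_of_subset (hs hp.1)))
          (Submodule.inclusion_injective _) hT)
        (exists_pow_smul_zero (hch.minimal hp.1 hp.2)) 𝔞
      exact ⟨Q, n, hQ, fun _ => h⟩
    · exact ⟨∅, 0, by simp, fun h => absurd h hp⟩
  choose Q n hQ hdec using hloc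
  let QQ : Finset (Ideal R) := hTfin.toFinset.biUnion Q
  let k : ℕ := hTfin.toFinset.sup n
  obtain ⟨x, hx𝔞, hxQ⟩ : ∃ x ∈ 𝔞, ∀ q ∈ QQ, x ∉ q := by
    by_contra hcon
    push Not at hcon
    have hsub : (𝔞 : Set R) ⊆ ⋃ q ∈ (↑QQ : Set (Ideal R)), (id q : Ideal R) := by
      intro x hx
      obtain ⟨q, hq, hxq⟩ := hcon x hx
      exact Set.mem_biUnion hq hxq
    obtain ⟨q, hq, hle⟩ := (Ideal.subset_union_prime ⊤ ⊤ (by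
      intro q hq _ _
      obtain ⟨p, _, hp⟩ := Finset.mem_biUnion.1 hq
      exact (hQ p q hp).1)).1 hsub
    obtain ⟨p, _, hp⟩ := Finset.mem_biUnion.1 hq
    exact (hQ p q hp).2 hle
  let L : Submodule R M := Submodule.torsionBySet R M ((𝔞 ^ k : Ideal R) : Set R)
  have hL : IsWeaklyLaskerian R L := WL.torsion_pow hT k
  have hB : ∀ (M' : Type u) [AddCommGroup M'] [Module R M'] (π : M →ₗ[R] M'),
      Function.Surjective π → (∀ u, π (x • u) = 0) → EW (ModuleCat.of R (R ⧸ 𝔞)) M' 0 →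
      ∀ i, EW (ModuleCat.of R (R ⧸ 𝔞)) M' i := by
    intro M' _ _ π hπ hπx h0'
    have hsM' := Module.support_subset_of_surjective π hπ
    refine EW.of_quot (hsM'.trans hs) h0' (L.map π) ?_ ?_
    · exact WL.of_surjective (π.submoduleMap L) (π.submoduleMap_surjective L) hL
    · intro q hq
      by_contra hinf
      have hqT : q ∈ T := ⟨hsM' (Module.support_subset_of_surjective (L.map π).mkQ
        (L.map π).mkQ_surjective hq), hinf⟩
      rw [Module.mem_support_iff'] at hq
      obtain ⟨m, hm⟩ := hq
      obtain ⟨m', rfl⟩ := (L.map π).mkQ_surjective m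
      obtain ⟨w, rfl⟩ := hπ m'
      have hqT' : q ∈ hTfin.toFinset := hTfin.mem_toFinset.2 hqT
      obtain ⟨s, hsq, u, v, hw, hv⟩ := hdec q hqT x
        (fun q' hq' => hxQ q' (Finset.mem_biUnion.2 ⟨q, hqT', hq'⟩)) w
      refine hm s hsq ?_
      rw [← map_smul, ← map_smul, hw, map_add, hπx, zero_add, Submodule.mkQ_apply,
        Submodule.Quotient.mk_eq_zero]
      refine ⟨v, ?_, rfl⟩
      exact (Submodule.mem_torsionBySet_iff _ _).2 fun a =>
        hv a (Ideal.pow_le_pow_right (Finset.le_sup hqT') a.2)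
  by_cases hxM : x ∈ Module.annihilator R M
  · exact hB M LinearMap.id Function.surjective_id
      (fun u => Module.mem_annihilator.1 hxM u) h0
  let μ : M →ₗ[R] M := LinearMap.lsmul R M x
  have hμ : ∀ y, μ y = x • y := fun y => rfl
  have hN0 : EW (ModuleCat.of R (R ⧸ 𝔞)) (LinearMap.ker μ) 0 :=
    EW.zero_inj (LinearMap.ker μ).subtype (Submodule.injective_subtype _) h0
  have hI0 : EW (ModuleCat.of R (R ⧸ 𝔞)) (LinearMap.range μ) 0 :=
    EW.zero_inj (LinearMap.range μ).subtype (Submodule.injective_subtype _) h0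
  have hex1 : Function.Exact (LinearMap.ker μ).subtype μ.rangeRestrict := by
    rw [LinearMap.exact_iff]; simp
  have hex2 : Function.Exact (LinearMap.range μ).subtype (LinearMap.range μ).mkQ := by
    rw [LinearMap.exact_iff]; simp
  have hN1 : EW (ModuleCat.of R (R ⧸ 𝔞)) (LinearMap.ker μ) 1 :=
    EW.left _ _ (Submodule.injective_subtype _) μ.surjective_rangeRestrict hex1 hI0 h1
  have hsN := Module.support_subset_of_injective (LinearMap.ker μ).subtype
    (Submodule.injective_subtype _)
  have hlt : Module.annihilator R (LinearMap.ker μ) > J := by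
    rw [← hJ]
    refine lt_of_le_of_ne ((LinearMap.ker μ).subtype.annihilator_le_of_injective
      (Submodule.injective_subtype _)) ?_
    intro heq
    apply hxM
    rw [heq, Module.mem_annihilator]
    intro y
    exact Subtype.ext y.2
  have hN := ih _ hlt (LinearMap.ker μ) rfl (hsN.trans hs) (hch.mono hsN) hN0 hN1
  have hI1 : EW (ModuleCat.of R (R ⧸ 𝔞)) (LinearMap.range μ) 1 :=
    EW.right _ _ (Submodule.injective_subtype _) μ.surjective_rangeRestrict hex1 h1 (hN 2)
  have hC0 : EW (ModuleCat.of R (R ⧸ 𝔞)) (M ⧸ LinearMap.range μ) 0 :=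
    EW.right _ _ (Submodule.injective_subtype _) (Submodule.mkQ_surjective _) hex2 h0 hI1
  have hC := hB (M ⧸ LinearMap.range μ) (LinearMap.range μ).mkQ (Submodule.mkQ_surjective _)
    (fun u => by rw [Submodule.mkQ_apply, Submodule.Quotient.mk_eq_zero]; exact ⟨u, rfl⟩) hC0
  refine EW.melkersson x ?_ hN hC
  intro y
  obtain ⟨r, rfl⟩ := Ideal.Quotient.mk_surjective y
  change Ideal.Quotient.mk 𝔞 (x * r) = 0
  exact Ideal.Quotient.eq_zero_iff_mem.2 (Ideal.mul_mem_right _ _ hx𝔞)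

end PartF

theorem stmt15 [IsNoetherianRing R] (𝔞 : Ideal R) (M N : Type u)
    [AddCommGroup M] [Module R M] [AddCommGroup N] [Module R N]
    (hM : IsWeaklyCofinite R 𝔞 (ModuleCat.of R M)) (hM1 : suppDim R M ≤ 1)
    (hN : IsWeaklyCofinite R 𝔞 (ModuleCat.of R N)) (hN1 : suppDim R N ≤ 1)
    (f : M →ₗ[R] N) :
    (IsWeaklyCofinite R 𝔞 (ModuleCat.of R (LinearMap.ker f)) ∧
        suppDim R (LinearMap.ker f) ≤ 1) ∧
      IsWeaklyCofinite R 𝔞 (ModuleCat.of R (N ⧸ LinearMap.range f)) ∧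
        suppDim R (N ⧸ LinearMap.range f) ≤ 1 := by
  have hM0 : ∀ i, EW (ModuleCat.of R (R ⧸ 𝔞)) M i := fun i => (WL.extModule_iff i _ _).1 (hM.2 i)
  have hN0 : ∀ i, EW (ModuleCat.of R (R ⧸ 𝔞)) N i := fun i => (WL.extModule_iff i _ _).1 (hN.2 i)
  have hMs : Module.support R M ⊆ PrimeSpectrum.zeroLocus (𝔞 : Set R) := hM.1
  have hNs : Module.support R N ⊆ PrimeSpectrum.zeroLocus (𝔞 : Set R) := hN.1
  have hsK := Module.support_subset_of_injective (LinearMap.ker f).subtype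
    (Submodule.injective_subtype _)
  have hsC := Module.support_subset_of_surjective (LinearMap.range f).mkQ
    (Submodule.mkQ_surjective _)
  have hex1 : Function.Exact (LinearMap.ker f).subtype f.rangeRestrict := by
    rw [LinearMap.exact_iff]; simp
  have hex2 : Function.Exact (LinearMap.range f).subtype (LinearMap.range f).mkQ := by
    rw [LinearMap.exact_iff]; simp
  have hK0 : EW (ModuleCat.of R (R ⧸ 𝔞)) (LinearMap.ker f) 0 :=
    EW.zero_inj (LinearMap.ker f).subtype (Submodule.injective_subtype _) (hM0 0)
  have hI0 : EW (ModuleCat.of R (R ⧸ 𝔞)) (LinearMap.range f) 0 :=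
    EW.zero_inj (LinearMap.range f).subtype (Submodule.injective_subtype _) (hN0 0)
  have hK1 : EW (ModuleCat.of R (R ⧸ 𝔞)) (LinearMap.ker f) 1 :=
    EW.left _ _ (Submodule.injective_subtype _) f.surjective_rangeRestrict hex1 hI0 (hM0 1)
  have hK := EW.key 𝔞 _ (LinearMap.ker f) rfl (hsK.trans hMs)
    ((NoChain.of_suppDim hM1).mono hsK) hK0 hK1
  have hI : ∀ i, EW (ModuleCat.of R (R ⧸ 𝔞)) (LinearMap.range f) i := fun i =>
    EW.right _ _ (Submodule.injective_subtype _) f.surjective_rangeRestrict hex1 (hM0 i)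
      (hK (i + 1))
  have hC : ∀ i, EW (ModuleCat.of R (R ⧸ 𝔞)) (N ⧸ LinearMap.range f) i := fun i =>
    EW.right _ _ (Submodule.injective_subtype _) (Submodule.mkQ_surjective _) hex2 (hN0 i)
      (hI (i + 1))
  exact ⟨⟨⟨hsK.trans hMs, fun i => (WL.extModule_iff i _ _).2 (hK i)⟩,
      (suppDim_mono hsK).trans hM1⟩,
    ⟨hsC.trans hNs, fun i => (WL.extModule_iff i _ _).2 (hC i)⟩,
      (suppDim_mono hsC).trans hN1⟩
end
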